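/- arXiv:2407.15183 — 5 statements merged into one kernel-verified Lean document; each statement's English description precedes it below -/
import Mathlib

section
/- Let m, n, s, k be four integers such that 3 ≤ s ≤ n, 3 ≤ k ≤ m, m·s = n·k and n·k ≡ 0 or 3 (mod 4). If k is odd, k ≥ 7·gcd(s,k), and s ∉ {3, 5, 6, 10}, then there exists an integer Heffter array H(m, n; s, k). -/
/-- An integer Heffter array `H(m, n; s, k)`: an `m × n` partially filled array
(empty cells encoded by `0`) with entries in `{±1, …, ±(n·k)}`, such that each row
has exactly `s` filled cells, each column has exactly `k` filled cells, no two
entries agree in absolute value, and every row and column sums to `0`. -/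
def IsIntegerHeffterArray (m n s k : ℕ) (A : Matrix (Fin m) (Fin n) ℤ) : Prop :=
  (∀ i, (Finset.univ.filter (fun j => A i j ≠ 0)).card = s) ∧
  (∀ j, (Finset.univ.filter (fun i => A i j ≠ 0)).card = k) ∧
  (∀ i j, A i j ≠ 0 → 1 ≤ |A i j| ∧ |A i j| ≤ (n : ℤ) * (k : ℤ)) ∧
  (∀ i j i' j', A i j ≠ 0 → A i' j' ≠ 0 → |A i j| = |A i' j'| → (i, j) = (i', j')) ∧
  (∀ i, ∑ j, A i j = 0) ∧
  (∀ j, ∑ i, A i j = 0)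

/-!
Write `d = gcd s k`, `k = d * a`, `s = d * e`, `m = c * a` and `n = c * e`. It suffices to find
`c` full `a × (d * e)` arrays with zero row and column sums that use each of `1, …, n * k` once in
absolute value: cut every array into `d` blocks of `e` columns and arrange the blocks cyclically.
Each of the full arrays is tiled by at most two cores with sides `7` or `9`, by strips of width `4`
continuing the cores, and by `4 × 4` blocks.

The pieces are arrays of linear forms in free base points whose rows and columns vanish
identically, so a piece can be moved to any set of values of the same shape. Apart from one free
interval, these values are an interval following a base point `s` and pairs of intervals displaced
by `s` plus their own length. Putting another piece in front of one raises its base point, hence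
its displacements, by exactly what is needed for the new pairs to fit between the old ones. So the
values of all the pieces together again have this shape, and can be made to fill an initial
interval of the positive integers.
-/

namespace IntegerHeffter

/-- An array whose rows and columns all sum to zero. -/
def IsZeroSum {ι κ M : Type*} [Fintype ι] [Fintype κ] [AddCommMonoid M] (A : Matrix ι κ M) : Prop :=
  (∀ i, ∑ j, A i j = 0) ∧ ∀ j, ∑ i, A i j = 0

/-- The absolute values of the entries of an integer array, counted with multiplicity. -/
def absValues {ι κ : Type*} [Fintype ι] [Fintype κ] (A : Matrix ι κ ℤ) : Multiset ℕ :=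
  ∑ i, ∑ j, {(A i j).natAbs}

section IsZeroSum

variable {ι κ ι' κ' M N : Type*} [Fintype ι] [Fintype κ] [Fintype ι'] [Fintype κ']
  [AddCommMonoid M] [AddCommMonoid N]

instance [DecidableEq M] : DecidablePred (IsZeroSum (ι := ι) (κ := κ) (M := M)) :=
  fun _ => inferInstanceAs (Decidable (_ ∧ _))

lemma IsZeroSum.transpose {A : Matrix ι κ M} (hA : IsZeroSum A) : IsZeroSum A.transpose :=
  hA.symm

lemma IsZeroSum.map {A : Matrix ι κ M} (hA : IsZeroSum A) (f : M →+ N) : IsZeroSum (A.map f) := by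
  constructor <;> intro <;> simp [← map_sum, hA.1, hA.2]

lemma IsZeroSum.submatrix {A : Matrix ι κ M} (hA : IsZeroSum A) (e : ι' ≃ ι) (f : κ' ≃ κ) :
    IsZeroSum (A.submatrix e f) :=
  ⟨fun i => (f.sum_comp (A (e i))).trans (hA.1 _),
    fun j => (e.sum_comp fun i => A i (f j)).trans (hA.2 _)⟩

lemma absValues_transpose (A : Matrix ι κ ℤ) : absValues A.transpose = absValues A :=
  Finset.sum_comm

lemma map_natAbs_eq_sum_absValues {τ : Type*} [Fintype τ] (A : τ → Matrix ι κ ℤ) :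
    (Finset.univ : Finset (τ × ι × κ)).val.map (fun p => (A p.1 p.2.1 p.2.2).natAbs) =
      ∑ t, absValues (A t) := by
  rw [← Multiset.sum_map_singleton (Multiset.map _ _), Multiset.map_map]
  exact (Fintype.sum_prod_type _).trans (Finset.sum_congr rfl fun t _ => Fintype.sum_prod_type _)

end IsZeroSum

/-- The run `{x + 1, …, x + n}` of `n` consecutive integers following `x`. -/
def run (x n : ℕ) : Multiset ℕ := (Multiset.range n).map (x + 1 + ·)

lemma run_zero (x : ℕ) : run x 0 = 0 := rfl

lemma card_run (x n : ℕ) : (run x n).card = n := by simp [run]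

lemma nodup_run (x n : ℕ) : (run x n).Nodup :=
  (Multiset.nodup_range n).map (add_right_injective _)

lemma mem_run {x n v : ℕ} : v ∈ run x n ↔ x < v ∧ v ≤ x + n := by
  simp only [run, Multiset.mem_map, Multiset.mem_range]
  exact ⟨by rintro ⟨i, hi, rfl⟩; omega, fun h => ⟨v - (x + 1), by omega, by omega⟩⟩

lemma run_translate (x y n : ℕ) : run (x + y) n = (run y n).map (x + ·) := by
  simp only [run, Multiset.map_map, Function.comp_def, add_assoc]

lemma run_append {x y m n : ℕ} (h : y = x + m) : run x m + run y n = run x (m + n) := by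
  subst h
  simp only [run, Multiset.range_add, Multiset.map_add, Multiset.map_map, Function.comp_def,
    add_assoc, add_left_comm m 1]

/-- There are `n` zero-sum `a × b` arrays whose entries together have the absolute values `V`,
counted with multiplicity. -/
def ZeroSumFamily (n a b : ℕ) (V : Multiset ℕ) : Prop :=
  ∃ A : Fin n → Matrix (Fin a) (Fin b) ℤ, (∀ t, IsZeroSum (A t)) ∧ ∑ t, absValues (A t) = V

/-- There is an integer Heffter array set `IHS(a, b; c)`: `c` full zero-sum `a × b` arrays whose
entries have the absolute values `1, …, cab`, each exactly once. -/
def HasHeffterSet (a b c : ℕ) : Prop := ZeroSumFamily c a b (run 0 (c * (a * b)))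

namespace ZeroSumFamily

variable {n m a a' b b' : ℕ} {V W : Multiset ℕ}

lemma singleton {A : Matrix (Fin a) (Fin b) ℤ} (hA : IsZeroSum A) :
    ZeroSumFamily 1 a b (absValues A) :=
  ⟨fun _ => A, fun _ => hA, Fin.sum_univ_one _⟩

lemma empty (a b : ℕ) : ZeroSumFamily 0 a b 0 := ⟨Fin.elim0, fun t => t.elim0, Fin.sum_univ_zero _⟩

lemma card_eq (h : ZeroSumFamily n a b V) : V.card = n * (a * b) := by
  obtain ⟨A, -, rfl⟩ := h
  simp [absValues]

lemma hasHeffterSet {N : ℕ} (h : ZeroSumFamily n a b (run 0 N)) : HasHeffterSet a b n := by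
  rw [HasHeffterSet, ← h.card_eq, card_run]
  exact h

lemma transpose (h : ZeroSumFamily n a b V) : ZeroSumFamily n b a V := by
  obtain ⟨A, hA, rfl⟩ := h
  exact ⟨fun t => (A t).transpose, fun t => (hA t).transpose, by simp only [absValues_transpose]⟩

lemma append (h : ZeroSumFamily n a b V) (h' : ZeroSumFamily m a b W) :
    ZeroSumFamily (n + m) a b (V + W) := by
  obtain ⟨A, hA, rfl⟩ := h
  obtain ⟨B, hB, rfl⟩ := h'
  refine ⟨Fin.append A B, Fin.addCases (fun t => ?_) (fun t => ?_), by simp [Fin.sum_univ_add]⟩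
  · simpa using hA t
  · simpa using hB t

lemma hcat (h : ZeroSumFamily n a b V) (h' : ZeroSumFamily n a b' W) :
    ZeroSumFamily n a (b + b') (V + W) := by
  obtain ⟨A, hA, rfl⟩ := h
  obtain ⟨B, hB, rfl⟩ := h'
  refine ⟨fun t i => Fin.append (A t i) (B t i), fun t => ⟨fun i => ?_, ?_⟩, ?_⟩
  · simp [Fin.sum_univ_add, (hA t).1, (hB t).1]
  · exact Fin.addCases (fun j => by simpa using (hA t).2 j) (fun j => by simpa using (hB t).2 j)
  · simp [absValues, Fin.sum_univ_add, Finset.sum_add_distrib]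

lemma vcat (h : ZeroSumFamily n a b V) (h' : ZeroSumFamily n a' b W) :
    ZeroSumFamily n (a + a') b (V + W) :=
  (h.transpose.hcat h'.transpose).transpose

lemma hgroup (t : ℕ) (h : ZeroSumFamily (t * n) a b V) : ZeroSumFamily n a (t * b) V := by
  obtain ⟨A, hA, rfl⟩ := h
  refine ⟨fun r i j => A (finProdFinEquiv ((finProdFinEquiv.symm j).1, r)) i
    (finProdFinEquiv.symm j).2, fun r => ⟨fun i => ?_, fun j => (hA _).2 _⟩, ?_⟩
  · rw [← finProdFinEquiv.sum_comp, Fintype.sum_prod_type]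
    simp [(hA _).1]
  · simp only [absValues, ← finProdFinEquiv.sum_comp, Fintype.sum_prod_type,
      Equiv.symm_apply_apply]
    exact (Finset.sum_congr rfl fun r _ => Finset.sum_comm).trans Finset.sum_comm

lemma vgroup (t : ℕ) (h : ZeroSumFamily (t * n) a b V) : ZeroSumFamily n (t * a) b V :=
  (h.transpose.hgroup t).transpose

lemma exists_injective {N : ℕ} (h : ZeroSumFamily n a b (run 0 N)) :
    ∃ A : Fin n → Matrix (Fin a) (Fin b) ℤ, (∀ t, IsZeroSum (A t)) ∧
      (fun p : Fin n × Fin a × Fin b => (A p.1 p.2.1 p.2.2).natAbs).Injective ∧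
      ∀ t i j, (A t i j).natAbs ∈ Set.Icc 1 N := by
  obtain ⟨A, hA, hV⟩ := h
  rw [← map_natAbs_eq_sum_absValues] at hV
  refine ⟨A, hA, fun p q hpq => ?_, fun t i j => ?_⟩
  · exact Multiset.inj_on_of_nodup_map (hV ▸ nodup_run 0 N) p (Finset.mem_univ p) q
      (Finset.mem_univ q) hpq
  · have : (A t i j).natAbs ∈ run 0 N :=
      hV ▸ Multiset.mem_map_of_mem (fun p : Fin n × Fin a × Fin b => (A p.1 p.2.1 p.2.2).natAbs)
        (Finset.mem_univ (t, i, j))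
    simpa [mem_run, Nat.one_le_iff_ne_zero, Nat.pos_iff_ne_zero] using this

end ZeroSumFamily

/-- Two runs of length `c`, the second displaced from the first by `s + δ`. -/
def pairedRuns (s u δ c : ℕ) : Multiset ℕ := run u c + run (u + s + δ) c

/-- Three runs of length `c`, following `s`, `u` and `u + s + δ`: with positive signs on the first
two and negative signs on the third, an equal number of entries from each run has a signed sum that
depends on neither `s` nor `u`. -/
def tripleRuns (s u δ c : ℕ) : Multiset ℕ := run s c + pairedRuns s u δ c

section Template

/-- The six base points `s`, `u₁`, `u₁ + s + δ`, `u₂`, `u₂ + s + δ`, `w` of templates, as linear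
forms recorded by their coefficients of `s`, `u₁`, `u₂`, `w` and `1`. -/
def baseForm (δ : ℕ) : ℕ → Fin 5 → ℕ
  | 0 => ![1, 0, 0, 0, 0]
  | 1 => ![0, 1, 0, 0, 0]
  | 2 => ![1, 1, 0, 0, δ]
  | 3 => ![0, 0, 1, 0, 0]
  | 4 => ![1, 0, 1, 0, δ]
  | _ => ![0, 0, 0, 1, 0]

/-- The linear form with label `100 t + o`, which is base point `t` plus the offset `o < 100`. -/
def labelForm (δ e : ℕ) : Fin 5 → ℕ := baseForm δ (e / 100) + ![0, 0, 0, 0, e % 100]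

/-- The linear form of a signed label. -/
def signedForm (δ : ℕ) (z : ℤ) : Fin 5 → ℤ := fun i => z.sign * labelForm δ z.natAbs i

/-- The value of a linear form once `s`, `u₁`, `u₂` and `w` are given. -/
def formValue (s u₁ u₂ w : ℕ) (f : Fin 5 → ℕ) : ℕ := ∑ i, f i * ![s, u₁, u₂, w, 1] i

/-- An array of nonzero signed labels with label multiset `E` whose rows and columns sum to zero as
linear forms, hence for every choice of `s`, `u₁`, `u₂` and `w`. -/
def IsTemplate {a b : ℕ} (δ : ℕ) (Z : Matrix (Fin a) (Fin b) ℤ) (E : Multiset ℕ) : Prop :=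
  IsZeroSum (Z.map (signedForm δ)) ∧ absValues Z = E ∧ 0 ∉ E

variable {a b δ : ℕ} {Z : Matrix (Fin a) (Fin b) ℤ} {E : Multiset ℕ}

instance : Decidable (IsTemplate δ Z E) := by unfold IsTemplate; infer_instance

lemma natAbs_linearCombination_signedForm (s u₁ u₂ w δ : ℕ) {z : ℤ} (hz : z ≠ 0) :
    (Fintype.linearCombination ℤ (fun i => (![s, u₁, u₂, w, 1] i : ℤ)) (signedForm δ z)).natAbs =
      formValue s u₁ u₂ w (labelForm δ z.natAbs) := by
  have : Fintype.linearCombination ℤ (fun i => (![s, u₁, u₂, w, 1] i : ℤ)) (signedForm δ z) =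
      z.sign * formValue s u₁ u₂ w (labelForm δ z.natAbs) := by
    simp only [Fintype.linearCombination_apply, signedForm, formValue, smul_eq_mul, mul_assoc,
      Nat.cast_sum, Nat.cast_mul, Finset.mul_sum]
  rw [this, Int.natAbs_mul, Int.natAbs_sign_of_ne_zero hz, one_mul, Int.natAbs_natCast]

lemma IsTemplate.zeroSumFamily (h : IsTemplate δ Z E) (s u₁ u₂ w : ℕ) :
    ZeroSumFamily 1 a b (E.map fun e => formValue s u₁ u₂ w (labelForm δ e)) := by
  obtain ⟨hZ, rfl, h0⟩ := h
  have hne : ∀ i j, Z i j ≠ 0 := by simpa [absValues, Multiset.mem_sum, eq_comm] using h0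
  convert ZeroSumFamily.singleton
    (hZ.map (Fintype.linearCombination ℤ fun i => (![s, u₁, u₂, w, 1] i : ℤ)).toAddMonoidHom)
  simp only [absValues, ← Multiset.coe_mapAddMonoidHom, map_sum]
  simp only [Multiset.coe_mapAddMonoidHom, Multiset.map_singleton, Matrix.map_apply,
    LinearMap.toAddMonoidHom_coe, natAbs_linearCombination_signedForm _ _ _ _ _ (hne _ _)]

/-- The labels of the `n` values that follow base point `t` plus `o`. -/
def labelRun (t : Fin 6) (o n : ℕ) : Multiset ℕ := run (100 * t + o) n

lemma formValue_baseForm (s u₁ u₂ w δ : ℕ) (t : Fin 6) :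
    formValue s u₁ u₂ w (baseForm δ t) = ![s, u₁, u₁ + s + δ, u₂, u₂ + s + δ, w] t := by
  fin_cases t <;> simp [formValue, baseForm, Fin.sum_univ_succ, add_left_comm, add_comm]

lemma formValue_labelForm (s u₁ u₂ w δ t : ℕ) {o : ℕ} (ho : o < 100) :
    formValue s u₁ u₂ w (labelForm δ (100 * t + o)) =
      formValue s u₁ u₂ w (baseForm δ t) + o := by
  rw [labelForm, show (100 * t + o) / 100 = t by omega, show (100 * t + o) % 100 = o by omega]
  simp [formValue, add_mul, Finset.sum_add_distrib, Fin.sum_univ_succ]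

lemma map_formValue_labelRun (s u₁ u₂ w δ : ℕ) (t : Fin 6) {o n : ℕ} (hn : o + n < 100) :
    (labelRun t o n).map (fun e => formValue s u₁ u₂ w (labelForm δ e)) =
      run (![s, u₁, u₁ + s + δ, u₂, u₂ + s + δ, w] t + o) n := by
  rw [← formValue_baseForm, labelRun, run_translate (100 * t), run_translate (formValue _ _ _ _ _),
    Multiset.map_map]
  refine Multiset.map_congr rfl fun v hv => ?_
  rw [mem_run] at hv
  exact formValue_labelForm s u₁ u₂ w δ t (by omega)

/-- The labels of the three runs of length `c` that follow `s`, `u₁` and `u₁ + s + δ`. -/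
def tripleLabels (c : ℕ) : Multiset ℕ := labelRun 0 0 c + labelRun 1 0 c + labelRun 2 0 c

lemma map_formValue_tripleLabels (s u₁ u₂ w δ : ℕ) {c : ℕ} (hc : c < 100) :
    (tripleLabels c).map (fun e => formValue s u₁ u₂ w (labelForm δ e)) = tripleRuns s u₁ δ c := by
  simp [tripleLabels, tripleRuns, pairedRuns, map_formValue_labelRun, hc, add_assoc]

end Template

section Arrays

/-- A template on a single interval of values; it fills what the core and its strips leave over. -/
def block4 : Matrix (Fin 4) (Fin 4) ℤ := !![
  -514, 507, -502, 509;
  511, -508, 501, -504;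
  -503, 513, -515, 505;
  506, -512, 516, -510]

/-- A template for the `4`-wide strips along a side of length `7`. -/
def strip7 : Matrix (Fin 7) (Fin 4) ℤ := !![
  3, -4, -1, 2;
  101, -301, -102, 302;
  -202, 402, 201, -401;
  512, -508, 505, -509;
  -511, 515, -506, 502;
  513, -516, 504, -501;
  -514, 510, -503, 507]

/-- A template for the `4`-wide strips along a side of length `9`. -/
def strip9 : Matrix (Fin 9) (Fin 4) ℤ := !![
  2, -1, -4, 3;
  101, -301, -102, 302;
  -202, 402, 201, -401;
  507, -516, 513, -504;
  -510, 517, -522, 515;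
  511, -521, 518, -508;
  -514, 503, -501, 512;
  509, -505, 519, -523;
  -502, 520, -524, 506]

/-- A gap-`0` template for `7 × 7` cores. -/
def core77 : Matrix (Fin 7) (Fin 7) ℤ := !![
  5, 105, 525, -504, 502, -527, -206;
  -207, 4, 103, 509, -521, 524, -512;
  -505, -204, 3, 107, 518, -522, 503;
  514, -523, -203, 1, 101, 520, -510;
  -528, 517, -513, -202, 6, 104, 516;
  515, -506, 511, -519, -205, 2, 102;
  106, 507, -526, 508, -501, -201, 7]

/-- The first of two interlocking gap-`7` templates for `7 × 7` cores; a single one cannot use an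
interval of values after `w`, since its absolute values would have an odd sum. -/
def twinLeft77 : Matrix (Fin 7) (Fin 7) ℤ := !![
  2, 105, 510, -512, 524, -515, -207;
  -201, 7, 106, 529, -518, 509, -525;
  -506, -204, 1, 103, 504, -517, 526;
  505, -520, -202, 3, 101, 523, -503;
  -516, 527, -519, -206, 6, 107, 508;
  521, -522, 513, -511, -203, 5, 104;
  102, 514, -502, 501, -507, -205, 4]

/-- The companion of `twinLeft77`, which omits the second value after its base point `w`. -/
def twinRight77 : Matrix (Fin 7) (Fin 7) ℤ := !![
  2, 101, 504, -509, 527, -514, -204;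
  -203, 6, 105, 525, -520, 516, -522;
  -510, -207, 1, 102, 513, -515, 523;
  508, -517, -201, 4, 107, 518, -512;
  -524, 526, -507, -205, 3, 103, 511;
  528, -505, 506, -529, -202, 5, 104;
  106, 503, -501, 519, -521, -206, 7]

/-- A gap-`9` template for `7 × 9` cores. -/
def core79 : Matrix (Fin 7) (Fin 9) ℤ := !![
  1, 108, 518, -528, 535, -516, -207, 7, -9;
  -206, 6, 104, 503, -510, 523, -506, 102, -107;
  -533, -204, 5, 105, 507, -509, 532, -203, 209;
  527, -530, -202, 4, 103, 505, -526, 529, -501;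
  -520, 536, -525, -201, 3, 106, 513, -517, 514;
  531, -522, 511, -508, -205, 8, 101, 512, -519;
  109, 515, -502, 534, -524, -208, 2, -521, 504]

/-- The first of two interlocking gap-`0` templates for `7 × 9` cores; see `twinLeft77` for why
there are two. -/
def twinLeft79 : Matrix (Fin 7) (Fin 9) ℤ := !![
  4, 109, 533, -529, 520, -532, -203, 5, -7;
  -209, 3, 104, 505, -512, 531, -525, 106, -103;
  -524, -206, 2, 107, 513, -507, 514, -207, 208;
  508, -519, -201, 9, 102, 502, -517, 526, -510;
  -515, 501, -537, -202, 8, 105, 522, -516, 534;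
  535, -518, 503, -511, -204, 6, 108, 509, -528;
  101, 530, -504, 521, -527, -205, 1, -523, 506]

/-- The companion of `twinLeft79`, which omits the second value after its base point `w`. -/
def twinRight79 : Matrix (Fin 7) (Fin 9) ℤ := !![
  3, 107, 511, -534, 530, -503, -209, 1, -6;
  -203, 2, 104, 515, -525, 516, -512, 106, -103;
  -523, -202, 8, 105, 518, -535, 528, -205, 206;
  509, -505, -204, 4, 102, 520, -537, 517, -506;
  -501, 526, -524, -207, 5, 101, 514, -533, 519;
  507, -532, 513, -510, -201, 9, 109, 536, -531;
  108, 504, -508, 527, -529, -208, 7, -522, 521]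

/-- A gap-`0` template for `9 × 9` cores. -/
def core99 : Matrix (Fin 9) (Fin 9) ℤ := !![
  4, 105, 521, -536, 553, -546, 531, -527, -205;
  -204, 2, 101, 503, -525, 551, -542, 515, -501;
  -514, -208, 9, 109, 507, -549, 544, -537, 539;
  554, -541, -209, 1, 106, 530, -529, 538, -550;
  -508, 528, -552, -202, 8, 102, 510, -504, 518;
  502, -517, 532, -513, -207, 7, 104, 512, -520;
  -547, 548, -534, 545, -526, -203, 5, 103, 509;
  505, -523, 543, -540, 519, -516, -201, 6, 107;
  108, 506, -511, 533, -535, 524, -522, -206, 3]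

/-- The first of two interlocking gap-`9` templates for `9 × 9` cores; see `twinLeft77` for why
there are two. -/
def twinLeft99 : Matrix (Fin 9) (Fin 9) ℤ := !![
  6, 107, 542, -524, 547, -527, 506, -541, -207;
  -206, 5, 101, 512, -513, 520, -507, 532, -535;
  -517, -202, 9, 108, 537, -528, 514, -533, 521;
  515, -553, -204, 3, 104, 529, -501, 550, -534;
  -509, 508, -530, -209, 1, 102, 538, -543, 551;
  526, -522, 516, -511, -203, 4, 103, 536, -540;
  -518, 549, -552, 510, -539, -201, 8, 106, 546;
  503, -502, 531, -505, 523, -545, -208, 7, 105;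
  109, 519, -504, 525, -548, 555, -544, -205, 2]

/-- The companion of `twinLeft99`, which omits the second value after its base point `w`. -/
def twinRight99 : Matrix (Fin 9) (Fin 9) ℤ := !![
  8, 106, 506, -517, 538, -509, 510, -529, -204;
  -206, 4, 107, 530, -546, 535, -513, 548, -550;
  -512, -201, 3, 101, 533, -552, 542, -532, 527;
  503, -504, -202, 2, 109, 537, -515, 528, -549;
  -534, 541, -524, -209, 1, 104, 511, -521, 540;
  544, -522, 551, -555, -205, 5, 102, 508, -519;
  -547, 520, -505, 518, -539, -203, 6, 105, 554;
  545, -536, 516, -514, 525, -531, -208, 9, 103;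
  108, 501, -543, 553, -507, 523, -526, -207, 7]

lemma isTemplate_block4 : IsTemplate 0 block4 (labelRun 5 0 16) := by
  decide +kernel

lemma isTemplate_strip7 :
    IsTemplate 2 strip7 (labelRun 0 0 4 + labelRun 1 0 2 + labelRun 2 0 2 + labelRun 3 0 2 +
      labelRun 4 0 2 + labelRun 5 0 16) := by
  decide +kernel

lemma isTemplate_strip9 :
    IsTemplate 2 strip9 (labelRun 0 0 4 + labelRun 1 0 2 + labelRun 2 0 2 + labelRun 3 0 2 +
      labelRun 4 0 2 + labelRun 5 0 24) := by
  decide +kernel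

lemma isTemplate_core77 :
    IsTemplate 0 core77 (tripleLabels 7 + labelRun 5 0 28) := by
  decide +kernel

lemma isTemplate_twinLeft77 :
    IsTemplate 7 twinLeft77 (tripleLabels 7 + (labelRun 5 0 27 + labelRun 5 28 1)) := by
  decide +kernel

lemma isTemplate_twinRight77 :
    IsTemplate 7 twinRight77 (tripleLabels 7 + (labelRun 5 0 1 + labelRun 5 2 27)) := by
  decide +kernel

lemma isTemplate_core79 :
    IsTemplate 9 core79 (tripleLabels 9 + labelRun 5 0 36) := by
  decide +kernel

lemma isTemplate_twinLeft79 :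
    IsTemplate 0 twinLeft79 (tripleLabels 9 + (labelRun 5 0 35 + labelRun 5 36 1)) := by
  decide +kernel

lemma isTemplate_twinRight79 :
    IsTemplate 0 twinRight79 (tripleLabels 9 + (labelRun 5 0 1 + labelRun 5 2 35)) := by
  decide +kernel

lemma isTemplate_core99 :
    IsTemplate 0 core99 (tripleLabels 9 + labelRun 5 0 54) := by
  decide +kernel

lemma isTemplate_twinLeft99 :
    IsTemplate 9 twinLeft99 (tripleLabels 9 + (labelRun 5 0 53 + labelRun 5 54 1)) := by
  decide +kernel

lemma isTemplate_twinRight99 :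
    IsTemplate 9 twinRight99 (tripleLabels 9 + (labelRun 5 0 1 + labelRun 5 2 53)) := by
  decide +kernel

end Arrays

/-- Gap-`δ` triple runs of length `c` and any run of length `W` form an `a × b` zero-sum array. -/
def HasTripleArray (a b δ c W : ℕ) : Prop :=
  ∀ s u w, ZeroSumFamily 1 a b (tripleRuns s u δ c + run w W)

/-- Two lots of gap-`δ` triple runs of length `c`, together with any run of length `W`, form two
`a × b` zero-sum arrays. -/
def HasTwinArrays (a b δ c W : ℕ) : Prop :=
  ∀ s u s' u' w, ZeroSumFamily 2 a b (tripleRuns s u δ c + tripleRuns s' u' δ c + run w W)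

section TripleArray

variable {a b δ c W : ℕ}

lemma HasTripleArray.of_isTemplate {Z : Matrix (Fin a) (Fin b) ℤ} (hc : c < 100) (hW : W < 100)
    (h : IsTemplate δ Z (tripleLabels c + labelRun 5 0 W)) : HasTripleArray a b δ c W := by
  intro s u w
  simpa [map_formValue_tripleLabels, map_formValue_labelRun, hc, hW] using h.zeroSumFamily s u 0 w

lemma HasTripleArray.hasTwinArrays (h : HasTripleArray a b δ c W) :
    HasTwinArrays a b δ c (W + W) := by
  intro s u s' u' w
  convert (h s u w).append (h s' u' (w + W)) using 1
  rw [← run_append rfl]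
  abel

-- The two templates are placed on `w + 1, …, w + W, w + W + 2` and on
-- `w + W + 1, w + W + 3, …, w + 2 * W + 2`.
lemma HasTwinArrays.of_isTemplate {Z Z' : Matrix (Fin a) (Fin b) ℤ} (hc : c < 100) (hW : W < 98)
    (h : IsTemplate δ Z (tripleLabels c + (labelRun 5 0 W + labelRun 5 (W + 1) 1)))
    (h' : IsTemplate δ Z' (tripleLabels c + (labelRun 5 0 1 + labelRun 5 2 W))) :
    HasTwinArrays a b δ c (2 * W + 2) := by
  intro s u s' u' w
  have hZ : ZeroSumFamily 1 a b (tripleRuns s u δ c + (run w W + run (w + W + 1) 1)) := by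
    simpa (disch := omega) [map_formValue_tripleLabels, map_formValue_labelRun, ← add_assoc] using
      h.zeroSumFamily s u 0 w
  have hZ' : ZeroSumFamily 1 a b
      (tripleRuns s' u' δ c + (run (w + W) 1 + run (w + W + 2) W)) := by
    simpa (disch := omega) [map_formValue_tripleLabels, map_formValue_labelRun, ← add_assoc] using
      h'.zeroSumFamily s' u' 0 (w + W)
  convert hZ.append hZ' using 1
  have hrun : run w (2 * W + 2) =
      run w W + run (w + W) 1 + run (w + W + 1) 1 + run (w + W + 2) W := by
    rw [run_append rfl, run_append (by ring), run_append (by ring)]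
    congr 1
    ring
  rw [hrun]
  abel

end TripleArray

/-- The values of a piece of the construction: the integers following the base points `s` and `w`,
and two sets of paired runs whose displacement exceeds `s` by exactly their own length. -/
def layout (s u₁ u₂ w S c₁ c₂ W : ℕ) : Multiset ℕ :=
  run s S + pairedRuns s u₁ c₁ c₁ + pairedRuns s u₂ c₂ c₂ + run w W

/-- There are `n` zero-sum `a × b` arrays filled by a layout of the given shape, wherever its base
points are placed. -/
def Relocatable (n a b S c₁ c₂ W : ℕ) : Prop :=
  ∀ s u₁ u₂ w, ZeroSumFamily n a b (layout s u₁ u₂ w S c₁ c₂ W)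

section Relocatable

variable {n n' a b S c c₁ c₂ W W' : ℕ}

lemma pairedRuns_add {s s' u δ δ' c c' s₀ d : ℕ} (h : c' + s + δ = s₀ + d)
    (h' : s' + δ' = s₀ + d + c) :
    pairedRuns s (u + c') δ c + pairedRuns s' u δ' c' = pairedRuns s₀ u d (c + c') := by
  simp only [pairedRuns]
  rw [add_comm c c', ← run_append (x := u) rfl, add_comm c' c, ← run_append (x := u + s₀ + d) rfl,
    show u + c' + s + δ = u + s₀ + d by omega, show u + s' + δ' = u + s₀ + d + c by omega]
  abel

-- The pairs of the first layout are nested inside those of the second, whose displacement is larger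
-- by `2c` because its base point is `s + 2c`.
lemma layout_add (s u₁ u₂ w c W S c₁ c₂ W' : ℕ) :
    layout s (u₁ + c₁) (u₂ + c₂) w (2 * c) c c W +
        layout (s + 2 * c) u₁ u₂ (w + W) S c₁ c₂ W' =
      layout s u₁ u₂ w (2 * c + S) (c + c₁) (c + c₂) (W + W') := by
  have h₁ : pairedRuns s (u₁ + c₁) c c + pairedRuns (s + 2 * c) u₁ c₁ c₁ =
      pairedRuns s u₁ (c + c₁) (c + c₁) := pairedRuns_add (by ring) (by ring)
  have h₂ : pairedRuns s (u₂ + c₂) c c + pairedRuns (s + 2 * c) u₂ c₂ c₂ =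
      pairedRuns s u₂ (c + c₂) (c + c₂) := pairedRuns_add (by ring) (by ring)
  simp only [layout, ← h₁, ← h₂, ← run_append (x := s) rfl, ← run_append (x := w) rfl]
  abel

lemma layout_contiguous (S c₁ c₂ W : ℕ) :
    layout 0 S (S + 2 * c₁) (S + 2 * c₁ + 2 * c₂) S c₁ c₂ W =
      run 0 (S + 2 * c₁ + 2 * c₂ + W) := by
  simp only [layout, pairedRuns, ← add_assoc]
  iterate 5 rw [run_append (by ring)]
  congr 1
  ring

namespace Relocatable

lemma transpose (h : Relocatable n a b S c₁ c₂ W) : Relocatable n b a S c₁ c₂ W :=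
  fun s u₁ u₂ w => (h s u₁ u₂ w).transpose

lemma empty (a b : ℕ) : Relocatable 0 a b 0 0 0 0 :=
  fun _ _ _ _ => ZeroSumFamily.empty a b

lemma add (h : Relocatable n a b (2 * c) c c W) (h' : Relocatable n' a b S c₁ c₂ W') :
    Relocatable (n + n') a b (2 * c + S) (c + c₁) (c + c₂) (W + W') :=
  fun s u₁ u₂ w => layout_add s u₁ u₂ w c W S c₁ c₂ W' ▸
    (h s (u₁ + c₁) (u₂ + c₂) w).append (h' (s + 2 * c) u₁ u₂ (w + W))

lemma mul (e : ℕ) (h : Relocatable n a b (2 * c) c c W) :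
    Relocatable (e * n) a b (2 * (e * c)) (e * c) (e * c) (e * W) := by
  induction e with
  | zero => simpa using empty a b
  | succ e ih => convert h.add ih using 1 <;> ring

lemma of_isTemplate {Z : Matrix (Fin a) (Fin b) ℤ} (hW : W < 100) (h : IsTemplate 2 Z
      (labelRun 0 0 4 + labelRun 1 0 2 + labelRun 2 0 2 + labelRun 3 0 2 + labelRun 4 0 2 +
        labelRun 5 0 W)) :
    Relocatable 1 a b 4 2 2 W := by
  intro s u₁ u₂ w
  convert h.zeroSumFamily s u₁ u₂ w using 1
  simp [layout, pairedRuns, map_formValue_labelRun, hW, add_assoc]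

lemma of_hasTripleArray (h : HasTripleArray a b c c W) : Relocatable 1 a b c c 0 W := by
  intro s u₁ u₂ w
  simpa [layout, tripleRuns, pairedRuns, run_zero] using h s u₁ w

lemma of_hasTwinArrays_hasTripleArray (h : HasTwinArrays a b c c W)
    (h' : HasTripleArray a b 0 c W') : Relocatable 3 a b (3 * c) (2 * c) c (W + W') := by
  intro s u₁ u₂ w
  convert (h s (u₁ + c) (s + 2 * c) u₁ w).append (h' (s + c) u₂ (w + W)) using 1
  have hs : run s (3 * c) = run s c + run (s + c) c + run (s + 2 * c) c := by
    iterate 2 rw [run_append (by ring)]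
    congr 1
    ring
  have hu₁ : pairedRuns s u₁ (2 * c) (2 * c) =
      pairedRuns s (u₁ + c) c c + pairedRuns (s + 2 * c) u₁ c c := by
    rw [pairedRuns_add (s₀ := s) (d := 2 * c) (by ring) (by ring), two_mul]
  have hu₂ : pairedRuns s u₂ c c = pairedRuns (s + c) u₂ 0 c := by
    simp only [pairedRuns, add_assoc, add_zero]
  simp only [layout, tripleRuns, hs, hu₁, hu₂, ← run_append (x := w) rfl]
  abel

lemma of_hasTwinArrays_hasTwinArrays (h : HasTwinArrays a b c c W)
    (h' : HasTwinArrays a b 0 c W') :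
    Relocatable 4 a b (2 * (2 * c)) (2 * c) (2 * c) (W + W') := by
  intro s u₁ u₂ w
  convert (h s (u₁ + c) (s + 2 * c) u₁ w).append
    (h' (s + c) (u₂ + c) (s + 3 * c) u₂ (w + W)) using 1
  have hs : run s (2 * (2 * c)) =
      run s c + run (s + c) c + run (s + 2 * c) c + run (s + 3 * c) c := by
    iterate 3 rw [run_append (by ring)]
    congr 1
    ring
  have hu₁ : pairedRuns s u₁ (2 * c) (2 * c) =
      pairedRuns s (u₁ + c) c c + pairedRuns (s + 2 * c) u₁ c c := by
    rw [pairedRuns_add (s₀ := s) (d := 2 * c) (by ring) (by ring), two_mul]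
  have hu₂ : pairedRuns s u₂ (2 * c) (2 * c) =
      pairedRuns (s + c) (u₂ + c) 0 c + pairedRuns (s + 3 * c) u₂ 0 c := by
    rw [pairedRuns_add (s₀ := s) (d := 2 * c) (by ring) (by ring), two_mul]
  simp only [layout, tripleRuns, hs, hu₁, hu₂, ← run_append (x := w) rfl]
  abel

end Relocatable

end Relocatable

/-- A zero-sum `a × 4` array can be filled by some layout in every position, with the proportions
`S = 2 * c₁ = 2 * c₂` that allow other layouts to follow. -/
def HasStrip (a : ℕ) : Prop := ∃ W, Relocatable 1 a 4 4 2 2 W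

/-- Some shape of layout fills `C` zero-sum `a × b` arrays in every position. -/
def HasCores (a b C : ℕ) : Prop := ∃ S c₁ c₂ W, Relocatable C a b S c₁ c₂ W

section Cores

variable {a b c W W' C : ℕ}

lemma HasCores.transpose : HasCores a b C → HasCores b a C
  | ⟨S, c₁, c₂, W, h⟩ => ⟨S, c₁, c₂, W, h.transpose⟩

lemma hasCores_zero (a b : ℕ) : HasCores a b 0 := ⟨0, 0, 0, 0, .empty a b⟩

lemma HasCores.add_four_mul {C' : ℕ} (h : HasCores a b C') (e : ℕ)
    (hc : HasTwinArrays a b c c W) (h₀ : HasTwinArrays a b 0 c W') :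
    HasCores a b (e * 4 + C') := by
  obtain ⟨S, c₁, c₂, W, h⟩ := h
  exact ⟨_, _, _, _, ((Relocatable.of_hasTwinArrays_hasTwinArrays hc h₀).mul e).add h⟩

lemma HasTwinArrays.hasCores (h : HasTwinArrays a b c c W) (h₀ : HasTripleArray a b 0 c W')
    (hC : C % 4 = 0 ∨ C % 4 = 3) : HasCores a b C := by
  have hmod : HasCores a b (C % 4) := by
    rcases hC with hC | hC <;> rw [hC]
    exacts [hasCores_zero a b, ⟨_, _, _, _, .of_hasTwinArrays_hasTripleArray h h₀⟩]
  simpa only [Nat.div_add_mod'] using hmod.add_four_mul (C / 4) h h₀.hasTwinArrays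

lemma HasTripleArray.hasCores (h : HasTripleArray a b c c W) (h₀ : HasTwinArrays a b 0 c W')
    (hC : C % 4 = 0 ∨ C % 4 = 1) : HasCores a b C := by
  have hmod : HasCores a b (C % 4) := by
    rcases hC with hC | hC <;> rw [hC]
    exacts [hasCores_zero a b, ⟨_, _, _, _, .of_hasTripleArray h⟩]
  simpa only [Nat.div_add_mod'] using hmod.add_four_mul (C / 4) h.hasTwinArrays h₀

lemma hasCores_seven_seven (hC : C % 4 = 0 ∨ C % 4 = 3) : HasCores 7 7 C :=
  (HasTwinArrays.of_isTemplate (by norm_num) (by norm_num) isTemplate_twinLeft77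
    isTemplate_twinRight77).hasCores
    (.of_isTemplate (by norm_num) (by norm_num) isTemplate_core77) hC

lemma hasCores_nine_nine (hC : C % 4 = 0 ∨ C % 4 = 3) : HasCores 9 9 C :=
  (HasTwinArrays.of_isTemplate (by norm_num) (by norm_num) isTemplate_twinLeft99
    isTemplate_twinRight99).hasCores
    (.of_isTemplate (by norm_num) (by norm_num) isTemplate_core99) hC

lemma hasCores_seven_nine (hC : C % 4 = 0 ∨ C % 4 = 1) : HasCores 7 9 C :=
  (HasTripleArray.of_isTemplate (by norm_num) (by norm_num) isTemplate_core79).hasCores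
    (.of_isTemplate (by norm_num) (by norm_num) isTemplate_twinLeft79 isTemplate_twinRight79) hC

lemma hasStrip_seven : HasStrip 7 := ⟨16, .of_isTemplate (by norm_num) isTemplate_strip7⟩

lemma hasStrip_nine : HasStrip 9 := ⟨24, .of_isTemplate (by norm_num) isTemplate_strip9⟩

end Cores

lemma zeroSumFamily_four_four (z w : ℕ) : ZeroSumFamily z 4 4 (run w (z * 16)) := by
  induction z with
  | zero => simpa only [zero_mul, run_zero] using ZeroSumFamily.empty 4 4
  | succ z ih =>
    have hblock : ZeroSumFamily 1 4 4 (run (w + z * 16) 16) := by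
      simpa [map_formValue_labelRun] using isTemplate_block4.zeroSumFamily 0 0 0 (w + z * 16)
    simpa only [run_append rfl, Nat.succ_mul] using ih.append hblock

section Tiling

variable {α β C : ℕ}

lemma HasStrip.relocatable (hα : HasStrip α) (y : ℕ) :
    ∃ W, Relocatable y α 4 (2 * (y * 2)) (y * 2) (y * 2) W := by
  obtain ⟨W, h⟩ := hα
  exact ⟨y * W, by simpa only [mul_one] using Relocatable.mul y (c := 2) h⟩

lemma HasStrip.exists_add_eq_layout (hα : HasStrip α) (hβ : HasStrip β) (hC : HasCores α β C)
    (y₁ y₂ : ℕ) : ∃ S c₁ c₂ W, ∀ s u₁ u₂ w, ∃ V₁ V₂ V₃, ZeroSumFamily y₁ α 4 V₁ ∧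
      ZeroSumFamily y₂ 4 β V₂ ∧ ZeroSumFamily C α β V₃ ∧
        V₁ + (V₂ + V₃) = layout s u₁ u₂ w S c₁ c₂ W := by
  obtain ⟨W₁, h₁⟩ := hα.relocatable y₁
  obtain ⟨W₂, h₂⟩ := hβ.relocatable y₂
  obtain ⟨S, c₁, c₂, W, h₃⟩ := hC
  refine ⟨2 * (y₁ * 2) + (2 * (y₂ * 2) + S), y₁ * 2 + (y₂ * 2 + c₁), y₁ * 2 + (y₂ * 2 + c₂),
    W₁ + (W₂ + W), fun s u₁ u₂ w => ⟨_, _, _,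
      h₁ s (u₁ + (y₂ * 2 + c₁)) (u₂ + (y₂ * 2 + c₂)) w,
      h₂.transpose (s + 2 * (y₁ * 2)) (u₁ + c₁) (u₂ + c₂) (w + W₁),
      h₃ (s + 2 * (y₁ * 2) + 2 * (y₂ * 2)) u₁ u₂ (w + W₁ + W₂), ?_⟩⟩
  rw [layout_add, layout_add]

lemma HasStrip.exists_add_eq_run (hα : HasStrip α) (hβ : HasStrip β) (hC : HasCores α β C)
    (y₁ y₂ z : ℕ) : ∃ V₁ V₂ V₃ V₄ N, ZeroSumFamily y₁ α 4 V₁ ∧ ZeroSumFamily y₂ 4 β V₂ ∧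
      ZeroSumFamily C α β V₃ ∧ ZeroSumFamily z 4 4 V₄ ∧ V₁ + (V₂ + V₃) + V₄ = run 0 N := by
  obtain ⟨S, c₁, c₂, W, hlayout⟩ := hα.exists_add_eq_layout hβ hC y₁ y₂
  obtain ⟨V₁, V₂, V₃, h₁, h₂, h₃, hV⟩ := hlayout 0 S (S + 2 * c₁) (S + 2 * c₁ + 2 * c₂)
  rw [layout_contiguous] at hV
  exact ⟨V₁, V₂, V₃, _, _, h₁, h₂, h₃, zeroSumFamily_four_four z _,
    (congrArg (· + _) hV).trans (run_append (zero_add _).symm)⟩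

lemma hasHeffterSet_of_hasStrip {c r : ℕ} (hα : HasStrip α) (hβ : HasStrip β)
    (hC : HasCores α β (r * c)) (t y : ℕ) : HasHeffterSet (α + t * 4) (r * β + y * 4) c := by
  obtain ⟨V₁, V₂, V₃, V₄, N, h₁, h₂, h₃, h₄, hV⟩ :=
    hα.exists_add_eq_run hβ hC (y * c) (t * (r * c)) (t * (y * c))
  have hcores : ZeroSumFamily (r * c) (α + t * 4) β (V₃ + V₂) := h₃.vcat (h₂.vgroup t)
  have hstrips : ZeroSumFamily (y * c) (α + t * 4) 4 (V₁ + V₄) := h₁.vcat (h₄.vgroup t)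
  have hall : ZeroSumFamily c (α + t * 4) (r * β + y * 4) (run 0 N) := by
    convert (hcores.hgroup r).hcat (hstrips.hgroup y) using 1
    rw [← hV]
    abel
  exact hall.hasHeffterSet

theorem hasHeffterSet_of_odd {a b c : ℕ} (ha : Odd a) (ha7 : 7 ≤ a) (hb3 : 3 ≤ b)
    (hb : b ≠ 3 ∧ b ≠ 5 ∧ b ≠ 6 ∧ b ≠ 10)
    (habc : c * (a * b) % 4 = 0 ∨ c * (a * b) % 4 = 3) : HasHeffterSet a b c := by
  have tile : ∀ α β r, HasStrip α → HasStrip β → HasCores α β (r * c) → α ≤ a ∧ a % 4 = α % 4 →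
      r * β ≤ b ∧ b % 4 = r * β % 4 → HasHeffterSet a b c := by
    intro α β r hα hβ hC ha hb
    have := hasHeffterSet_of_hasStrip hα hβ hC ((a - α) / 4) ((b - r * β) / 4)
    rwa [show α + (a - α) / 4 * 4 = a by omega,
      show r * β + (b - r * β) / 4 * 4 = b by omega] at this
  have hab : (c % 4) * ((a % 4) * (b % 4)) % 4 = 0 ∨ (c % 4) * ((a % 4) * (b % 4)) % 4 = 3 := by
    simpa only [Nat.mul_mod, Nat.mod_mod] using habc
  have hb4 : b % 4 = 0 ∨ b % 4 = 1 ∨ b % 4 = 2 ∨ b % 4 = 3 := by omega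
  have ha4 : a % 4 = 3 ∨ a % 4 = 1 := by
    have := Nat.odd_iff.1 ha
    omega
  rcases ha4 with ha4 | ha4 <;> rcases hb4 with hb4 | hb4 | hb4 | hb4 <;>
    simp only [ha4, hb4] at hab
  · exact tile 7 7 0 hasStrip_seven hasStrip_seven (by simpa using hasCores_zero 7 7)
      (by omega) (by omega)
  · exact tile 7 9 1 hasStrip_seven hasStrip_nine (hasCores_seven_nine (by omega))
      (by omega) (by omega)
  · exact tile 7 7 2 hasStrip_seven hasStrip_seven (hasCores_seven_seven (by omega))
      (by omega) (by omega)
  · exact tile 7 7 1 hasStrip_seven hasStrip_seven (hasCores_seven_seven (by omega))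
      (by omega) (by omega)
  · exact tile 9 7 0 hasStrip_nine hasStrip_seven (by simpa using hasCores_zero 9 7)
      (by omega) (by omega)
  · exact tile 9 9 1 hasStrip_nine hasStrip_nine (hasCores_nine_nine (by omega))
      (by omega) (by omega)
  · exact tile 9 7 2 hasStrip_nine hasStrip_seven (hasCores_seven_nine (by omega)).transpose
      (by omega) (by omega)
  · exact tile 9 7 1 hasStrip_nine hasStrip_seven (hasCores_seven_nine (by omega)).transpose
      (by omega) (by omega)

end Tiling

section CyclicArray

variable {G D α β R M : Type*} [AddGroup G] [Zero R]

/-- The block-cyclic arrangement of full arrays `A t`, each cut into blocks of columns indexed by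
`D`: block row `t` carries the block `d` of `A t` in block column `φ d + t`, and is empty
elsewhere. -/
noncomputable def cyclicArray (φ : D ↪ G) (A : G → Matrix α (D × β) R) : Matrix (G × α) (G × β) R :=
  fun p q => Function.extend (Prod.map φ id) (A p.1 p.2) 0 (q.1 - p.1, q.2)

variable (φ : D ↪ G) (A : G → Matrix α (D × β) R)

lemma cyclicArray_apply {t u : G} {d : D} (h : u - t = φ d) (i : α) (j : β) :
    cyclicArray φ A (t, i) (u, j) = A t i (d, j) := by
  simp only [cyclicArray, h]
  exact (φ.injective.prodMap Function.injective_id).extend_apply _ _ (d, j)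

lemma cyclicArray_of_notMem_range {p : G × α} {q : G × β} (h : q.1 - p.1 ∉ Set.range φ) :
    cyclicArray φ A p q = 0 :=
  Function.extend_apply' _ _ _ fun ⟨x, hx⟩ => h ⟨x.1, congrArg Prod.fst hx⟩

variable [Fintype G] [Fintype D] [AddCommMonoid M] {F : R → M}

lemma sum_cyclicArray_row [Fintype β] (hF : F 0 = 0) (p : G × α) :
    ∑ q, F (cyclicArray φ A p q) = ∑ x, F (A p.1 p.2 x) := by
  have hinj : (fun x : D × β => (φ x.1 + p.1, x.2)).Injective :=
    ((add_left_injective p.1).comp φ.injective).prodMap Function.injective_id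
  refine (Fintype.sum_of_injective _ hinj _ _ (fun q hq => ?_) fun x => ?_).symm
  · rw [cyclicArray_of_notMem_range φ A, hF]
    rintro ⟨d, hd⟩
    exact hq ⟨(d, q.2), by simp [hd]⟩
  · exact congrArg F (cyclicArray_apply φ A (add_sub_cancel_right _ _) _ _).symm

lemma sum_cyclicArray_col [Fintype α] (hF : F 0 = 0) (q : G × β) :
    ∑ p, F (cyclicArray φ A p q) = ∑ d, ∑ i, F (A (-φ d + q.1) i (d, q.2)) := by
  have hinj : (fun x : D × α => (-φ x.1 + q.1, x.2)).Injective :=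
    ((add_left_injective q.1).comp (neg_injective.comp φ.injective)).prodMap
      Function.injective_id
  rw [← Fintype.sum_prod_type']
  refine (Fintype.sum_of_injective _ hinj _ _ (fun p hp => ?_) fun x => ?_).symm
  · rw [cyclicArray_of_notMem_range φ A, hF]
    rintro ⟨d, hd⟩
    exact hp ⟨(d, p.2), by simp [hd]⟩
  · exact congrArg F (cyclicArray_apply φ A (by simp [sub_eq_add_neg]) _ _).symm

end CyclicArray

section IntegerCyclicArray

variable {G D α β : Type*} [AddGroup G] (φ : D ↪ G) {A : G → Matrix α (D × β) ℤ}

lemma exists_eq_of_cyclicArray_ne_zero {p : G × α} {q : G × β} (h : cyclicArray φ A p q ≠ 0) :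
    ∃ d, q.1 = φ d + p.1 ∧ cyclicArray φ A p q = A p.1 p.2 (d, q.2) := by
  obtain ⟨d, hd⟩ := not_imp_comm.1 (cyclicArray_of_notMem_range φ A) h
  exact ⟨d, sub_eq_iff_eq_add.1 hd.symm, cyclicArray_apply φ A hd.symm _ _⟩

lemma eq_of_natAbs_cyclicArray_eq
    (hA : (fun x : G × α × D × β => (A x.1 x.2.1 x.2.2).natAbs).Injective)
    {p p' : G × α} {q q' : G × β} (h : cyclicArray φ A p q ≠ 0) (h' : cyclicArray φ A p' q' ≠ 0)
    (habs : (cyclicArray φ A p q).natAbs = (cyclicArray φ A p' q').natAbs) :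
    p = p' ∧ q = q' := by
  obtain ⟨t, i⟩ := p
  obtain ⟨u, j⟩ := q
  obtain ⟨t', i'⟩ := p'
  obtain ⟨u', j'⟩ := q'
  obtain ⟨d, rfl, hd⟩ := exists_eq_of_cyclicArray_ne_zero φ h
  obtain ⟨d', rfl, hd'⟩ := exists_eq_of_cyclicArray_ne_zero φ h'
  rw [hd, hd'] at habs
  have := @hA (t, i, d, j) (t', i', d', j') habs
  simp_all

variable [Fintype G] [Fintype D]

lemma isZeroSum_cyclicArray [Fintype α] [Fintype β] (hA : ∀ t, IsZeroSum (A t)) :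
    IsZeroSum (cyclicArray φ A) :=
  ⟨fun p => (sum_cyclicArray_row φ A (F := id) rfl p).trans ((hA _).1 _),
    fun q => (sum_cyclicArray_col φ A (F := id) rfl q).trans
      (Finset.sum_eq_zero fun _ _ => (hA _).2 _)⟩

lemma card_cyclicArray_row [Fintype β] (hA : ∀ t i x, A t i x ≠ 0) (p : G × α) :
    (Finset.univ.filter fun q => cyclicArray φ A p q ≠ 0).card =
      Fintype.card D * Fintype.card β := by
  rw [Finset.card_filter,
    sum_cyclicArray_row φ A (F := fun z => if z ≠ 0 then 1 else 0) (by simp)]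
  simp [hA]

lemma card_cyclicArray_col [Fintype α] (hA : ∀ t i x, A t i x ≠ 0) (q : G × β) :
    (Finset.univ.filter fun p => cyclicArray φ A p q ≠ 0).card =
      Fintype.card D * Fintype.card α := by
  rw [Finset.card_filter,
    sum_cyclicArray_col φ A (F := fun z => if z ≠ 0 then 1 else 0) (by simp)]
  simp [hA]

end IntegerCyclicArray

lemma isIntegerHeffterArray_submatrix {m n s k : ℕ} {ι κ : Type*} [Fintype ι] [Fintype κ]
    (e : Fin m ≃ ι) (f : Fin n ≃ κ) {B : Matrix ι κ ℤ}
    (hrow : ∀ p, (Finset.univ.filter fun q => B p q ≠ 0).card = s)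
    (hcol : ∀ q, (Finset.univ.filter fun p => B p q ≠ 0).card = k)
    (hmem : ∀ p q, B p q ≠ 0 → (B p q).natAbs ≤ n * k)
    (hinj : ∀ p q p' q', B p q ≠ 0 → B p' q' ≠ 0 → (B p q).natAbs = (B p' q').natAbs →
      p = p' ∧ q = q')
    (hB : IsZeroSum B) : IsIntegerHeffterArray m n s k (B.submatrix e f) := by
  refine ⟨fun i => ?_, fun j => ?_, fun i j h => ⟨Int.one_le_abs h, ?_⟩,
    fun i j i' j' h h' habs => ?_, (hB.submatrix e f).1, (hB.submatrix e f).2⟩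
  · rw [← hrow (e i), Finset.card_filter, Finset.card_filter]
    exact f.sum_comp fun q => if B (e i) q ≠ 0 then 1 else 0
  · rw [← hcol (f j), Finset.card_filter, Finset.card_filter]
    exact e.sum_comp fun p => if B p (f j) ≠ 0 then 1 else 0
  · rw [Int.abs_eq_natAbs]
    exact_mod_cast hmem _ _ h
  · rw [Int.abs_eq_natAbs, Int.abs_eq_natAbs, Nat.cast_inj] at habs
    obtain ⟨hi, hj⟩ := hinj _ _ _ _ h h' habs
    rw [e.injective hi, f.injective hj]

theorem HasHeffterSet.exists_isIntegerHeffterArray {a c d e : ℕ} [NeZero c] (hdc : d ≤ c)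
    (h : HasHeffterSet a (d * e) c) :
    ∃ A : Matrix (Fin (c * a)) (Fin (c * e)) ℤ,
      IsIntegerHeffterArray (c * a) (c * e) (d * e) (d * a) A := by
  obtain ⟨A, hA, hinj, hmem⟩ := h.exists_injective
  have hne : ∀ t i j, A t i j ≠ 0 := fun t i j h0 => by simpa [h0] using (hmem t i j).1
  let A' : Fin c → Matrix (Fin a) (Fin d × Fin e) ℤ := fun t =>
    (A t).submatrix (Equiv.refl _) finProdFinEquiv
  have hinj' : (fun x : Fin c × Fin a × Fin d × Fin e => (A' x.1 x.2.1 x.2.2).natAbs).Injective :=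
    hinj.comp (Function.injective_id.prodMap
      (Function.injective_id.prodMap finProdFinEquiv.injective))
  refine ⟨_, isIntegerHeffterArray_submatrix finProdFinEquiv.symm finProdFinEquiv.symm
    (B := cyclicArray (Fin.castLEEmb hdc) A') (fun p => ?_) (fun q => ?_) (fun p q hpq => ?_)
    (fun _ _ _ _ => eq_of_natAbs_cyclicArray_eq _ hinj')
    (isZeroSum_cyclicArray _ fun t => (hA t).submatrix _ _)⟩
  · simpa using card_cyclicArray_row (Fin.castLEEmb hdc) (A := A') (fun _ _ _ => hne _ _ _) p
  · simpa using card_cyclicArray_col (Fin.castLEEmb hdc) (A := A') (fun _ _ _ => hne _ _ _) q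
  · obtain ⟨x, -, hx⟩ := exists_eq_of_cyclicArray_ne_zero _ hpq
    rw [hx, show c * e * (d * a) = c * (a * (d * e)) by ring]
    exact (hmem _ _ _).2

lemma exists_eq_gcd_mul {m n s k : ℕ} (h : m * s = n * k) (hk : 0 < k) :
    ∃ a c e, k = Nat.gcd s k * a ∧ s = Nat.gcd s k * e ∧ m = c * a ∧ n = c * e := by
  obtain ⟨e, a, hco, he, ha⟩ := Nat.exists_coprime s k
  have hme : m * e = n * a := by
    refine Nat.eq_of_mul_eq_mul_right (Nat.gcd_pos_of_pos_right s hk) ?_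
    rw [mul_assoc, ← he, h, mul_assoc, ← ha]
  obtain ⟨c, rfl⟩ : a ∣ m := hco.symm.dvd_of_dvd_mul_right (hme ▸ dvd_mul_left a n)
  have ha0 : 0 < a := Nat.pos_of_mul_pos_right (ha ▸ hk)
  refine ⟨a, c, e, by rw [mul_comm, ← ha], by rw [mul_comm, ← he], mul_comm _ _, ?_⟩
  refine Nat.eq_of_mul_eq_mul_right ha0 ?_
  rw [← hme]
  ring

end IntegerHeffter

open IntegerHeffter in
theorem exists_integer_heffter_of_odd_k_general
    (m n s k : ℕ)
    (hs3 : 3 ≤ s) (hsn : s ≤ n)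
    (hms : m * s = n * k)
    (hmod : n * k % 4 = 0 ∨ n * k % 4 = 3)
    (hkodd : Odd (k / Nat.gcd s k))
    (hkgcd : 7 * Nat.gcd s k ≤ k)
    (hs : s ≠ 3 ∧ s ≠ 5 ∧ s ≠ 6 ∧ s ≠ 10) :
    ∃ A : Matrix (Fin m) (Fin n) ℤ, IsIntegerHeffterArray m n s k A := by
  have hg : 0 < Nat.gcd s k := Nat.gcd_pos_of_pos_left _ (by omega)
  obtain ⟨a, c, e, hk, hse, rfl, rfl⟩ := exists_eq_gcd_mul hms (by omega)
  have haodd : Odd a := by rwa [Nat.div_eq_of_eq_mul_right hg hk] at hkodd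
  generalize Nat.gcd s k = d at *
  subst hk hse
  have ha7 : 7 ≤ a := Nat.le_of_mul_le_mul_left (mul_comm 7 d ▸ hkgcd) hg
  have hdc : d ≤ c :=
    Nat.le_of_mul_le_mul_right hsn (Nat.pos_of_mul_pos_left (show 0 < d * e by omega))
  have : NeZero c := ⟨by omega⟩
  rw [show c * e * (d * a) = c * (a * (d * e)) by ring] at hmod
  exact (hasHeffterSet_of_odd haodd ha7 hs3 hs hmod).exists_isIntegerHeffterArray hdc

theorem exists_integer_heffter_of_odd_k
    (m n s k : ℕ)
    (hs3 : 3 ≤ s) (hsn : s ≤ n) (hk3 : 3 ≤ k) (hkm : k ≤ m)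
    (hms : m * s = n * k)
    (hmod : n * k % 4 = 0 ∨ n * k % 4 = 3)
    (hkodd : Odd k)
    (hkgcd : 7 * Nat.gcd s k ≤ k)
    (hs : s ≠ 3 ∧ s ≠ 5 ∧ s ≠ 6 ∧ s ≠ 10) :
    ∃ A : Matrix (Fin m) (Fin n) ℤ, IsIntegerHeffterArray m n s k A :=
  exists_integer_heffter_of_odd_k_general m n s k hs3 hsn hms hmod
    (hkodd.of_dvd_nat (Nat.div_dvd_of_dvd (Nat.gcd_dvd_right s k))) hkgcd hs
end

section
/- Let m, n, s, k be four integers such that 3 ≤ s ≤ n, 3 ≤ k ≤ m, m·s = n·k and n·k ≡ 0 or 3 (mod 4). If s and k are coprime, k ≥ 7 is odd, and s ∉ {3, 5, 6, 10}, then there exists an integer Heffter array H(m, n; s, k). -/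
/-!
Cut a `k × s` array into three full rows (and, if `s` is odd, three further columns) and a grid with
an even number of rows and of columns. The rows and columns are filled with triples
`(2i + 1) + (r - i) = (r + 1 + i)`, the grid with units `u, u + 2, u + 4, u + 6`; both kinds of tile
balance whatever `r` and the various `u` are, and longer ones arise from a few small ones by
juxtaposition. Placing `m / k` such arrays along a block diagonal gives `s` entries per row and `k`
per column.

With `T` triples in total, `r` is chosen so that they leave, up to `3T + 4⌊T/4⌋`, exactly the even
numbers up to `8⌊T/4⌋`, which split into `⌊T/4⌋` units. Everything beyond splits into pairs of
interleaved units, so the number of units must have the right parity. The parity is adjusted by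
letting one of the grids contain a run of 12 consecutive numbers, balanced whatever its first
member is; `2a × 2b` grids with `a`, `b` odd also contain a run of 8, since `4ab` cells are an odd
number of units.
-/

namespace Heffter

/-- `A` is a partially filled array with `s` filled cells in each row and `k` in each column, with
zero row and column sums, whose entries have pairwise distinct absolute values in `S`. Empty cells
are encoded by `0`. The set `S` is arbitrary so that arrays on disjoint sets can be glued. -/
structure IsHeffterOn {ι κ : Type*} [Fintype ι] [Fintype κ] (S : Set ℤ) (s k : ℕ)
    (A : Matrix ι κ ℤ) : Prop where
  card_row : ∀ i, Finset.card {j | A i j ≠ 0} = s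
  card_col : ∀ j, Finset.card {i | A i j ≠ 0} = k
  abs_mem : ∀ i j, A i j ≠ 0 → |A i j| ∈ S
  abs_inj : ∀ i j i' j', A i j ≠ 0 → A i' j' ≠ 0 → |A i j| = |A i' j'| → (i, j) = (i', j')
  row_sum : ∀ i, ∑ j, A i j = 0
  col_sum : ∀ j, ∑ i, A i j = 0

lemma card_filter_univ_sum {α β : Type*} [Fintype α] [Fintype β] (p : α ⊕ β → Prop)
    [DecidablePred p] :
    Finset.card {x | p x} = Finset.card {a | p (.inl a)} + Finset.card {b | p (.inr b)} := by
  simp only [Finset.card_filter, Fintype.sum_sum_type]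

namespace IsHeffterOn

variable {ι ι' κ κ' : Type*} [Fintype ι] [Fintype ι'] [Fintype κ] [Fintype κ']
  {S S' : Set ℤ} {s s' k : ℕ}

lemma mono {A : Matrix ι κ ℤ} (hA : IsHeffterOn S s k A) (hS : S ⊆ S') : IsHeffterOn S' s k A :=
  { hA with abs_mem := fun i j h => hS (hA.abs_mem i j h) }

lemma transpose {A : Matrix ι κ ℤ} (hA : IsHeffterOn S s k A) : IsHeffterOn S k s A.transpose where
  card_row := hA.card_col
  card_col := hA.card_row
  abs_mem j i := hA.abs_mem i j
  abs_inj j i j' i' h h' heq := by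
    simpa [and_comm] using hA.abs_inj i j i' j' h h' heq
  row_sum := hA.col_sum
  col_sum := hA.row_sum

lemma reindex {A : Matrix ι κ ℤ} (hA : IsHeffterOn S s k A) (e : ι ≃ ι') (f : κ ≃ κ') :
    IsHeffterOn S s k (A.reindex e f) where
  card_row i := by
    rw [← hA.card_row (e.symm i), Finset.card_filter, Finset.card_filter, ← f.symm.sum_comp]
    rfl
  card_col j := by
    rw [← hA.card_col (f.symm j), Finset.card_filter, Finset.card_filter, ← e.symm.sum_comp]
    rfl
  abs_mem i j := hA.abs_mem (e.symm i) (f.symm j)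
  abs_inj i j i' j' h h' heq := by
    simpa using hA.abs_inj (e.symm i) (f.symm j) (e.symm i') (f.symm j') h h' heq
  row_sum i := (f.symm.sum_comp _).trans (hA.row_sum (e.symm i))
  col_sum j := (e.symm.sum_comp _).trans (hA.col_sum (f.symm j))

lemma abs_ne {A : Matrix ι κ ℤ} {B : Matrix ι' κ' ℤ} {s k s' k' : ℕ}
    (hA : IsHeffterOn S s k A) (hB : IsHeffterOn S' s' k' B)
    (hS : Disjoint S S') {i j i' j'} (hij : A i j ≠ 0) (hij' : B i' j' ≠ 0) :
    |A i j| ≠ |B i' j'| :=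
  hS.ne_of_mem (hA.abs_mem i j hij) (hB.abs_mem i' j' hij')

lemma fromCols {A : Matrix ι κ ℤ} {B : Matrix ι κ' ℤ} (hA : IsHeffterOn S s k A)
    (hB : IsHeffterOn S' s' k B) (hS : Disjoint S S') :
    IsHeffterOn (S ∪ S') (s + s') k (Matrix.fromCols A B) where
  card_row i := (card_filter_univ_sum _).trans (congrArg₂ _ (hA.card_row i) (hB.card_row i))
  card_col := Sum.rec hA.card_col hB.card_col
  abs_mem
    | i, .inl j => fun h => .inl (hA.abs_mem i j h)
    | i, .inr j => fun h => .inr (hB.abs_mem i j h)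
  abs_inj
    | i, .inl j, i', .inl j' => fun h h' heq => by
      simpa using hA.abs_inj i j i' j' h h' heq
    | i, .inl j, i', .inr j' => fun h h' heq => (hA.abs_ne hB hS h h' heq).elim
    | i, .inr j, i', .inl j' => fun h h' heq => (hA.abs_ne hB hS h' h heq.symm).elim
    | i, .inr j, i', .inr j' => fun h h' heq => by
      simpa using hB.abs_inj i j i' j' h h' heq
  row_sum i := by simp [hA.row_sum, hB.row_sum]
  col_sum := Sum.rec hA.col_sum hB.col_sum

lemma fromBlocks_diagonal {A : Matrix ι κ ℤ} {B : Matrix ι' κ' ℤ} (hA : IsHeffterOn S s k A)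
    (hB : IsHeffterOn S' s k B) (hS : Disjoint S S') :
    IsHeffterOn (S ∪ S') s k (Matrix.fromBlocks A 0 0 B) where
  card_row
    | .inl i => (card_filter_univ_sum _).trans ((add_eq_left.2 (by simp)).trans (hA.card_row i))
    | .inr i => (card_filter_univ_sum _).trans
      ((add_eq_right.2 (by simp)).trans (hB.card_row i))
  card_col
    | .inl j => (card_filter_univ_sum _).trans ((add_eq_left.2 (by simp)).trans (hA.card_col j))
    | .inr j => (card_filter_univ_sum _).trans
      ((add_eq_right.2 (by simp)).trans (hB.card_col j))
  abs_mem
    | .inl i, .inl j => fun h => .inl (hA.abs_mem i j h)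
    | .inl _, .inr _ => fun h => (h rfl).elim
    | .inr _, .inl _ => fun h => (h rfl).elim
    | .inr i, .inr j => fun h => .inr (hB.abs_mem i j h)
  abs_inj := by
    rintro (i | i) (j | j) (i' | i') (j' | j') h h' heq <;>
      first | exact (h rfl).elim | exact (h' rfl).elim | skip
    · simpa using hA.abs_inj i j i' j' h h' heq
    · exact (hA.abs_ne hB hS h h' heq).elim
    · exact (hA.abs_ne hB hS h' h heq.symm).elim
    · simpa using hB.abs_inj i j i' j' h h' heq
  row_sum
    | .inl i => by simpa using hA.row_sum i
    | .inr i => by simpa using hB.row_sum i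
  col_sum
    | .inl j => by simpa using hA.col_sum j
    | .inr j => by simpa using hB.col_sum j

end IsHeffterOn

/-- Names of the numbers to be placed: member `a` of the `i`-th triple, member `h` of the `j`-th
unit, or member `n` of the run. -/
inductive Label : Type
  | triple (i : ℕ) (a : Fin 3)
  | unit (j : ℕ) (h : Fin 4)
  | run (n : ℕ)

/-- The number named by a label. The triples are `(2i + 1, r - i, r + 1 + i)`, the `j`-th unit is
`u j, u j + 2, u j + 4, u j + 6`, and the run consists of consecutive numbers starting at `y`. -/
def value (r y : ℤ) (u : ℕ → ℤ) : Label → ℤ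
  | .triple i a => ![2 * (i : ℤ) + 1, r - i, r + 1 + i] a
  | .unit j h => u j + 2 * (h : ℤ)
  | .run n => y + n

/-- Numbers of triples, of units, and of run members. -/
abbrev Stock : Type := ℕ × ℕ × ℕ

/-- The labels of a stock `N` of numbers, after those of a stock `o` have been set aside. -/
def box (o N : Stock) : Set Label :=
  {b | match b with
    | .triple i _ => o.1 ≤ i ∧ i < o.1 + N.1
    | .unit j _ => o.2.1 ≤ j ∧ j < o.2.1 + N.2.1
    | .run n => o.2.2 ≤ n ∧ n < o.2.2 + N.2.2}

lemma box_add (o N N' : Stock) : box o (N + N') = box o N ∪ box (o + N) N' := by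
  ext (⟨i, a⟩ | ⟨j, h⟩ | n) <;>
    simp only [box, Set.mem_union, Set.mem_ofPred_eq, Prod.fst_add, Prod.snd_add] <;>
    omega

lemma disjoint_box (o N N' : Stock) : Disjoint (box o N) (box (o + N) N') := by
  rw [Set.disjoint_left]
  rintro (⟨i, a⟩ | ⟨j, h⟩ | n) h₁ h₂ <;>
    simp only [box, Set.mem_ofPred_eq, Prod.fst_add, Prod.snd_add] at h₁ h₂ <;>
    omega

/-- Every stock `N` of consecutive labels with distinct positive values fills an `m × n` array with
`s` entries per row and `k` per column. Quantifying over the offset `o` allows tiles to be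
combined. -/
def HasTile (v : Label → ℤ) (m n s k : ℕ) (N : Stock) : Prop :=
  ∀ o, Set.InjOn v (box o N) → (∀ b ∈ box o N, 0 < v b) →
    ∃ A : Matrix (Fin m) (Fin n) ℤ, IsHeffterOn (v '' box o N) s k A

/-- A tile with `p` rows and `q` columns and no empty cells. -/
abbrev HasFullTile (v : Label → ℤ) (p q : ℕ) (N : Stock) : Prop := HasTile v p q q p N

namespace HasTile

variable {v : Label → ℤ} {m m' n n' s s' k k' : ℕ} {N N' : Stock}

lemma transpose (h : HasTile v m n s k N) : HasTile v n m k s N := fun o hinj hpos =>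
  let ⟨_, hA⟩ := h o hinj hpos
  ⟨_, hA.transpose⟩

lemma zero : HasTile v 0 0 s k 0 := fun _ _ _ =>
  ⟨0, ⟨nofun, nofun, nofun, nofun, nofun, nofun⟩⟩

lemma exists_disjoint (h : HasTile v m n s k N) (h' : HasTile v m' n' s' k' N') (o : Stock)
    (hinj : Set.InjOn v (box o (N + N'))) (hpos : ∀ b ∈ box o (N + N'), 0 < v b) :
    ∃ S S' : Set ℤ, v '' box o (N + N') = S ∪ S' ∧ Disjoint S S' ∧
      (∃ A : Matrix (Fin m) (Fin n) ℤ, IsHeffterOn S s k A) ∧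
      ∃ B : Matrix (Fin m') (Fin n') ℤ, IsHeffterOn S' s' k' B := by
  rw [box_add] at hinj hpos ⊢
  have hl := Set.subset_union_left (s := box o N) (t := box (o + N) N')
  have hr := Set.subset_union_right (s := box o N) (t := box (o + N) N')
  exact ⟨_, _, Set.image_union .., (disjoint_box o N N').image hinj hl hr,
    h o (hinj.mono hl) fun b hb => hpos b (hl hb),
    h' (o + N) (hinj.mono hr) fun b hb => hpos b (hr hb)⟩

lemma append (h : HasTile v m n s k N) (h' : HasTile v m n' s' k N') :
    HasTile v m (n + n') (s + s') k (N + N') := fun o hinj hpos => by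
  obtain ⟨S, S', heq, hS, ⟨A, hA⟩, B, hB⟩ := h.exists_disjoint h' o hinj hpos
  rw [heq]
  exact ⟨_, (hA.fromCols hB hS).reindex (Equiv.refl _) finSumFinEquiv⟩

lemma stack (h : HasTile v m n s k N) (h' : HasTile v m' n s k' N') :
    HasTile v (m + m') n s (k + k') (N + N') :=
  (h.transpose.append h'.transpose).transpose

lemma diagonal (h : HasTile v m n s k N) (h' : HasTile v m' n' s k N') :
    HasTile v (m + m') (n + n') s k (N + N') := fun o hinj hpos => by
  obtain ⟨S, S', heq, hS, ⟨A, hA⟩, B, hB⟩ := h.exists_disjoint h' o hinj hpos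
  rw [heq]
  exact ⟨_, (hA.fromBlocks_diagonal hB hS).reindex finSumFinEquiv finSumFinEquiv⟩

lemma append_copies (h : HasTile v m n s k N) (h' : HasTile v m n' s' k N') (d : ℕ) :
    HasTile v m (n + d * n') (s + d * s') k (N + d • N') := by
  induction d with
  | zero => simpa using h
  | succ d ih => simpa only [add_mul, one_mul, succ_nsmul, add_assoc] using ih.append h'

lemma diagonal_copies (h : HasTile v m n s k N) (d : ℕ) :
    HasTile v (d * m) (d * n) s k (d • N) := by
  induction d with
  | zero => simpa using zero
  | succ d ih => simpa only [add_mul, one_mul, succ_nsmul] using ih.diagonal h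

end HasTile

/-- The code `±(n + 1)` stands for `±v (label n)`; the shift leaves a sign to the `0`-th label. -/
def codeValue (v : Label → ℤ) (label : ℕ → Label) (c : ℤ) : ℤ :=
  if 0 < c then v (label (c.natAbs - 1)) else -v (label (c.natAbs - 1))

/-- A matrix of signed codes (see `codeValue`) that uses each of the first `p * q` labels exactly
once. -/
def IsTemplate {p q : ℕ} (M : Matrix (Fin p) (Fin q) ℤ) : Prop :=
  (Finset.univ.val.map fun x : Fin p × Fin q => (M x.1 x.2).natAbs) = (Finset.Icc 1 (p * q)).val

instance {p q : ℕ} (M : Matrix (Fin p) (Fin q) ℤ) : Decidable (IsTemplate M) :=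
  inferInstanceAs (Decidable (_ = _))

namespace IsTemplate

variable {p q : ℕ} {M : Matrix (Fin p) (Fin q) ℤ}

lemma natAbs_mem_Icc (hM : IsTemplate M) (i : Fin p) (j : Fin q) :
    (M i j).natAbs ∈ Finset.Icc 1 (p * q) := by
  rw [← Finset.mem_val, ← hM]
  exact Multiset.mem_map_of_mem _ (Finset.mem_univ (i, j))

lemma natAbs_injective (hM : IsTemplate M) :
    Function.Injective fun x : Fin p × Fin q => (M x.1 x.2).natAbs := by
  have hnodup := (Finset.Icc 1 (p * q)).nodup
  rw [← hM] at hnodup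
  exact fun x y h => Multiset.inj_on_of_nodup_map hnodup x (Finset.mem_univ x) y
    (Finset.mem_univ y) h

lemma hasFullTile {v : Label → ℤ} {N : Stock} (hM : IsTemplate M) (label : Stock → ℕ → Label)
    (hlabel : ∀ o, (label o).Injective) (hmem : ∀ o, ∀ n < p * q, label o n ∈ box o N)
    (hrow : ∀ o i, ∑ j, codeValue v (label o) (M i j) = 0)
    (hcol : ∀ o j, ∑ i, codeValue v (label o) (M i j) = 0) : HasFullTile v p q N := by
  intro o hinj hpos
  have hcode : ∀ i j, 1 ≤ (M i j).natAbs ∧ (M i j).natAbs ≤ p * q := fun i j =>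
    Finset.mem_Icc.1 (hM.natAbs_mem_Icc i j)
  have hbox : ∀ i j, label o ((M i j).natAbs - 1) ∈ box o N := fun i j =>
    hmem o _ (by have := hcode i j; omega)
  have habs : ∀ i j, |codeValue v (label o) (M i j)| = v (label o ((M i j).natAbs - 1)) :=
    fun i j => by
      rw [codeValue, apply_ite abs, abs_neg, ite_self, abs_of_pos (hpos _ (hbox i j))]
  have hne : ∀ i j, codeValue v (label o) (M i j) ≠ 0 := fun i j =>
    abs_pos.1 ((habs i j).symm ▸ hpos _ (hbox i j))
  refine ⟨M.map (codeValue v (label o)), by simp [hne], by simp [hne],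
    fun i j _ => ⟨_, hbox i j, (habs i j).symm⟩,
    fun i j i' j' _ _ heq => hM.natAbs_injective ?_, hrow o, hcol o⟩
  simp only [Matrix.map_apply, habs] at heq
  have := hlabel o (hinj (hbox i j) (hbox i' j') heq)
  have := (hcode i j).1
  have := (hcode i' j').1
  change (M i j).natAbs = (M i' j').natAbs
  omega

end IsTemplate

/-- Enumerates the labels of triples, three consecutive ones to each triple. -/
def tripleLabel (o : Stock) (n : ℕ) : Label :=
  .triple (o.1 + n / 3) ⟨n % 3, Nat.mod_lt _ three_pos⟩

lemma tripleLabel_injective (o : Stock) : (tripleLabel o).Injective := by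
  intro n n' h
  simp only [tripleLabel, Label.triple.injEq, Fin.mk.injEq] at h
  omega

lemma tripleLabel_mem_box (o : Stock) {N n : ℕ} (hn : n < 3 * N) :
    tripleLabel o n ∈ box o (N, 0, 0) := by
  simp only [tripleLabel, box, Set.mem_ofPred_eq]
  omega

/-- Enumerates the first `4 * w` labels of the run, followed by the labels of the units. -/
def gridLabel (w : ℕ) (o : Stock) (n : ℕ) : Label :=
  if n < 4 * w then .run (o.2.2 + n)
  else .unit (o.2.1 + (n - 4 * w) / 4) ⟨(n - 4 * w) % 4, Nat.mod_lt _ four_pos⟩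

lemma gridLabel_injective (w : ℕ) (o : Stock) : (gridLabel w o).Injective := by
  intro n n' h
  simp only [gridLabel] at h
  split_ifs at h <;>
    simp only [Label.run.injEq, Label.unit.injEq, Fin.mk.injEq] at h <;> omega

lemma gridLabel_mem_box (w : ℕ) (o : Stock) {N n : ℕ} (hn : n < 4 * (w + N)) :
    gridLabel w o n ∈ box o (0, N, 4 * w) := by
  unfold gridLabel
  split_ifs <;> simp only [box, Set.mem_ofPred_eq] <;> omega

section

variable (r y : ℤ) (u : ℕ → ℤ)

lemma value_tripleLabel (o : Stock) (n : ℕ) :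
    value r y u (tripleLabel o n) =
      if n % 3 = 0 then 2 * ((o.1 : ℤ) + (n / 3 : ℕ)) + 1
      else if n % 3 = 1 then r - (o.1 + (n / 3 : ℕ))
      else r + 1 + (o.1 + (n / 3 : ℕ)) := by
  have hn : n % 3 = 0 ∨ n % 3 = 1 ∨ n % 3 = 2 := by omega
  rcases hn with h | h | h <;> simp [tripleLabel, value, h]

lemma value_gridLabel (w : ℕ) (o : Stock) (n : ℕ) :
    value r y u (gridLabel w o n) =
      if n < 4 * w then y + (o.2.2 + n)
      else u (o.2.1 + (n - 4 * w) / 4) + 2 * ((n - 4 * w) % 4 : ℕ) := by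
  unfold gridLabel
  split_ifs <;> simp [value]

lemma hasFullTile_triple3x4 : HasFullTile (value r y u) 3 4 (4, 0, 0) := by
  refine IsTemplate.hasFullTile (M :=
      !![1, -4, -7, 10;
         2, -5, -8, 11;
         -3, 6, 9, -12])
    (by decide +kernel) tripleLabel tripleLabel_injective
    (fun o n hn => tripleLabel_mem_box o hn) ?_ ?_ <;>
  · intro o i
    fin_cases i <;> simp [Fin.sum_univ_ofNat, codeValue, value_tripleLabel] <;> ring

lemma hasFullTile_triple3x6 : HasFullTile (value r y u) 3 6 (6, 0, 0) := by
  refine IsTemplate.hasFullTile (M :=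
      !![1, -4, -9, 12, 14, -17;
         2, -5, 7, -10, -15, 18;
         -3, 6, 8, -11, 13, -16])
    (by decide +kernel) tripleLabel tripleLabel_injective
    (fun o n hn => tripleLabel_mem_box o hn) ?_ ?_ <;>
  · intro o i
    fin_cases i <;> simp [Fin.sum_univ_ofNat, codeValue, value_tripleLabel] <;> ring

lemma hasFullTile_triple3x7 : HasFullTile (value r y u) 3 7 (7, 0, 0) := by
  refine IsTemplate.hasFullTile (M :=
      !![1, 5, -9, -10, 13, -18, 21;
         2, -6, 7, -11, 14, 16, -19;
         -3, 4, 8, 12, -15, 17, -20])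
    (by decide +kernel) tripleLabel tripleLabel_injective
    (fun o n hn => tripleLabel_mem_box o hn) ?_ ?_ <;>
  · intro o i
    fin_cases i <;> simp [Fin.sum_univ_ofNat, codeValue, value_tripleLabel] <;> ring

lemma hasFullTile_triple3x9 : HasFullTile (value r y u) 3 9 (9, 0, 0) := by
  refine IsTemplate.hasFullTile (M :=
      !![1, 5, -9, -10, 13, -16, 19, -23, 26;
         2, -6, 7, -11, 14, -17, 20, 24, -27;
         -3, 4, 8, 12, -15, 18, -21, -22, 25])
    (by decide +kernel) tripleLabel tripleLabel_injective
    (fun o n hn => tripleLabel_mem_box o hn) ?_ ?_ <;>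
  · intro o i
    fin_cases i <;> simp [Fin.sum_univ_ofNat, codeValue, value_tripleLabel] <;> ring

lemma hasFullTile_grid4x4run0 : HasFullTile (value r y u) 4 4 (0, 4, 0) := by
  refine IsTemplate.hasFullTile (M :=
      !![5, -7, 3, -1;
         -6, 8, -4, 2;
         10, -12, 16, -14;
         -9, 11, -15, 13])
    (by decide +kernel) (gridLabel 0) (gridLabel_injective 0)
    (fun o n hn => gridLabel_mem_box 0 o hn) ?_ ?_ <;>
  · intro o i
    fin_cases i <;> simp [Fin.sum_univ_ofNat, codeValue, value_gridLabel] <;> ring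

lemma hasFullTile_grid6x4run0 : HasFullTile (value r y u) 6 4 (0, 6, 0) := by
  refine IsTemplate.hasFullTile (M :=
      !![6, -8, 3, -1;
         -5, 7, -4, 2;
         10, -12, 19, -17;
         -9, 11, -20, 18;
         22, -21, 15, -16;
         -24, 23, -13, 14])
    (by decide +kernel) (gridLabel 0) (gridLabel_injective 0)
    (fun o n hn => gridLabel_mem_box 0 o hn) ?_ ?_ <;>
  · intro o i
    fin_cases i <;> simp [Fin.sum_univ_ofNat, codeValue, value_gridLabel] <;> ring

lemma hasFullTile_grid4x4run12 : HasFullTile (value r y u) 4 4 (0, 1, 12) := by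
  refine IsTemplate.hasFullTile (M :=
      !![-2, -7, 5, 4;
         1, 12, -3, -10;
         -8, 6, 14, -13;
         9, -11, -15, 16])
    (by decide +kernel) (gridLabel 3) (gridLabel_injective 3)
    (fun o n hn => gridLabel_mem_box 3 o hn) ?_ ?_ <;>
  · intro o i
    fin_cases i <;> simp [Fin.sum_univ_ofNat, codeValue, value_gridLabel] <;> ring

lemma hasFullTile_grid6x4run12 : HasFullTile (value r y u) 6 4 (0, 3, 12) := by
  refine IsTemplate.hasFullTile (M :=
      !![10, -9, 6, -7;
         -12, 11, 3, -2;
         13, -16, 24, -21;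
         -15, 14, -22, 23;
         20, -18, -8, 4;
         -17, 19, -5, 1])
    (by decide +kernel) (gridLabel 3) (gridLabel_injective 3)
    (fun o n hn => gridLabel_mem_box 3 o hn) ?_ ?_ <;>
  · intro o i
    fin_cases i <;> simp [Fin.sum_univ_ofNat, codeValue, value_gridLabel] <;> ring

lemma hasFullTile_grid6x6run8 : HasFullTile (value r y u) 6 6 (0, 7, 8) := by
  refine IsTemplate.hasFullTile (M :=
      !![10, -12, 14, -15, 20, -17;
         -9, 11, -16, 13, -18, 19;
         -8, 6, 30, -31, 35, -33;
         -4, 2, -29, 32, -36, 34;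
         3, -5, 28, -25, 22, -24;
         7, -1, -27, 26, -23, 21])
    (by decide +kernel) (gridLabel 2) (gridLabel_injective 2)
    (fun o n hn => gridLabel_mem_box 2 o hn) ?_ ?_ <;>
  · intro o i
    fin_cases i <;> simp [Fin.sum_univ_ofNat, codeValue, value_gridLabel] <;> ring

lemma hasFullTile_grid6x6run12 : HasFullTile (value r y u) 6 6 (0, 6, 12) := by
  refine IsTemplate.hasFullTile (M :=
      !![10, -7, 2, -11, 28, -25;
         1, -8, -4, 9, -26, 27;
         15, -14, 22, -21, 34, -36;
         -13, 16, -24, 23, -35, 33;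
         -12, 6, 32, -31, 19, -17;
         -3, 5, -29, 30, -20, 18])
    (by decide +kernel) (gridLabel 3) (gridLabel_injective 3)
    (fun o n hn => gridLabel_mem_box 3 o hn) ?_ ?_ <;>
  · intro o i
    fin_cases i <;> simp [Fin.sum_univ_ofNat, codeValue, value_gridLabel] <;> ring

lemma hasFullTile_triples {s : ℕ} (hs : 4 ≤ s) (hs5 : s ≠ 5) :
    HasFullTile (value r y u) 3 s (s, 0, 0) := by
  obtain ⟨q, hq⟩ : ∃ q, s = 4 + q * 4 ∨ s = 6 + q * 4 ∨ s = 7 + q * 4 ∨ s = 9 + q * 4 := by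
    by_cases h : s % 4 = 1
    exacts [⟨s / 4 - 2, by omega⟩, ⟨s / 4 - 1, by omega⟩]
  have copies := hasFullTile_triple3x4 r y u
  rcases hq with rfl | rfl | rfl | rfl
  · simpa using copies.append_copies copies q
  · simpa using (hasFullTile_triple3x6 r y u).append_copies copies q
  · simpa using (hasFullTile_triple3x7 r y u).append_copies copies q
  · simpa using (hasFullTile_triple3x9 r y u).append_copies copies q

end

/-- The `2a × 2b` array can be filled with units and a run of `4 * w` numbers, whatever their
values. -/
def HasGrid (a b w : ℕ) : Prop :=
  ∃ N, N + w = a * b ∧ ∀ r y u, HasFullTile (value r y u) (2 * a) (2 * b) (0, N, 4 * w)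

namespace HasGrid

variable {a b b' w w' : ℕ}

lemma symm (h : HasGrid a b w) : HasGrid b a w :=
  let ⟨N, hN, hgrid⟩ := h
  ⟨N, hN.trans (mul_comm a b), fun r y u => (hgrid r y u).transpose⟩

lemma append (h : HasGrid a b w) (h' : HasGrid a b' w') : HasGrid a (b + b') (w + w') := by
  obtain ⟨N, hN, hgrid⟩ := h
  obtain ⟨N', hN', hgrid'⟩ := h'
  refine ⟨N + N', by rw [mul_add]; omega, fun r y u => ?_⟩
  simpa [mul_add] using (hgrid r y u).append (hgrid' r y u)

lemma two_right_zero : ∀ {a : ℕ}, 2 ≤ a → HasGrid a 2 0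
  | 2, _ => ⟨4, rfl, hasFullTile_grid4x4run0⟩
  | 3, _ => ⟨6, rfl, hasFullTile_grid6x4run0⟩
  | a + 4, _ =>
    ((two_right_zero (a := a + 2) (by omega)).symm.append (two_right_zero le_rfl)).symm

lemma of_mod_two_right (ha : 2 ≤ a) : ∀ {b : ℕ}, 2 ≤ b → HasGrid a (2 + b % 2) w → HasGrid a b w
  | 2, _, h => h
  | 3, _, h => h
  | b + 4, _, h => (of_mod_two_right ha (b := b + 2) (by omega) (by
      rwa [show (b + 2) % 2 = (b + 4) % 2 by omega])).append (two_right_zero ha)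

lemma of_mod_two (ha : 2 ≤ a) (hb : 2 ≤ b) (h : HasGrid (2 + a % 2) (2 + b % 2) w) :
    HasGrid a b w :=
  of_mod_two_right ha hb (of_mod_two_right (by omega) ha h.symm).symm

lemma zero_or_two (ha : 2 ≤ a) (hb : 2 ≤ b) : HasGrid a b 0 ∨ HasGrid a b 2 := by
  have grid2x3 : HasGrid 2 3 0 := (two_right_zero (by decide)).symm
  obtain ⟨ha', hb'⟩ | ⟨ha', hb'⟩ | hb' :
      a % 2 = 1 ∧ b % 2 = 1 ∨ a % 2 = 0 ∧ b % 2 = 1 ∨ b % 2 = 0 := by omega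
  · exact .inr (of_mod_two ha hb (by rw [ha', hb']; exact ⟨7, rfl, hasFullTile_grid6x6run8⟩))
  · exact .inl (of_mod_two ha hb (by rwa [ha', hb']))
  · exact .inl (of_mod_two ha hb (by rw [hb']; exact two_right_zero (by omega)))

lemma three (ha : 2 ≤ a) (hb : 2 ≤ b) : HasGrid a b 3 := by
  have grid3x2 : HasGrid 3 2 3 := ⟨3, rfl, hasFullTile_grid6x4run12⟩
  refine of_mod_two ha hb ?_
  rcases Nat.mod_two_eq_zero_or_one a with ha' | ha' <;>
    rcases Nat.mod_two_eq_zero_or_one b with hb' | hb' <;> rw [ha', hb']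
  · exact ⟨1, rfl, hasFullTile_grid4x4run12⟩
  · exact grid3x2.symm
  · exact grid3x2
  · exact ⟨6, rfl, hasFullTile_grid6x6run12⟩

end HasGrid

/-- `t` triples complete every full `2a × 2b` array to a full `k × s` array; the equation counts
cells. -/
def IsFrame (k s a b t : ℕ) : Prop :=
  3 * t + 4 * (a * b) = s * k ∧ ∀ r y u N, HasFullTile (value r y u) (2 * a) (2 * b) N →
    HasFullTile (value r y u) k s ((t, 0, 0) + N)

lemma isFrame_of_even {a b : ℕ} (hb : 2 ≤ b) : IsFrame (3 + 2 * a) (2 * b) a b (2 * b) :=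
  ⟨by ring, fun r y u _ h => (hasFullTile_triples r y u (by omega) (by omega)).stack h⟩

lemma isFrame_of_odd {a b : ℕ} (ha : 2 ≤ a) (hb : 2 ≤ b) :
    IsFrame (3 + 2 * a) (3 + 2 * b) a b (3 + 2 * b + 2 * a) := by
  refine ⟨by ring, fun r y u N h => ?_⟩
  have top := hasFullTile_triples r y u (s := 3 + 2 * b) (by omega) (by omega)
  have left := (hasFullTile_triples r y u (s := 2 * a) (by omega) (by omega)).transpose
  simpa [← add_assoc] using top.stack (left.append h)

lemma exists_isFrame {s k : ℕ} (hs4 : 4 ≤ s) (hs5 : s ≠ 5) (hk : Odd k) (hk7 : 7 ≤ k) :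
    ∃ a b t, 2 ≤ a ∧ 2 ≤ b ∧ IsFrame k s a b t ∧
      (t + 9 ≤ 4 * (a * b) ∨ s = 7 ∧ k = 7 ∧ a = 2 ∧ b = 2) := by
  obtain ⟨a, rfl, ha⟩ : ∃ a, k = 3 + 2 * a ∧ 2 ≤ a := by
    obtain ⟨a, rfl⟩ := hk
    exact ⟨a - 1, by omega, by omega⟩
  by_cases hs : Even s
  · obtain ⟨b, rfl⟩ := hs.two_dvd
    exact ⟨a, b, 2 * b, ha, by omega, isFrame_of_even (by omega), .inl (by nlinarith)⟩
  · obtain ⟨b, rfl, hb⟩ : ∃ b, s = 3 + 2 * b ∧ 2 ≤ b := by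
      obtain ⟨b, rfl⟩ := Nat.not_even_iff_odd.1 hs
      exact ⟨b - 1, by omega, by omega⟩
    refine ⟨a, b, _, ha, hb, isFrame_of_odd ha hb, ?_⟩
    by_cases hab : a = 2 ∧ b = 2
    · exact .inr (by omega)
    · exact .inl (by rcases (by omega : 3 ≤ a ∨ 3 ≤ b) with h | h <;> nlinarith)

lemma exists_isFrame_hasGrid {s k d : ℕ} (hs4 : 4 ≤ s) (hs5 : s ≠ 5) (hk : Odd k) (hk7 : 7 ≤ k)
    (hd : s = 7 → k = 7 → 1 ≤ d) :
    ∃ a b t w, 2 ≤ a ∧ 2 ≤ b ∧ IsFrame k s a b t ∧ HasGrid a b w ∧ (w = 0 ∨ w = 2) ∧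
      (d + 1) * t + 4 * (d * w) + 9 ≤ 4 * ((d + 1) * (a * b)) := by
  obtain ⟨a, b, t, ha, hb, hframe, ht | ⟨rfl, rfl, rfl, rfl⟩⟩ := exists_isFrame hs4 hs5 hk hk7
  · rcases HasGrid.zero_or_two ha hb with hgrid | hgrid
    · exact ⟨a, b, t, 0, ha, hb, hframe, hgrid, .inl rfl, by nlinarith⟩
    · exact ⟨a, b, t, 2, ha, hb, hframe, hgrid, .inr rfl, by nlinarith⟩
  · obtain rfl : t = 11 := by have := hframe.1; omega
    exact ⟨2, 2, 11, 0, ha, hb, hframe, .two_right_zero le_rfl, .inl rfl, by omega⟩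

/-- Smallest members of the units in `standardValue`. The first `t / 4` units are made of the even
numbers below the triples; the others lie beyond the run, in interleaved pairs
`x, x + 2, x + 4, x + 6` and `x + 1, x + 3, x + 5, x + 7`. -/
def unitStart (t C j : ℕ) : ℕ :=
  if j < t / 4 then 2 + 8 * j
  else 3 * t + 4 * (t / 4) + 1 + C + 8 * ((j - t / 4) / 2) + (j - t / 4) % 2

/-- The assignment of the numbers `1, 2, …` to `t` triples, to a run of length `C`, and to the
units. -/
def standardValue (t C : ℕ) : Label → ℤ :=
  value (2 * t + 4 * (t / 4) : ℕ) (3 * t + 4 * (t / 4) + 1 : ℕ) fun j => unitStart t C j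

section

variable {t : ℕ} (C i j n : ℕ) (a : Fin 3) (h : Fin 4)

lemma standardValue_triple :
    a = 0 ∧ standardValue t C (.triple i a) = 2 * i + 1 ∨
    a = 1 ∧ standardValue t C (.triple i a) = 2 * t + 4 * (t / 4) - i ∨
    a = 2 ∧ standardValue t C (.triple i a) = 2 * t + 4 * (t / 4) + 1 + i := by
  fin_cases a <;> simp [standardValue, value]

lemma standardValue_unit :
    j < t / 4 ∧ standardValue t C (.unit j h) = 2 + 8 * j + 2 * h ∨
    t / 4 ≤ j ∧ standardValue t C (.unit j h) = 3 * t + 4 * (t / 4) + 1 + C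
      + 8 * ((j - t / 4) / 2 : ℕ) + ((j - t / 4) % 2 : ℕ) + 2 * h := by
  rcases lt_or_ge j (t / 4) with hj | hj <;>
    simp [standardValue, value, unitStart, hj, hj.not_gt]

lemma standardValue_run : standardValue t C (.run n) = 3 * t + 4 * (t / 4) + 1 + n := by
  simp [standardValue, value]

lemma injOn_standardValue (ht : t % 4 ≤ 1) (U : ℕ) :
    Set.InjOn (standardValue t C) (box 0 (t, U, C)) := by
  intro b hb b' hb' heq
  have htriple := standardValue_triple (t := t) C
  have hunit := standardValue_unit (t := t) C
  have hrun := standardValue_run (t := t) C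
  obtain ⟨i, a⟩ | ⟨j, h⟩ | n := b <;> obtain ⟨i', a'⟩ | ⟨j', h'⟩ | n' := b' <;>
    simp only [box, Set.mem_ofPred_eq, Prod.fst_zero, Prod.snd_zero, zero_add, Label.triple.injEq,
      Label.unit.injEq, Label.run.injEq, reduceCtorEq] at hb hb' ⊢
  · have := htriple i a; have := htriple i' a'; omega
  · have := htriple i a; have := hunit j' h'; omega
  · grind
  · grind
  · have := hunit j h; have := hunit j' h'; omega
  · grind
  · grind
  · grind
  · grind

lemma standardValue_mem_Icc {g : ℕ} (ht : t % 4 ≤ 1) {b : Label}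
    (hb : b ∈ box 0 (t, t / 4 + 2 * g, C)) :
    standardValue t C b ∈ Set.Icc (1 : ℤ) (3 * t + 4 * (t / 4 + 2 * g) + C : ℕ) := by
  rw [Set.mem_Icc]
  obtain ⟨i, a⟩ | ⟨j, h⟩ | n := b <;>
    simp only [box, Set.mem_ofPred_eq, Prod.fst_zero, Prod.snd_zero, zero_add] at hb
  · have := standardValue_triple (t := t) C i a
    omega
  · have := standardValue_unit (t := t) C j h
    omega
  · have := standardValue_run (t := t) C n
    omega

end

lemma exists_isHeffterOn_Icc {m n s k t g C : ℕ} (ht : t % 4 ≤ 1)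
    (h : ∀ r y u, HasTile (value r y u) m n s k (t, t / 4 + 2 * g, C)) :
    ∃ A : Matrix (Fin m) (Fin n) ℤ,
      IsHeffterOn (Set.Icc 1 (3 * t + 4 * (t / 4 + 2 * g) + C : ℕ)) s k A := by
  have hIcc := fun b hb => standardValue_mem_Icc (g := g) C ht (b := b) hb
  obtain ⟨A, hA⟩ := h _ _ _ 0 (injOn_standardValue C ht _) fun b hb => (hIcc b hb).1
  exact ⟨A, hA.mono (Set.image_subset_iff.2 hIcc)⟩

lemma exists_isHeffterOn_copies {s k a b t w d : ℕ} (ha : 2 ≤ a) (hb : 2 ≤ b)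
    (hframe : IsFrame k s a b t) (hgrid : HasGrid a b w) (hw : w = 0 ∨ w = 2)
    (hbound : (d + 1) * t + 4 * (d * w) + 9 ≤ 4 * ((d + 1) * (a * b)))
    (hmod : (d + 1) * s * k % 4 = 0 ∨ (d + 1) * s * k % 4 = 3) :
    ∃ A : Matrix (Fin ((d + 1) * k)) (Fin ((d + 1) * s)) ℤ,
      IsHeffterOn (Set.Icc 1 ((d + 1) * s * k : ℕ)) s k A := by
  obtain ⟨hcells, hframe⟩ := hframe
  obtain ⟨N, hN, hgrid⟩ := hgrid
  obtain ⟨N', hN', hgrid'⟩ := HasGrid.three ha hb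
  have tile := fun r y u => hframe r y u _ (hgrid r y u)
  have tile' := fun r y u => hframe r y u _ (hgrid' r y u)
  have hcells : 3 * ((d + 1) * t) + 4 * ((d + 1) * (a * b)) = (d + 1) * s * k := by
    rw [mul_assoc, ← hcells]
    ring
  have ht : (d + 1) * t % 4 ≤ 1 := by omega
  have hdN : d * N + d * w = d * (a * b) := by rw [← hN]; ring
  have hab : (d + 1) * (a * b) = d * (a * b) + a * b := by ring
  obtain ⟨U, C, g, rfl, hUC, htile⟩ : ∃ U C g, U = (d + 1) * t / 4 + 2 * g ∧
      4 * U + C = 4 * ((d + 1) * (a * b)) ∧ ∀ r y u,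
      HasTile (value r y u) ((d + 1) * k) ((d + 1) * s) s k ((d + 1) * t, U, C) := by
    by_cases hparity : (d * N + N) % 2 = (d + 1) * t / 4 % 2
    · refine ⟨d * N + N, d * (4 * w) + 4 * w, (d * N + N - (d + 1) * t / 4) / 2, by omega,
        by rw [mul_left_comm]; omega, fun r y u => ?_⟩
      simpa [add_one_mul] using (tile r y u).diagonal_copies (d + 1)
    · refine ⟨d * N + N', d * (4 * w) + 12, (d * N + N' - (d + 1) * t / 4) / 2, by omega,
        by rw [mul_left_comm]; omega, fun r y u => ?_⟩
      simpa [add_one_mul] using ((tile r y u).diagonal_copies d).diagonal (tile' r y u)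
  obtain ⟨A, hA⟩ := exists_isHeffterOn_Icc ht htile
  exact ⟨A, hA.mono (Set.Icc_subset_Icc_right (by omega))⟩

lemma IsHeffterOn.isIntegerHeffterArray {m n s k : ℕ} {A : Matrix (Fin m) (Fin n) ℤ}
    (hA : IsHeffterOn (Set.Icc 1 (n * k : ℕ)) s k A) : IsIntegerHeffterArray m n s k A :=
  ⟨hA.card_row, hA.card_col, by simpa using hA.abs_mem, hA.abs_inj, hA.row_sum, hA.col_sum⟩

end Heffter

open Heffter in
theorem exists_integer_heffter_of_coprime_general {m n s k : ℕ} (hkm : k ∣ m)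
    (hms : m * s = n * k) (hmod : n * k % 4 = 0 ∨ n * k % 4 = 3) (hkodd : Odd k) (hk7 : 7 ≤ k)
    (hs4 : 4 ≤ s) (hs5 : s ≠ 5) :
    ∃ A : Matrix (Fin m) (Fin n) ℤ, IsIntegerHeffterArray m n s k A := by
  obtain ⟨c, rfl⟩ := exists_eq_mul_left_of_dvd hkm
  obtain rfl : n = c * s :=
    Nat.eq_of_mul_eq_mul_right (by omega : 0 < k) (by rw [← hms, mul_right_comm])
  obtain _ | d := c
  · exact ⟨0, by simp [IsIntegerHeffterArray]⟩
  obtain ⟨a, b, t, w, ha, hb, hframe, hgrid, hw, hbound⟩ :=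
    exists_isFrame_hasGrid (d := d) hs4 hs5 hkodd hk7 (by rintro rfl rfl; omega)
  obtain ⟨A, hA⟩ := exists_isHeffterOn_copies ha hb hframe hgrid hw hbound hmod
  exact ⟨A, hA.isIntegerHeffterArray⟩

theorem exists_integer_heffter_of_coprime
    (m n s k : ℕ)
    (hs3 : 3 ≤ s) (hsn : s ≤ n) (hk3 : 3 ≤ k) (hkm : k ≤ m)
    (hms : m * s = n * k)
    (hmod : n * k % 4 = 0 ∨ n * k % 4 = 3)
    (hkodd : Odd k)
    (hcop : Nat.Coprime s k) (hk7 : 7 ≤ k)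
    (hs : s ≠ 3 ∧ s ≠ 5 ∧ s ≠ 6 ∧ s ≠ 10) :
    ∃ A : Matrix (Fin m) (Fin n) ℤ, IsIntegerHeffterArray m n s k A :=
  exists_integer_heffter_of_coprime_general
    (hcop.symm.dvd_of_dvd_mul_right (hms ▸ dvd_mul_left k n)) hms hmod hkodd hk7 (by omega) hs.2.1
end

section
/- Let m, n, c be positive integers such that m·n·c ≡ 0 or 3 (mod 4), and suppose that m ≥ 7 and n ≥ 7 are both odd. Then there exists an integer Heffter array set IHS(m, n; c). -/
/-- An integer Heffter array set `IHS(m, n; c)`: a family of `c` totally filled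
`m × n` integer arrays such that the absolute values of all `c·m·n` entries are
pairwise distinct and their set is exactly `{1, …, m·n·c}`, and every row and
column of each array sums to `0`. -/
def IsIHS (m n c : ℕ) (A : Fin c → Matrix (Fin m) (Fin n) ℤ) : Prop :=
  Function.Injective (fun p : Fin c × Fin m × Fin n => |A p.1 p.2.1 p.2.2|) ∧
  (∀ x : ℤ, (1 ≤ x ∧ x ≤ (m : ℤ) * n * c) ↔ ∃ l i j, |A l i j| = x) ∧
  (∀ l i, ∑ j, A l i j = 0) ∧
  (∀ l j, ∑ i, A l i j = 0)

/-!
Write `m = 2r + 3` and `n = 2s + 3`. Every array gets a border, consisting of a top strip of height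
`3` and a left strip of width `3`, around an inner `2r × 2s` block. With `N = c (2r + 2s + 3)` and
`q = c r s`, the borders use the triples `2i + 1`, `V - i`, `V + 1 + i` with `i < N` and
`V = 2N + 4q`; the first two terms of a triple add up to the third, so a triple with signs is a
zero-sum line, and the work lies in the lines across.

The even numbers up to `2N` and the interval `(2N, N + 4q]` remain for the inner blocks. Separating
the two parities in an interval of `8g` integers leaves progressions of step `2` whose lengths are
multiples of `4`. The congruence condition on `m n c` makes this possible for all the remaining
numbers, except that a parity obstruction may force us to keep the twelve largest ones as an
interval. Blocks of sizes `4 × 4`, `4 × 6` and `6 × 6` then tile the inner part.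

All zero-sum conditions are linear, so finitely many tables whose entries are linear forms in the
starting points and steps of the progressions suffice. These tables were found by computer search.
-/

theorem isIHS_of_cover {m n c : ℕ} {A : Fin c → Matrix (Fin m) (Fin n) ℤ}
    (hrow : ∀ l i, ∑ j, A l i j = 0) (hcol : ∀ l j, ∑ i, A l i j = 0)
    (hcover : ∀ x : ℤ, 1 ≤ x → x ≤ m * n * c → ∃ l i j, |A l i j| = x) : IsIHS m n c A := by
  let f : Fin c × Fin m × Fin n → ℤ := fun p => |A p.1 p.2.1 p.2.2|
  have hcard : (Finset.Icc (1 : ℤ) (m * n * c)).card =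
      (Finset.univ : Finset (Fin c × Fin m × Fin n)).card := by
    simp only [Int.card_Icc, Finset.card_univ, Fintype.card_prod, Fintype.card_fin]
    rw [add_sub_cancel_right, ← Nat.cast_mul, ← Nat.cast_mul, Int.toNat_natCast, mul_comm]
  have hsub : Finset.Icc (1 : ℤ) (m * n * c) ⊆ Finset.univ.image f := fun x hx => by
    obtain ⟨l, i, j, h⟩ := hcover x (Finset.mem_Icc.1 hx).1 (Finset.mem_Icc.1 hx).2
    exact Finset.mem_image.2 ⟨(l, i, j), Finset.mem_univ _, h⟩
  have himage : Finset.Icc (1 : ℤ) (m * n * c) = Finset.univ.image f :=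
    Finset.eq_of_subset_of_card_le hsub (hcard ▸ Finset.card_image_le)
  have hinj : Set.InjOn f (Finset.univ : Finset (Fin c × Fin m × Fin n)) :=
    Finset.card_image_iff.1 (himage ▸ hcard)
  rw [Finset.coe_univ, Set.injOn_univ] at hinj
  refine ⟨hinj, fun x => ?_, hrow, hcol⟩
  simpa [f] using Finset.ext_iff.1 himage x

/-! ### Covering sets of integers by zero-sum arrays -/

/-- Some zero-sum `m × n` integer array contains every element of `S` up to sign. Demanding only
that the entries *cover* `S` makes the notion monotone; distinctness is recovered by counting. -/
def ZeroSumCoverable (m n : ℕ) (S : Set ℤ) : Prop :=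
  ∃ A : Matrix (Fin m) (Fin n) ℤ, (∀ i, ∑ j, A i j = 0) ∧ (∀ j, ∑ i, A i j = 0) ∧
    ∀ x ∈ S, ∃ i j, |A i j| = |x|

namespace ZeroSumCoverable

variable {m n n' : ℕ} {S S' : Set ℤ}

theorem mono (h : ZeroSumCoverable m n S') (hS : S ⊆ S') : ZeroSumCoverable m n S := by
  obtain ⟨A, hrow, hcol, hcover⟩ := h
  exact ⟨A, hrow, hcol, fun x hx => hcover x (hS hx)⟩

theorem transpose (h : ZeroSumCoverable m n S) : ZeroSumCoverable n m S := by
  obtain ⟨A, hrow, hcol, hcover⟩ := h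
  exact ⟨A.transpose, hcol, hrow, fun x hx => exists_comm.1 (hcover x hx)⟩

theorem append_cols (h : ZeroSumCoverable m n S) (h' : ZeroSumCoverable m n' S') :
    ZeroSumCoverable m (n + n') (S ∪ S') := by
  obtain ⟨A, hrow, hcol, hcover⟩ := h
  obtain ⟨A', hrow', hcol', hcover'⟩ := h'
  refine ⟨Matrix.of fun i => Fin.append (A i) (A' i), fun i => ?_, fun j => ?_, ?_⟩
  · simp [Fin.sum_univ_add, hrow, hrow']
  · refine Fin.addCases (fun j => ?_) (fun j => ?_) j <;> simp [hcol, hcol']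
  · rintro x (hx | hx)
    · obtain ⟨i, j, hij⟩ := hcover x hx
      exact ⟨i, Fin.castAdd n' j, by simpa using hij⟩
    · obtain ⟨i, j, hij⟩ := hcover' x hx
      exact ⟨i, Fin.natAdd n j, by simpa using hij⟩

theorem append_rows (h : ZeroSumCoverable n m S) (h' : ZeroSumCoverable n' m S') :
    ZeroSumCoverable (n + n') m (S ∪ S') :=
  (h.transpose.append_cols h'.transpose).transpose

theorem append_cols_image_Ico {f : ℕ → ℤ} {p q r : ℕ} (hpq : p ≤ q) (hqr : q ≤ r)
    (h : ZeroSumCoverable m n (f '' Set.Ico p q)) (h' : ZeroSumCoverable m n' (f '' Set.Ico q r)) :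
    ZeroSumCoverable m (n + n') (f '' Set.Ico p r) := by
  rw [← Set.Ico_union_Ico_eq_Ico hpq hqr, Set.image_union]
  exact h.append_cols h'

theorem exists_isIHS {c : ℕ} {S : Fin c → Set ℤ} (h : ∀ l, ZeroSumCoverable m n (S l))
    (hcover : ∀ x : ℤ, 1 ≤ x → x ≤ m * n * c → ∃ l, x ∈ S l) : ∃ A, IsIHS m n c A := by
  choose A hrow hcol hA using h
  refine ⟨A, isIHS_of_cover hrow hcol fun x hx₁ hx => ?_⟩
  obtain ⟨l, hl⟩ := hcover x hx₁ hx
  obtain ⟨i, j, hij⟩ := hA l x hl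
  exact ⟨l, i, j, hij.trans (abs_of_pos hx₁)⟩

end ZeroSumCoverable

/-! ### Tables of linear forms -/

section Tables

variable {k m n : ℕ} {φ : ℕ → Fin k → ℤ} {T : Matrix (Fin m) (Fin n) ℤ}

/-- The linear form `± φ t` denoted by the table entry `± (t + 1)`. -/
def signedForm (φ : ℕ → Fin k → ℤ) (e : ℤ) : Fin k → ℤ :=
  e.sign • φ (e.natAbs - 1)

/-- `T` arranges the linear forms `φ 0, …, φ (m * n - 1)`, with signs, so that all row sums and
column sums vanish. An entry `± (t + 1)` of `T` stands for `± φ t`, and a linear form is given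
by its coefficients. -/
def IsZeroSumTable (φ : ℕ → Fin k → ℤ) (T : Matrix (Fin m) (Fin n) ℤ) : Prop :=
  (∀ i, ∑ j, signedForm φ (T i j) = 0) ∧ (∀ j, ∑ i, signedForm φ (T i j) = 0) ∧
    ∀ t : Fin (m * n), ∃ i j, (T i j).natAbs = t + 1

instance (φ : ℕ → Fin k → ℤ) (T : Matrix (Fin m) (Fin n) ℤ) : Decidable (IsZeroSumTable φ T) := by
  unfold IsZeroSumTable
  infer_instance

theorem abs_signedForm_dotProduct {e : ℤ} {t : ℕ} (he : e.natAbs = t + 1)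
    (x : Fin k → ℤ) : |signedForm φ e ⬝ᵥ x| = |φ t ⬝ᵥ x| := by
  have hsign : |e.sign| = 1 := by
    rw [← Int.natCast_natAbs, Int.natAbs_sign_of_ne_zero (by lia), Nat.cast_one]
  rw [signedForm, he, Nat.add_sub_cancel, smul_dotProduct, smul_eq_mul, abs_mul, hsign, one_mul]

theorem IsZeroSumTable.zeroSumCoverable (hT : IsZeroSumTable φ T) (x : Fin k → ℤ) {S : Set ℤ}
    (hS : ∀ y ∈ S, ∃ t < m * n, φ t ⬝ᵥ x = y) : ZeroSumCoverable m n S := by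
  obtain ⟨hrow, hcol, hall⟩ := hT
  refine ⟨T.map (signedForm φ · ⬝ᵥ x), fun i => ?_, fun j => ?_, fun y hy => ?_⟩
  · simp only [Matrix.map_apply, ← sum_dotProduct, hrow, zero_dotProduct]
  · simp only [Matrix.map_apply, ← sum_dotProduct, hcol, zero_dotProduct]
  · obtain ⟨t, ht, rfl⟩ := hS y hy
    obtain ⟨i, j, hij⟩ := hall ⟨t, ht⟩
    exact ⟨i, j, abs_signedForm_dotProduct hij x⟩

end Tables

/-! ### Borders made of triples -/

section Triples

variable {V : ℤ}

/-- The `(j % 3)`-th entry of the triple `2i + 1`, `V - i`, `V + 1 + i` with `i = j / 3`, in which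
the first two entries add up to the third. -/
def tripleValue (V : ℤ) (j : ℕ) : ℤ :=
  if j % 3 = 0 then 2 * (j / 3 : ℕ) + 1 else if j % 3 = 1 then V - (j / 3 : ℕ)
  else V + 1 + (j / 3 : ℕ)

/-- The coefficients of `tripleValue V (3 * s + j)` as a linear form in `s`, `V`, `1`. -/
def tripleForm (j : ℕ) : Fin 3 → ℤ :=
  if j % 3 = 0 then ![2, 0, 2 * (j / 3 : ℕ) + 1] else if j % 3 = 1 then ![-1, 1, -(j / 3 : ℕ)]
  else ![1, 1, 1 + (j / 3 : ℕ)]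

theorem tripleForm_dotProduct (s j : ℕ) :
    tripleForm j ⬝ᵥ ![(s : ℤ), V, 1] = tripleValue V (3 * s + j) := by
  have hdiv : (3 * s + j) / 3 = s + j / 3 := by lia
  simp only [tripleForm, tripleValue, hdiv, Nat.mul_add_mod]
  split_ifs <;> simp <;> ring

theorem IsZeroSumTable.zeroSumCoverable_tripleValue {t : ℕ} {T : Matrix (Fin 3) (Fin t) ℤ}
    (hT : IsZeroSumTable tripleForm T) (s : ℕ) :
    ZeroSumCoverable 3 t (tripleValue V '' Set.Ico (3 * s) (3 * (s + t))) := by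
  refine hT.zeroSumCoverable ![s, V, 1] ?_
  rintro _ ⟨j, ⟨hj, hj'⟩, rfl⟩
  exact ⟨j - 3 * s, by lia, by rw [tripleForm_dotProduct, Nat.add_sub_cancel' hj]⟩

theorem isZeroSumTable_triples_four : IsZeroSumTable tripleForm
    !![1, -4, -7,  10;
       2, -5, -8,  11;
      -3,  6,  9, -12] := by
  decide

theorem isZeroSumTable_triples_six : IsZeroSumTable tripleForm
    !![1, -4, -9,  12,  14, -17;
       2, -5,  7, -10, -15,  18;
      -3,  6,  8, -11,  13, -16] := by
  decide

theorem isZeroSumTable_triples_seven : IsZeroSumTable tripleForm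
    !![3, -6, -9,  10,  14, -18,  21;
      -2,  5,  8, -12,  13,  16, -19;
      -1,  4,  7,  11, -15,  17, -20] := by
  decide

theorem isZeroSumTable_triples_nine : IsZeroSumTable tripleForm
    !![1,  4, -7, -10,  14,  17, -21, -23,  25;
       2,  5, -8, -11,  13, -18,  20,  24, -27;
      -3, -6,  9,  12, -15,  16,  19, -22,  26] := by
  decide

theorem zeroSumCoverable_triples (s : ℕ) {t : ℕ} (ht : 4 ≤ t) (ht5 : t ≠ 5) :
    ZeroSumCoverable 3 t (tripleValue V '' Set.Ico (3 * s) (3 * (s + t))) := by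
  induction t using Nat.strong_induction_on generalizing s with
  | _ t ih =>
    obtain rfl | rfl | rfl | rfl | h : t = 4 ∨ t = 6 ∨ t = 7 ∨ t = 9 ∨ 8 ≤ t ∧ t ≠ 9 := by lia
    · exact isZeroSumTable_triples_four.zeroSumCoverable_tripleValue s
    · exact isZeroSumTable_triples_six.zeroSumCoverable_tripleValue s
    · exact isZeroSumTable_triples_seven.zeroSumCoverable_tripleValue s
    · exact isZeroSumTable_triples_nine.zeroSumCoverable_tripleValue s
    · obtain ⟨t, rfl⟩ := Nat.exists_eq_add_of_le ht
      have hrest := ih t (by lia) (s + 4) (by lia) (by lia)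
      rw [add_assoc] at hrest
      exact (isZeroSumTable_triples_four.zeroSumCoverable_tripleValue s).append_cols_image_Ico
        (by lia) (by lia) hrest

theorem ZeroSumCoverable.add_border {r s : ℕ} (hr : 2 ≤ r) (hs : 2 ≤ s) (p : ℕ) {S : Set ℤ}
    (h : ZeroSumCoverable (2 * r) (2 * s) S) :
    ZeroSumCoverable (3 + 2 * r) (3 + 2 * s)
      (tripleValue V '' Set.Ico (3 * p) (3 * (p + (2 * r + 2 * s + 3))) ∪ S) := by
  have htop := zeroSumCoverable_triples (V := V) p (t := 3 + 2 * s) (by lia) (by lia)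
  have hleft := zeroSumCoverable_triples (V := V) (p + (3 + 2 * s)) (t := 2 * r) (by lia) (by lia)
  have hsplit : Set.Ico (3 * p) (3 * (p + (2 * r + 2 * s + 3))) =
      Set.Ico (3 * p) (3 * (p + (3 + 2 * s))) ∪
        Set.Ico (3 * (p + (3 + 2 * s))) (3 * (p + (3 + 2 * s) + 2 * r)) := by
    rw [Set.Ico_union_Ico_eq_Ico (by lia) (by lia)]
    ring_nf
  rw [hsplit, Set.image_union, Set.union_assoc]
  exact htop.append_rows (hleft.transpose.append_cols h)

end Triples

/-! ### Inner blocks made of progressions -/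

section Blocks

variable {f : ℕ → ℤ} {a b c : ℤ} {L M r s : ℕ}

/-- For `t < 4 * k` the linear form `d * e * (t % 4) + x (t / 4)`, the `t % 4`-th term of a
four-term progression of step `d * e` starting at `x (t / 4)`; for `t ≥ 4 * k` the linear form
`d * (t - 4 * k) + x k`, a term of one longer progression of step `d`. The indeterminates are
`d, x 0, …, x k`, in this order. For `e = 1` and `d = ± 2` all progressions have step `± 2`; for
`e = 2` and `d = 1` the last one is an interval. -/
def progressionForm (k : ℕ) (e : ℤ) (t : ℕ) : Fin (k + 2) → ℤ :=
  Matrix.vecCons (if t < 4 * k then e * (t % 4 : ℕ) else (t - 4 * k : ℕ))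
    (fun g : Fin (k + 1) => if (g : ℕ) = min (t / 4) k then 1 else 0)

theorem progressionForm_dotProduct (k : ℕ) (e : ℤ) (t : ℕ) (d : ℤ) (x : ℕ → ℤ) :
    progressionForm k e t ⬝ᵥ Matrix.vecCons d (fun g : Fin (k + 1) => x g) =
      (if t < 4 * k then e * (t % 4 : ℕ) else (t - 4 * k : ℕ)) * d + x (min (t / 4) k) := by
  have hval : ∀ g : Fin (k + 1), (g : ℕ) = min (t / 4) k ↔
      g = ⟨min (t / 4) k, Nat.lt_succ_of_le (min_le_right _ _)⟩ := fun g => by rw [Fin.ext_iff]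
  rw [progressionForm, Matrix.cons_dotProduct_cons]
  simp [dotProduct, hval]

theorem isZeroSumTable_four_four : IsZeroSumTable (progressionForm 3 1)
    !![-1,   4,   5,  -8;
        3,  -2,  -7,   6;
      -11,  10,  15, -14;
        9, -12, -13,  16] := by
  decide

theorem isZeroSumTable_four_six : IsZeroSumTable (progressionForm 5 1)
    !![ 2,  -1,  -8,   6, -11,  12;
       -3,   4,   5,  -7,  10,  -9;
      -14,  13,  20, -18,  23, -24;
       15, -16, -17,  19, -22,  21] := by
  decide +kernel

theorem isZeroSumTable_six_six : IsZeroSumTable (progressionForm 6 1)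
    !![-1,   4,  -8,   7, -11,   9;
        3,  -2,   6,  -5,  10, -12;
      -15,  13,  19, -20,  33, -30;
       14, -16, -18,  17, -28,  31;
      -22,  24, -26, -35,  25,  34;
       21, -23,  27,  36, -29, -32] := by
  decide +kernel

theorem isZeroSumTable_four_four_mixed : IsZeroSumTable (progressionForm 1 2)
    !![-4,  2,  -9,  13;
        3, -1, -16,  12;
       -5,  6,  14, -15;
        7, -8,  11, -10] := by
  decide +kernel

theorem isZeroSumTable_four_six_mixed : IsZeroSumTable (progressionForm 3 2)
    !![ 4,  -3,  -6,   7, -23,  19;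
       -1,   2,   8,  -5,  16, -24;
      -12,  11,  18,  13, -14, -15;
        9, -10, -22, -17,  21,  20] := by
  decide +kernel

theorem isZeroSumTable_six_six_mixed : IsZeroSumTable (progressionForm 6 2)
    !![-2,   4,   6,  -7, -10,   9;
        3,  -1,  -8,   5,  12, -11;
      -15,  13,  18, -20, -28,  36;
       16, -14, -17,  19, -35,  27;
      -24,  21,  34, -25,  26, -29;
       22, -23, -32,  31,  33, -30] := by
  decide +kernel

theorem IsZeroSumTable.zeroSumCoverable_image_Ico {k m n p : ℕ} {e d : ℤ}
    {T : Matrix (Fin m) (Fin n) ℤ} (hT : IsZeroSumTable (progressionForm k e) T)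
    (hquad : ∀ g < k, ∀ i < 4, f (p + 4 * g + i) = f (p + 4 * g) + e * i * d)
    (hrun : ∀ i, 4 * k + i < m * n → f (p + 4 * k + i) = f (p + 4 * k) + i * d) :
    ZeroSumCoverable m n (f '' Set.Ico p (p + m * n)) := by
  refine hT.zeroSumCoverable (Matrix.vecCons d fun g : Fin (k + 1) => f (p + 4 * (g : ℕ))) ?_
  rintro _ ⟨j, ⟨hj, hj'⟩, rfl⟩
  obtain ⟨t, rfl⟩ := Nat.exists_eq_add_of_le hj
  refine ⟨t, by lia, ?_⟩
  rw [progressionForm_dotProduct k e t d fun g => f (p + 4 * g)]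
  split_ifs
  · rw [min_eq_left (by lia), add_comm, ← hquad _ (by lia) _ (Nat.mod_lt _ (by lia)), add_assoc,
      Nat.div_add_mod]
  · rw [min_eq_right (by lia), add_comm, ← hrun _ (by lia), add_assoc,
      Nat.add_sub_cancel' (by lia)]

/-- Two arithmetic progressions of step 2, switching at index `4 * M`, followed from index `4 * L`
on by an interval. The indices of the switches are multiples of 4, so each *quad* of indices
`4 * g, …, 4 * g + 3` carries an arithmetic progression. -/
def threeProgressions (a b c : ℤ) (M L j : ℕ) : ℤ :=
  if j < 4 * L then if j < 4 * M then a + 2 * j else b + 2 * j else c + j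

theorem threeProgressions_sub {j j' : ℕ} (hj : j < 4 * L) (hj' : j' < 4 * L)
    (hM : j < 4 * M ↔ j' < 4 * M) :
    threeProgressions a b c M L j' - threeProgressions a b c M L j = 2 * (j' - j) := by
  simp only [threeProgressions, hj, hj', hM, if_true]
  split_ifs <;> ring

theorem threeProgressions_add (i : ℕ) :
    threeProgressions a b c M L (4 * L + i) = threeProgressions a b c M L (4 * L) + i := by
  unfold threeProgressions
  push_cast
  split_ifs <;> lia

theorem zeroSumCoverable_of_run_last {m n k h u : ℕ} {T : Matrix (Fin m) (Fin n) ℤ}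
    (hT : IsZeroSumTable (progressionForm k 1) T) (hmn : m * n = 4 * (k + h))
    (hL : u + (k + h) ≤ L) (hM : M ≤ u + k ∨ u + (k + h) ≤ M) :
    ZeroSumCoverable m n (threeProgressions a b c M L '' Set.Ico (4 * u) (4 * (u + (k + h)))) := by
  rw [mul_add, ← hmn]
  refine hT.zeroSumCoverable_image_Ico (d := 2) (fun g hg i hi => ?_) fun i hi => ?_
  · rw [← sub_eq_iff_eq_add', threeProgressions_sub (by lia) (by lia) (by lia)]
    push_cast; ring
  · rw [← sub_eq_iff_eq_add', threeProgressions_sub (by lia) (by lia) (by lia)]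
    push_cast; ring

theorem zeroSumCoverable_of_run_first {m n k h u : ℕ} {T : Matrix (Fin m) (Fin n) ℤ}
    (hT : IsZeroSumTable (progressionForm k 1) T) (hmn : m * n = 4 * (k + h))
    (hL : u + (k + h) ≤ L) (hM : M ≤ u ∨ u + h ≤ M) :
    ZeroSumCoverable m n (threeProgressions a b c M L '' Set.Ico (4 * u) (4 * (u + (k + h)))) := by
  -- Read backwards, the progressions have step `-2` and the run of `h` quads comes last.
  set q := 4 * (u + (k + h)) - 1
  have hreverse : ZeroSumCoverable m n
      ((fun t => threeProgressions a b c M L (q - t)) '' Set.Ico 0 (0 + m * n)) := by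
    refine hT.zeroSumCoverable_image_Ico (d := -2) (fun g hg i hi => ?_) fun i hi => ?_
    · rw [← sub_eq_iff_eq_add', threeProgressions_sub (by lia) (by lia) (by lia)]
      lia
    · rw [← sub_eq_iff_eq_add', threeProgressions_sub (by lia) (by lia) (by lia)]
      lia
  refine hreverse.mono ?_
  rintro _ ⟨j, ⟨hj, hj'⟩, rfl⟩
  exact ⟨q - j, ⟨by lia, by lia⟩, by simp only [Nat.sub_sub_self (show j ≤ q by lia)]⟩

theorem zeroSumCoverable_of_interval_last {m n k u : ℕ} {T : Matrix (Fin m) (Fin n) ℤ}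
    (hT : IsZeroSumTable (progressionForm k 2) T) (hmn : m * n = 4 * (k + 3))
    (hL : u + k = L) :
    ZeroSumCoverable m n (threeProgressions a b c M L '' Set.Ico (4 * u) (4 * (u + (k + 3)))) := by
  rw [mul_add, ← hmn]
  refine hT.zeroSumCoverable_image_Ico (d := 1) (fun g hg i hi => ?_) fun i _ => ?_
  · rw [← sub_eq_iff_eq_add', threeProgressions_sub (by lia) (by lia) (by lia)]
    push_cast; ring
  · rw [← mul_add, hL, threeProgressions_add, mul_one]

/-- Every stretch of `r * s` quads of `f` ending before quad `L`, or exactly with quad `L + 2`, can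
be arranged, up to signs, in a zero-sum `2r × 2s` array. A stretch may not end within the quads
`L`, `L + 1`, `L + 2`, which are meant to form an interval. -/
def CoversQuads (f : ℕ → ℤ) (L r s : ℕ) : Prop :=
  ∀ u, u + r * s ≤ L ∨ u + r * s = L + 3 →
    ZeroSumCoverable (2 * r) (2 * s) (f '' Set.Ico (4 * u) (4 * (u + r * s)))

namespace CoversQuads

theorem symm (h : CoversQuads f L r s) : CoversQuads f L s r := fun u hu => by
  rw [mul_comm s r] at hu ⊢
  exact (h u hu).transpose

theorem add {s' : ℕ} (h : CoversQuads f L r s) (h' : CoversQuads f L r s') (hrs' : 3 ≤ r * s') :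
    CoversQuads f L r (s + s') := fun u hu => by
  rw [mul_add r, ← add_assoc] at hu ⊢
  rw [mul_add 2]
  exact (h u (by lia)).append_cols_image_Ico (by lia) (by lia) (h' (u + r * s) (by lia))

theorem of_two_of_three (hr : 2 ≤ r) (h₂ : CoversQuads f L r 2) (h₃ : CoversQuads f L r 3)
    (hs : 2 ≤ s) : CoversQuads f L r s := by
  induction s using Nat.strong_induction_on with
  | _ s ih =>
    obtain rfl | rfl | hs : s = 2 ∨ s = 3 ∨ 4 ≤ s := by lia
    · exact h₂
    · exact h₃
    · obtain ⟨s, rfl⟩ := Nat.exists_eq_add_of_le' (show 2 ≤ s by lia)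
      exact (ih s (by lia) (by lia)).add h₂ (by lia)

end CoversQuads

theorem coversQuads_two_two : CoversQuads (threeProgressions a b c M L) L 2 2 := fun u hu => by
  rcases hu with hu | hu
  · exact zeroSumCoverable_of_run_last (h := 1) isZeroSumTable_four_four rfl hu (by lia)
  · exact zeroSumCoverable_of_interval_last isZeroSumTable_four_four_mixed rfl (by lia)

theorem coversQuads_two_three : CoversQuads (threeProgressions a b c M L) L 2 3 := fun u hu => by
  rcases hu with hu | hu
  · exact zeroSumCoverable_of_run_last (h := 1) isZeroSumTable_four_six rfl hu (by lia)
  · exact zeroSumCoverable_of_interval_last isZeroSumTable_four_six_mixed rfl (by lia)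

theorem coversQuads_three_three : CoversQuads (threeProgressions a b c M L) L 3 3 := fun u hu => by
  rcases hu with hu | hu
  · -- The only switch below quad `L` cannot fall among both the first and the last three quads.
    obtain hM | hM : u + 3 ≤ M ∨ M ≤ u + 6 := by lia
    · exact zeroSumCoverable_of_run_first (h := 3) isZeroSumTable_six_six rfl hu (.inr hM)
    · exact zeroSumCoverable_of_run_last (h := 3) isZeroSumTable_six_six rfl hu (.inl hM)
  · exact zeroSumCoverable_of_interval_last isZeroSumTable_six_six_mixed rfl (by lia)

theorem coversQuads_threeProgressions (hr : 2 ≤ r) (hs : 2 ≤ s) :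
    CoversQuads (threeProgressions a b c M L) L r s :=
  have two_right : CoversQuads (threeProgressions a b c M L) L r 2 :=
    (coversQuads_two_two.of_two_of_three le_rfl coversQuads_two_three hr).symm
  have three_right : CoversQuads (threeProgressions a b c M L) L r 3 :=
    (coversQuads_two_three.symm.of_two_of_three (by lia) coversQuads_three_three hr).symm
  two_right.of_two_of_three hr three_right hs

end Blocks

/-! ### Assembling the arrays -/

theorem exists_tripleValue_eq {N : ℕ} {Q x : ℤ}
    (hx : 1 ≤ x ∧ x < 2 * N ∧ x % 2 = 1 ∨ N + Q < x ∧ x ≤ 3 * N + Q) :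
    ∃ j < 3 * N, tripleValue (2 * N + Q) j = x := by
  obtain h | h | h : (x < 2 * N ∧ x % 2 = 1 ∧ 1 ≤ x) ∨ (N + Q < x ∧ x ≤ 2 * N + Q) ∨
      2 * N + Q < x ∧ x ≤ 3 * N + Q := by lia
  · exact ⟨3 * ((x - 1) / 2).toNat, by lia, by unfold tripleValue; split_ifs <;> lia⟩
  · exact ⟨3 * (2 * N + Q - x).toNat + 1, by lia, by unfold tripleValue; split_ifs <;> lia⟩
  · exact ⟨3 * (x - (2 * N + Q) - 1).toNat + 2, by lia, by unfold tripleValue; split_ifs <;> lia⟩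

theorem exists_threeProgressions_cover {N q : ℕ} (hN : N % 4 = 0 ∨ N % 4 = 1)
    (hq : N + 5 ≤ 4 * q) :
    ∃ a b c M L, (q = L ∨ q = L + 3) ∧
      ∀ x : ℤ, 1 ≤ x ∧ x ≤ 2 * N ∧ x % 2 = 0 ∨ 2 * N < x ∧ x ≤ N + 4 * q →
        ∃ j < 4 * q, threeProgressions a b c M L j = x := by
  -- The even progression ends at `8 * M`, the odd one next to `N + 4 * L`; these ends must match.
  obtain ⟨L, M, hL, hNL, hM⟩ : ∃ L M, (q = L ∨ q = L + 3) ∧ N / 4 ≤ L ∧ L + N / 4 = 2 * M := by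
    obtain h | h : (q + N / 4) % 2 = 0 ∨ (q + N / 4) % 2 = 1 := by lia
    · exact ⟨q, (q + N / 4) / 2, by omega⟩
    · exact ⟨q - 3, (q - 3 + N / 4) / 2, by omega⟩
  refine ⟨2, 2 * N + 1 - 8 * M, N + 1, M, L, hL, fun x hx => ?_⟩
  obtain h | h | h : (1 ≤ x ∧ x ≤ 8 * M ∧ x % 2 = 0) ∨
      (2 * N < x ∧ x ≤ N + 4 * L ∧ x % 2 = 1) ∨ (N + 4 * L < x ∧ x ≤ N + 4 * q) := by lia
  · exact ⟨(x / 2 - 1).toNat, by lia, by unfold threeProgressions; split_ifs <;> lia⟩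
  · exact ⟨(4 * M + (x - 2 * N - 1) / 2).toNat, by lia, by
      unfold threeProgressions; split_ifs <;> lia⟩
  · exact ⟨(x - N - 1).toNat, by lia, by unfold threeProgressions; split_ifs <;> lia⟩

theorem exists_fin_mul_le_lt {c t j : ℕ} (hj : j < c * t) :
    ∃ l : Fin c, l * t ≤ j ∧ j < l * t + t := by
  have ht : 0 < t := Nat.pos_of_ne_zero (by rintro rfl; simp at hj)
  exact ⟨⟨j / t, Nat.div_lt_of_lt_mul (by lia)⟩, Nat.div_mul_le_self j t, Nat.lt_div_mul_add ht⟩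

theorem exists_zeroSumCoverable_cover {N c r s : ℕ} (hr : 2 ≤ r) (hs : 2 ≤ s)
    (hN : N % 4 = 0 ∨ N % 4 = 1) (hq : N + 5 ≤ 4 * (c * (r * s))) :
    ∃ S : Fin c → Set ℤ, (∀ l, ZeroSumCoverable (2 * r) (2 * s) (S l)) ∧
      ∀ x : ℤ, 1 ≤ x ∧ x ≤ 2 * N ∧ x % 2 = 0 ∨ 2 * N < x ∧ x ≤ N + 4 * (c * (r * s)) →
        ∃ l, x ∈ S l := by
  obtain ⟨a₁, a₂, a₃, M, L, hL, hcover⟩ := exists_threeProgressions_cover hN hq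
  refine ⟨fun l => threeProgressions a₁ a₂ a₃ M L ''
    Set.Ico (4 * (l * (r * s))) (4 * (l * (r * s) + r * s)), fun l => ?_, fun x hx => ?_⟩
  · refine coversQuads_threeProgressions hr hs _ ?_
    have hrs : 2 * 2 ≤ r * s := Nat.mul_le_mul hr hs
    obtain hl | hl : (l + 1 : ℕ) = c ∨ (l + 2 : ℕ) ≤ c := by lia
    · have hlast : l * (r * s) + r * s = c * (r * s) := by rw [← Nat.add_one_mul, hl]
      lia
    · have hnext : (l + 2) * (r * s) ≤ c * (r * s) := Nat.mul_le_mul_right _ hl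
      lia
  · obtain ⟨j, hj, rfl⟩ := hcover x hx
    obtain ⟨l, hl, hl'⟩ := exists_fin_mul_le_lt (c := c) (t := r * s) (j := j / 4) (by lia)
    exact ⟨l, j, ⟨by lia, by lia⟩, rfl⟩

theorem exists_IHS_of_odd
    (m n c : ℕ) (hm : 0 < m) (hn : 0 < n) (hc : 0 < c)
    (hmod : m * n * c % 4 = 0 ∨ m * n * c % 4 = 3)
    (hm7 : 7 ≤ m) (hn7 : 7 ≤ n) (hmodd : Odd m) (hnodd : Odd n) :
    ∃ A : Fin c → Matrix (Fin m) (Fin n) ℤ, IsIHS m n c A := by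
  obtain ⟨r, hr, rfl⟩ : ∃ r, 2 ≤ r ∧ m = 3 + 2 * r := ⟨(m - 3) / 2, by grind⟩
  obtain ⟨s, hs, rfl⟩ : ∃ s, 2 ≤ s ∧ n = 3 + 2 * s := ⟨(n - 3) / 2, by grind⟩
  set t := 2 * r + 2 * s + 3 with ht
  set N := c * t with hN
  set q := c * (r * s) with hq
  have hsize : (3 + 2 * r) * (3 + 2 * s) * c = 3 * N + 4 * q := by lia
  have htrs : t + 5 ≤ 4 * (r * s) := by nlinarith
  have hNq : N + 5 ≤ 4 * q := by nlinarith
  obtain ⟨S, hS, hinner⟩ := exists_zeroSumCoverable_cover hr hs (N := N) (by lia) hNq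
  refine ZeroSumCoverable.exists_isIHS
    (fun l => (hS l).add_border (V := 2 * N + 4 * q) hr hs (l * t)) fun x hx₁ hx => ?_
  zify at hsize
  obtain hx' | hx' : (1 ≤ x ∧ x < 2 * N ∧ x % 2 = 1 ∨ N + 4 * q < x ∧ x ≤ 3 * N + 4 * q) ∨
      (1 ≤ x ∧ x ≤ 2 * N ∧ x % 2 = 0 ∨ 2 * N < x ∧ x ≤ N + 4 * q) := by lia
  · obtain ⟨j, hj, rfl⟩ := exists_tripleValue_eq hx'
    obtain ⟨l, hl, hl'⟩ := exists_fin_mul_le_lt (c := c) (t := t) (j := j / 3) (by lia)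
    exact ⟨l, .inl ⟨j, ⟨by lia, by lia⟩, rfl⟩⟩
  · obtain ⟨l, hl⟩ := hinner x hx'
    exact ⟨l, .inr hl⟩
end

section
/- Let m, n, c be positive integers such that c ≡ 0 (mod 4), m is odd, and n ≡ 3 (mod 4). If m ≥ 7 and n ≥ 7, then there exists an integer Heffter array set IHS(m, n; c). -/
/-!
The cells of all `c` arrays are cut into `3 × 7`, `3 × 4` (or `4 × 3`) and `4 × 4` blocks with zero
row and column sums: `3` rows are filled by blocks of widths `7` and `4`, and `4` rows by blocks of
widths `3` and `4`. Only the multiset of absolute values used by a block matters, so the argument is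
a calculation with pointwise sums in `Set (Multiset ℤ)`: the multisets in `F + G` are those that
split into one from `F` and one from `G`, those in `n • F` split into `n` from `F`, and an inclusion
`F ⊆ G` says that blocks of one kind can be assembled into blocks of another.

The `4 × 4` blocks use intervals of `16` consecutive integers at the top. The columns of the blocks
with three rows are triples `x + y = z` partitioning an initial interval `[1, 12 s]`; as in a Skolem
sequence, all but seven of the triples lie in three runs along which `x` increases by `2` and `y`
decreases by `1`. Two consecutive triples of a run form a `3 × 2` array with row sums `(-2, 1, 1)`,
three form a `3 × 3` array with row sums `(-3, 0, 3)`, and the row sums of such pieces cancel.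
-/

open scoped Pointwise

section Supports

variable {m : ℕ}

/-- The support of an array in the sense of Heffter arrays, that is the collection of absolute
values of its entries, as a multiset so that no disjointness has to be tracked when arrays are
joined. -/
def absSupport {n : ℕ} (A : Matrix (Fin m) (Fin n) ℤ) : Multiset ℤ :=
  ∑ i, ∑ j, {|A i j|}

/-- The supports of all integer arrays with `n` columns, row sums `r` and zero column sums. -/
def supports (r : Fin m → ℤ) (n : ℕ) : Set (Multiset ℤ) :=
  {s | ∃ A : Matrix (Fin m) (Fin n) ℤ,
    absSupport A = s ∧ (∀ i, ∑ j, A i j = r i) ∧ ∀ j, ∑ i, A i j = 0}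

/-- The supports of all `m × n` integer arrays with zero row and column sums. -/
abbrev zeroSumSupports (m n : ℕ) : Set (Multiset ℤ) :=
  supports (0 : Fin m → ℤ) n

theorem sum_singleton_mem_supports {n : ℕ} {r : Fin m → ℤ} (A B : Matrix (Fin m) (Fin n) ℤ)
    (hAB : ∀ i j, 0 ≤ B i j ∧ (A i j = B i j ∨ A i j = -B i j))
    (hrow : ∀ i, ∑ j, A i j = r i) (hcol : ∀ j, ∑ i, A i j = 0) :
    ∑ i, ∑ j, {B i j} ∈ supports r n := by
  refine ⟨A, ?_, hrow, hcol⟩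
  simp only [absSupport, fun i j => (abs_eq (hAB i j).1).2 (hAB i j).2]

theorem supports_subset_supports_neg (r : Fin m → ℤ) (n : ℕ) :
    supports r n ⊆ supports (-r) n := by
  rintro _ ⟨A, rfl, hrow, hcol⟩
  exact ⟨-A, by simp [absSupport], by simp [hrow], by simp [hcol]⟩

theorem supports_subset_supports_comp_perm (r : Fin m → ℤ) (n : ℕ) (σ : Equiv.Perm (Fin m)) :
    supports r n ⊆ supports (r ∘ σ) n := by
  rintro _ ⟨A, rfl, hrow, hcol⟩
  refine ⟨A.submatrix σ id, ?_, fun i => hrow (σ i), fun j => ?_⟩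
  · exact Equiv.sum_comp σ fun i => ∑ j, {|A i j|}
  · exact (Equiv.sum_comp σ fun i => A i j).trans (hcol j)

theorem supports_add_supports_subset (r r' : Fin m → ℤ) (n n' : ℕ) :
    supports r n + supports r' n' ⊆ supports (r + r') (n + n') := by
  rintro _ ⟨_, ⟨A, rfl, hA, hA'⟩, _, ⟨B, rfl, hB, hB'⟩, rfl⟩
  refine ⟨fun i => Fin.append (A i) (B i), ?_, fun i => ?_, Fin.addCases ?_ ?_⟩
  · simp [absSupport, Fin.sum_univ_add, Finset.sum_add_distrib]
  · simp [Fin.sum_univ_add, hA, hB]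
  · simpa using hA'
  · simpa using hB'

theorem two_nsmul_supports_subset (r : Fin m → ℤ) (n : ℕ) :
    2 • supports r n ⊆ zeroSumSupports m (n + n) :=
  calc
    2 • supports r n
    _ = supports r n + supports r n := two_nsmul _
    _ ⊆ supports r n + supports (-r) n := by grw [← supports_subset_supports_neg r n]
    _ ⊆ supports (r + -r) (n + n) := supports_add_supports_subset _ _ _ _
    _ = zeroSumSupports m (n + n) := by rw [add_neg_cancel]

theorem zeroSumSupports_comm (m n : ℕ) : zeroSumSupports m n = zeroSumSupports n m := by
  have transpose_mem (m n : ℕ) : zeroSumSupports m n ⊆ zeroSumSupports n m := by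
    rintro _ ⟨A, rfl, hrow, hcol⟩
    exact ⟨A.transpose, Finset.sum_comm, hcol, hrow⟩
  exact (transpose_mem m n).antisymm (transpose_mem n m)

theorem zeroSumSupports_add_subset (m n n' : ℕ) :
    zeroSumSupports m n + zeroSumSupports m n' ⊆ zeroSumSupports m (n + n') := by
  simpa only [add_zero] using supports_add_supports_subset (0 : Fin m → ℤ) 0 n n'

theorem nsmul_zeroSumSupports_subset (m n j : ℕ) :
    j • zeroSumSupports m n ⊆ zeroSumSupports m (n * j) := by
  induction j with
  | zero => simp [supports, absSupport, Set.subset_def]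
  | succ j ih =>
    rw [succ_nsmul, Nat.mul_succ]
    exact (Set.add_subset_add_right ih).trans (zeroSumSupports_add_subset m _ n)

theorem zeroSumSupports_hcat_subset (m n n' j k : ℕ) :
    j • zeroSumSupports m n + k • zeroSumSupports m n' ⊆ zeroSumSupports m (n * j + n' * k) :=
  (Set.add_subset_add (nsmul_zeroSumSupports_subset m n j)
    (nsmul_zeroSumSupports_subset m n' k)).trans (zeroSumSupports_add_subset m _ _)

theorem zeroSumSupports_vcat_subset (m m' n a b : ℕ) :
    a • zeroSumSupports m n + b • zeroSumSupports m' n ⊆ zeroSumSupports (m * a + m' * b) n := by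
  simp only [zeroSumSupports_comm _ n]
  exact zeroSumSupports_hcat_subset n m m' a b

theorem nsmul_blocks_subset_nsmul_zeroSumSupports (a b c j k : ℕ) :
    (c * a * j) • zeroSumSupports 3 7 + (c * a * k + c * b * j) • zeroSumSupports 3 4 +
        (c * b * (j + k)) • zeroSumSupports 4 4 ⊆
      c • zeroSumSupports (3 * a + 4 * b) (7 * j + 4 * k) := by
  have three_rows : j • zeroSumSupports 3 7 + k • zeroSumSupports 3 4 ⊆
      zeroSumSupports 3 (7 * j + 4 * k) := zeroSumSupports_hcat_subset ..
  have four_rows : j • zeroSumSupports 3 4 + (j + k) • zeroSumSupports 4 4 ⊆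
      zeroSumSupports 4 (7 * j + 4 * k) := by
    rw [zeroSumSupports_comm 3 4, show 7 * j + 4 * k = 3 * j + 4 * (j + k) by ring]
    exact zeroSumSupports_hcat_subset ..
  calc
    _ = c • (a • (j • zeroSumSupports 3 7 + k • zeroSumSupports 3 4) +
          b • (j • zeroSumSupports 3 4 + (j + k) • zeroSumSupports 4 4)) := by module
    _ ⊆ c • (a • zeroSumSupports 3 (7 * j + 4 * k) + b • zeroSumSupports 4 (7 * j + 4 * k)) := by
      gcongr
    _ ⊆ c • zeroSumSupports (3 * a + 4 * b) (7 * j + 4 * k) := by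
      gcongr
      exact zeroSumSupports_vcat_subset ..

theorem exists_isIHS_of_Ico_mem {m n c : ℕ}
    (h : Multiset.Ico 1 (1 + (m * n * c : ℕ) : ℤ) ∈ c • zeroSumSupports m n) :
    ∃ A : Fin c → Matrix (Fin m) (Fin n) ℤ, IsIHS m n c A := by
  have hnsmul : c • zeroSumSupports m n = ∑ _l : Fin c, zeroSumSupports m n := by
    rw [Finset.sum_const, Finset.card_univ, Fintype.card_fin]
  obtain ⟨s, hs, hsum⟩ := (Set.mem_fintype_sum _ _).1 (hnsmul ▸ h)
  choose A hA hrow hcol using hs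
  let absEntry (p : Fin c × Fin m × Fin n) : ℤ := |A p.1 p.2.1 p.2.2|
  have hmap : Finset.univ.val.map absEntry = Multiset.Ico 1 (1 + (m * n * c : ℕ) : ℤ) :=
    calc
      Finset.univ.val.map absEntry
      _ = ∑ p, {absEntry p} := by
        rw [← Multiset.sum_map_singleton (Multiset.map absEntry _), Multiset.map_map]
        rfl
      _ = ∑ l, absSupport (A l) := by simp only [absEntry, absSupport, Fintype.sum_prod_type]
      _ = _ := by simp only [hA, hsum]
  refine ⟨A, fun p q => ?_, fun x => ?_, hrow, hcol⟩
  · exact Multiset.inj_on_of_nodup_map (hmap ▸ Multiset.nodup_Ico) p (Finset.mem_univ p) q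
      (Finset.mem_univ q)
  · have hx : x ∈ Multiset.Ico 1 (1 + (m * n * c : ℕ) : ℤ) ↔ ∃ l i j, |A l i j| = x := by
      rw [← hmap]
      simp [absEntry]
    rw [← hx, Multiset.mem_Ico]
    push_cast
    omega

end Supports

section Intervals

theorem Ico_eq_of_forall_mem {a b : ℤ} {s : Multiset ℤ} (hmem : ∀ v, a ≤ v → v < b → v ∈ s)
    (hcard : s.card ≤ (b - a).toNat) : Multiset.Ico a b = s := by
  have hle : Multiset.Ico a b ≤ s := (Multiset.le_iff_subset Multiset.nodup_Ico).2 fun v hv =>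
    hmem v (Multiset.mem_Ico.1 hv).1 (Multiset.mem_Ico.1 hv).2
  exact Multiset.eq_of_le_of_card_le hle (hcard.trans_eq (Int.card_Ico a b).symm)

theorem Ico_add_sixteen_mem_zeroSumSupports {a : ℤ} (ha : 0 ≤ a) :
    Multiset.Ico a (a + 16) ∈ zeroSumSupports 4 4 := by
  have hIco : Multiset.Ico a (a + 16) = ∑ i : Fin 4, ∑ j : Fin 4, {a + 4 * i + j} := by
    refine Ico_eq_of_forall_mem (fun v hv hv' => ?_) (by simp)
    simp only [Multiset.mem_sum, Finset.mem_univ, true_and, Multiset.mem_singleton]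
    exact ⟨⟨((v - a) / 4).toNat, by omega⟩, ⟨((v - a) % 4).toNat, by omega⟩, by simp; omega⟩
  rw [hIco]
  let sign : Fin 4 → ℤ := ![1, -1, -1, 1]
  refine sum_singleton_mem_supports (fun i j => sign i * sign j * (a + 4 * i + j)) _
    (fun i j => ⟨by positivity, ?_⟩) (fun i => ?_) (fun j => ?_)
  · fin_cases i <;> fin_cases j <;> simp [sign]
  · fin_cases i <;> simp [sign, Fin.sum_univ_succ] <;> ring
  · fin_cases j <;> simp [sign, Fin.sum_univ_succ] <;> ring

theorem Ico_mem_nsmul_zeroSumSupports_four_four {a : ℤ} (ha : 0 ≤ a) (L : ℕ) :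
    Multiset.Ico a (a + 16 * L) ∈ L • zeroSumSupports 4 4 := by
  induction L with
  | zero => simp [Multiset.Ico]
  | succ L ih =>
    have hsplit : Multiset.Ico a (a + 16 * (L + 1 : ℕ)) =
        Multiset.Ico a (a + 16 * L) + Multiset.Ico (a + 16 * L) (a + 16 * L + 16) := by
      rw [Multiset.Ico_add_Ico_eq_Ico (by omega) (by omega)]
      push_cast
      ring_nf
    rw [hsplit, succ_nsmul]
    exact Set.add_mem_add ih (Ico_add_sixteen_mem_zeroSumSupports (by positivity))

end Intervals

section Runs

/-- A run of `n` triples `(x + 2 i, y - i, x + y + i)`, in each of which the third number is the sum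
of the other two: the columns from which the blocks with three rows are built. -/
def run (x y : ℤ) (n : ℕ) : Multiset ℤ :=
  ∑ i ∈ Finset.range n, {x + 2 * i, y - i, x + y + i}

theorem card_run (x y : ℤ) (n : ℕ) : (run x y n).card = 3 * n := by
  simp [run, mul_comm]

theorem mem_run_iff {x y v : ℤ} {n : ℕ} :
    v ∈ run x y n ↔ (x ≤ v ∧ v < x + 2 * n ∧ (v - x) % 2 = 0) ∨
      (y - n < v ∧ v ≤ y) ∨ (x + y ≤ v ∧ v < x + y + n) := by
  simp only [run, Multiset.mem_sum, Finset.mem_range, Multiset.insert_eq_cons, Multiset.mem_cons,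
    Multiset.mem_singleton]
  constructor
  · omega
  · rintro (hv | hv | hv)
    · exact ⟨((v - x) / 2).toNat, by omega⟩
    · exact ⟨(y - v).toNat, by omega⟩
    · exact ⟨(v - (x + y)).toNat, by omega⟩

theorem run_add (x y : ℤ) (n n' : ℕ) :
    run x y (n + n') = run x y n + run (x + 2 * n) (y - n) n' := by
  simp only [run, Finset.sum_range_add]
  refine congrArg₂ _ rfl (Finset.sum_congr rfl fun i _ => ?_)
  have hx : x + 2 * ((n + i : ℕ) : ℤ) = x + 2 * n + 2 * i := by push_cast; ring
  have hy : y - ((n + i : ℕ) : ℤ) = y - n - i := by push_cast; ring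
  have hz : x + y + ((n + i : ℕ) : ℤ) = x + 2 * n + (y - n) + i := by push_cast; ring
  rw [hx, hy, hz]

theorem run_mul_mem_nsmul {F : Set (Multiset ℤ)} {x y : ℤ} {k n : ℕ}
    (h : ∀ l < n, run (x + 2 * (k * l : ℕ)) (y - (k * l : ℕ)) k ∈ F) : run x y (k * n) ∈ n • F := by
  induction n with
  | zero => simp [run]
  | succ n ih =>
    rw [Nat.mul_succ, run_add, succ_nsmul]
    exact Set.add_mem_add (ih fun l hl => h l (hl.trans n.lt_succ_self)) (h n n.lt_succ_self)

/-- The supports of the `3 × 2` arrays obtained from two consecutive triples of a run. The row sums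
do not depend on the run, so such arrays can be joined to give zero row sums. -/
abbrev pairSupports : Set (Multiset ℤ) :=
  supports ![-2, 1, 1] 2

/-- The supports of the `3 × 3` arrays obtained from three consecutive triples of a run, for the
same purpose as `pairSupports`. -/
abbrev tripSupports : Set (Multiset ℤ) :=
  supports ![-3, 0, 3] 3

theorem run_two_mem_pairSupports {x y : ℤ} (hx : 0 ≤ x) (hy : 1 ≤ y) :
    run x y 2 ∈ pairSupports := by
  convert sum_singleton_mem_supports (r := ![-2, 1, 1])
    !![x, -(x + 2); y, -(y - 1); -(x + y), x + y + 1]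
    !![x, x + 2; y, y - 1; x + y, x + y + 1] (fun i j => ?_) (fun i => ?_) (fun j => ?_) using 1
  · simp [run, Fin.sum_univ_succ, Finset.sum_range_succ, ← Multiset.singleton_add]
    abel
  · fin_cases i <;> fin_cases j <;> simp <;> omega
  · fin_cases i <;> simp [Fin.sum_univ_succ]; ring
  · fin_cases j <;> simp [Fin.sum_univ_succ]; ring

theorem run_three_mem_tripSupports {x y : ℤ} (hx : 0 ≤ x) (hy : 2 ≤ y) :
    run x y 3 ∈ tripSupports := by
  convert sum_singleton_mem_supports (r := ![-3, 0, 3])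
    !![x, -(x + y + 1), y - 2; y, x + 2, -(x + y + 2); -(x + y), y - 1, x + 4]
    !![x, x + y + 1, y - 2; y, x + 2, x + y + 2; x + y, y - 1, x + 4]
    (fun i j => ?_) (fun i => ?_) (fun j => ?_) using 1
  · simp [run, Fin.sum_univ_succ, Finset.sum_range_succ, ← Multiset.singleton_add]
    abel
  · fin_cases i <;> fin_cases j <;> simp <;> omega
  · fin_cases i <;> simp [Fin.sum_univ_succ] <;> ring
  · fin_cases j <;> simp [Fin.sum_univ_succ] <;> ring

theorem run_mem_nsmul_tripSupports_add_nsmul_pairSupports {x y : ℤ} {t p : ℕ} (hx : 0 ≤ x)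
    (hy : 3 * t + 2 * p ≤ y + 1) :
    run x y (3 * t + 2 * p) ∈ t • tripSupports + p • pairSupports := by
  rw [run_add]
  refine Set.add_mem_add (run_mul_mem_nsmul fun l hl => ?_) (run_mul_mem_nsmul fun l hl => ?_)
  · exact run_three_mem_tripSupports (by positivity) (by push_cast; omega)
  · exact run_two_mem_pairSupports (by positivity) (by push_cast; omega)

theorem tripSupports_add_two_nsmul_pairSupports_subset :
    tripSupports + 2 • pairSupports ⊆ zeroSumSupports 3 7 := by
  have hr : ![-3, 0, 3] + (-![-2, 1, 1] + ![-2, 1, 1] ∘ finRotate 3) = (0 : Fin 3 → ℤ) := by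
    decide
  calc
    tripSupports + 2 • pairSupports
    _ = tripSupports + (pairSupports + pairSupports) := by rw [two_nsmul]
    _ ⊆ tripSupports + (supports (-![-2, 1, 1]) 2 + supports (![-2, 1, 1] ∘ finRotate 3) 2) := by
      gcongr
      · exact supports_subset_supports_neg ..
      · exact supports_subset_supports_comp_perm ..
    _ ⊆ tripSupports + supports (-![-2, 1, 1] + ![-2, 1, 1] ∘ finRotate 3) 4 := by
      gcongr
      exact supports_add_supports_subset ..
    _ ⊆ zeroSumSupports 3 7 := by
      rw [zeroSumSupports, ← hr]
      exact supports_add_supports_subset ..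

end Runs

section Partition

/-- The absolute values of a `3 × 7` array with zero row and column sums, read row by row. They are
what three suitable runs leave uncovered in the interval from `1` to `12 s`. -/
def sporadic (s : ℤ) : Multiset ℤ :=
  {2 * s + 1, 1, 6 * s, 10 * s, 4 * s, 2, 10 * s + 2,
    5 * s - 1, 5 * s, 8 * s - 1, 6 * s + 1, 8 * s, 10 * s + 1, 4,
    7 * s, 5 * s + 1, 2 * s - 1, 4 * s - 1, 12 * s, 10 * s - 1, 10 * s - 2}

theorem sporadic_mem_zeroSumSupports {s : ℤ} (hs : 1 ≤ s) :
    sporadic s ∈ zeroSumSupports 3 7 := by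
  convert sum_singleton_mem_supports (r := 0)
    !![2 * s + 1, -1, -(6 * s), 10 * s, 4 * s, 2, -(10 * s + 2);
      5 * s - 1, -(5 * s), 8 * s - 1, -(6 * s + 1), 8 * s, -(10 * s + 1), 4;
      -(7 * s), 5 * s + 1, -(2 * s - 1), -(4 * s - 1), -(12 * s), 10 * s - 1, 10 * s - 2]
    !![2 * s + 1, 1, 6 * s, 10 * s, 4 * s, 2, 10 * s + 2;
      5 * s - 1, 5 * s, 8 * s - 1, 6 * s + 1, 8 * s, 10 * s + 1, 4;
      7 * s, 5 * s + 1, 2 * s - 1, 4 * s - 1, 12 * s, 10 * s - 1, 10 * s - 2]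
    (fun i j => ?_) (fun i => ?_) (fun j => ?_) using 1
  · simp [sporadic, Fin.sum_univ_succ, ← Multiset.singleton_add]
    abel
  · fin_cases i <;> fin_cases j <;> simp <;> omega
  · fin_cases i <;> simp [Fin.sum_univ_succ] <;> ring
  · fin_cases j <;> simp [Fin.sum_univ_succ] <;> ring

theorem Ico_eq_sporadic_add_runs {s : ℕ} (hs : 2 ≤ s) :
    Multiset.Ico 1 (1 + 12 * s : ℤ) = sporadic s + run 6 (10 * s - 3) (2 * s - 3) +
      run (2 * s + 3) (5 * s - 2) (s - 2) + run 3 (6 * s - 1) (s - 2) := by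
  refine Ico_eq_of_forall_mem (fun v hv hv' => ?_) ?_
  · simp only [Multiset.mem_add, mem_run_iff, sporadic, Multiset.insert_eq_cons, Multiset.mem_cons,
      Multiset.mem_singleton]
    grind
  · simp only [Multiset.card_add, card_run, sporadic, Multiset.insert_eq_cons, Multiset.card_cons,
      Multiset.card_singleton]
    omega

theorem Ico_mem_nsmul_three_seven_add_nsmul_three_four {s P K : ℕ} (hs : 7 * P + 4 * K = 4 * s)
    (hP : 0 < P) (hP4 : 4 ∣ P) :
    Multiset.Ico 1 (1 + 12 * s : ℤ) ∈ P • zeroSumSupports 3 7 + K • zeroSumSupports 3 4 := by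
  obtain ⟨e, q, hq, he⟩ : ∃ e q, s - 2 = 3 * e + 2 * q ∧ e = s % 2 :=
    ⟨s % 2, (s - 2 - 3 * (s % 2)) / 2, by omega, rfl⟩
  obtain ⟨t, p, hp, ht⟩ : ∃ t p, 2 * s - 3 = 3 * t + 2 * p ∧ P = t + 2 * e + 1 :=
    ⟨P - 1 - 2 * e, (2 * s - 3 - 3 * (P - 1 - 2 * e)) / 2, by omega, by omega⟩
  have hpq : p + 2 * q = 2 * (t + 2 * e) + 2 * K := by omega
  let T := tripSupports
  let D := pairSupports
  have hmem : Multiset.Ico 1 (1 + 12 * s : ℤ) ∈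
      zeroSumSupports 3 7 + (t • T + p • D) + (e • T + q • D) + (e • T + q • D) := by
    rw [Ico_eq_sporadic_add_runs (by omega), hp, hq]
    refine Set.add_mem_add (Set.add_mem_add (Set.add_mem_add
      (sporadic_mem_zeroSumSupports (by omega)) ?_) ?_) ?_ <;>
    exact run_mem_nsmul_tripSupports_add_nsmul_pairSupports (by omega) (by omega)
  refine Set.mem_of_subset_of_mem ?_ hmem
  calc
    zeroSumSupports 3 7 + (t • T + p • D) + (e • T + q • D) + (e • T + q • D)
    _ = zeroSumSupports 3 7 + (t + 2 * e) • T + (p + 2 * q) • D := by module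
    _ = zeroSumSupports 3 7 + (t + 2 * e) • (T + 2 • D) + K • (2 • D) := by rw [hpq]; module
    _ ⊆ zeroSumSupports 3 7 + (t + 2 * e) • zeroSumSupports 3 7 + K • zeroSumSupports 3 4 := by
      gcongr
      · exact tripSupports_add_two_nsmul_pairSupports_subset
      · exact two_nsmul_supports_subset _ 2
    _ = P • zeroSumSupports 3 7 + K • zeroSumSupports 3 4 := by rw [ht]; module

theorem Ico_mem_nsmul_blocks {P K L N : ℕ} (hN : N = 3 * (7 * P + 4 * K) + 16 * L) (hP : 0 < P)
    (hP4 : 4 ∣ P) :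
    Multiset.Ico 1 (1 + N : ℤ) ∈
      P • zeroSumSupports 3 7 + K • zeroSumSupports 3 4 + L • zeroSumSupports 4 4 := by
  obtain ⟨s, hs⟩ : 4 ∣ 7 * P + 4 * K := by omega
  have hsplit : Multiset.Ico 1 (1 + N : ℤ) =
      Multiset.Ico 1 (1 + 12 * s : ℤ) + Multiset.Ico (1 + 12 * s : ℤ) (1 + 12 * s + 16 * L) := by
    rw [Multiset.Ico_add_Ico_eq_Ico (by omega) (by omega)]
    congr 1
    omega
  rw [hsplit]
  exact Set.add_mem_add (Ico_mem_nsmul_three_seven_add_nsmul_three_four hs hP hP4)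
    (Ico_mem_nsmul_zeroSumSupports_four_four (by positivity) L)

end Partition

theorem exists_IHS_c0_n3_general {m n c a b j k : ℕ} (hm : m = 3 * a + 4 * b)
    (hn : n = 7 * j + 4 * k) (ha : 0 < a) (hj : 0 < j) (hc : 0 < c) (hmnc : 4 ∣ m * n * c) :
    ∃ A : Fin c → Matrix (Fin m) (Fin n) ℤ, IsIHS m n c A := by
  have hcount : m * n * c =
      3 * (7 * (c * a * j) + 4 * (c * a * k + c * b * j)) + 16 * (c * b * (j + k)) := by
    rw [hm, hn]
    ring
  have hblocks := Ico_mem_nsmul_blocks hcount (by positivity) (by omega)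
  subst hm hn
  exact exists_isIHS_of_Ico_mem (nsmul_blocks_subset_nsmul_zeroSumSupports a b c j k hblocks)

theorem exists_IHS_c0_n3
    (m n c : ℕ) (hm : 0 < m) (hn : 0 < n) (hc : 0 < c)
    (hcmod : c % 4 = 0) (hmodd : Odd m) (hnmod : n % 4 = 3)
    (hm7 : 7 ≤ m) (hn7 : 7 ≤ n) :
    ∃ A : Fin c → Matrix (Fin m) (Fin n) ℤ, IsIHS m n c A := by
  have hm4 : m % 2 = 1 := Nat.odd_iff.1 hmodd
  exact exists_IHS_c0_n3_general (a := 4 - m % 4) (b := (m - 3 * (4 - m % 4)) / 4) (j := 1)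
    (k := (n - 7) / 4) (by omega) (by omega) (by omega) one_pos hc
    (Dvd.dvd.mul_left (Nat.dvd_of_mod_eq_zero hcmod) _)
end

section
/- Let m, n, c be positive integers such that c ≡ 0 (mod 4) and m ≡ n ≡ 1 (mod 4). If m ≥ 9 and n ≥ 9, then there exists an integer Heffter array set IHS(m, n; c). -/
/-!
Write `m = 4 a + 5`, `n = 4 b + 5` and `c = 4 k`, and cut every array into a `5 × 5` corner, `a`
blocks of size `4 × 5` below it, `b` blocks of size `5 × 4` to its right, and `a b` blocks of size
`4 × 4`. If each block has zero row and column sums, so has the array, hence the blocks of all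
arrays can be distributed freely. They have `m n c` cells altogether, so it is enough that
every number in `{1, …, m n c}` occurs up to sign: distinctness is then a matter of counting.

A `4 × 4` block can be built from any four runs of four consecutive numbers. Lines of odd length are
less flexible, and the corners and the strips are taken from fixed tables whose entries are affine
forms in a parameter `t`. Every line of a table sums to zero identically, and as `t` ranges
over `0, …, M - 1` the entries sweep out blocks of `M` consecutive numbers. An odd line cannot be
invariant under one common shift of the absolute values of its entries, so each table
occupies two intervals, and their shifts are tied to each other by a free parameter `S`. With
`M = 2 k (a + b)` the numbers are used up in the order

* `20 k` by the corners, `16 M` by the strips, `20 k` by the `4 × 4` blocks,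
* `24 M` by the strips, `80 k` by the corners, and all the rest by the `4 × 4` blocks.

The gap of length `20 k` needs `5 k` of the `16 k a b` available runs of four, so it can be
filled as soon as `a, b ≥ 1`.
-/

open Set Matrix

section IsZeroSum

variable {R R' C C' K α β : Type*} [Fintype R] [Fintype R'] [Fintype C] [Fintype C'] [Fintype K]
  [AddCommMonoid α] [AddCommMonoid β]

/-- A matrix all of whose row sums and column sums vanish. The entries may lie in any additive
commutative monoid, so that the notion applies to matrices of affine forms too. -/
def IsZeroSum (A : Matrix R C α) : Prop :=
  (∀ i, ∑ j, A i j = 0) ∧ ∀ j, ∑ i, A i j = 0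

instance [DecidableEq α] (A : Matrix R C α) : Decidable (IsZeroSum A) :=
  inferInstanceAs (Decidable (_ ∧ _))

/-- The matrices `A k` placed on top of each other. -/
def stackRows (A : K → Matrix R C α) : Matrix (K × R) C α :=
  of fun p j => A p.1 p.2 j

namespace IsZeroSum

theorem transpose {A : Matrix R C α} (hA : IsZeroSum A) : IsZeroSum Aᵀ :=
  ⟨hA.2, hA.1⟩

theorem map {A : Matrix R C α} (hA : IsZeroSum A) (f : α →+ β) : IsZeroSum (A.map f) := by
  constructor <;> intro i
  · simp only [map_apply, ← map_sum, hA.1, map_zero]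
  · simp only [map_apply, ← map_sum, hA.2, map_zero]

theorem submatrix_equiv {A : Matrix R C α} (hA : IsZeroSum A) (e : R' ≃ R) (f : C' ≃ C) :
    IsZeroSum (A.submatrix e f) :=
  ⟨fun i => (f.sum_comp fun j => A (e i) j).trans (hA.1 _),
    fun j => (e.sum_comp fun i => A i (f j)).trans (hA.2 _)⟩

theorem fromBlocks {A : Matrix R C α} {B : Matrix R C' α} {D : Matrix R' C α} {E : Matrix R' C' α}
    (hA : IsZeroSum A) (hB : IsZeroSum B) (hD : IsZeroSum D) (hE : IsZeroSum E) :
    IsZeroSum (fromBlocks A B D E) := by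
  constructor
  · rintro (i | i) <;> simp [hA.1, hB.1, hD.1, hE.1]
  · rintro (j | j) <;> simp [hA.2, hB.2, hD.2, hE.2]

theorem stackRows {A : K → Matrix R C α} (hA : ∀ k, IsZeroSum (A k)) :
    IsZeroSum (stackRows A) := by
  refine ⟨fun p => (hA p.1).1 p.2, fun j => ?_⟩
  rw [Fintype.sum_prod_type]
  exact Finset.sum_eq_zero fun k _ => (hA k).2 j

end IsZeroSum

end IsZeroSum

section ZeroSumCover

variable {L L' R R' C C' K : Type*}

/-- The absolute values of the entries of a family of integer matrices. -/
def absEntries (A : L → Matrix R C ℤ) : Set ℤ :=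
  {x | ∃ l i j, |A l i j| = x}

/-- Some family of zero-sum integer `R × C` matrices indexed by `L` has all elements of `S` among
the absolute values of its entries. Distinctness is not required, nor that no other
values occur: both follow by counting once `S` has as many elements as the family has cells. -/
def ZeroSumCover (L R C : Type*) [Fintype R] [Fintype C] (S : Set ℤ) : Prop :=
  ∃ A : L → Matrix R C ℤ, (∀ l, IsZeroSum (A l)) ∧ S ⊆ absEntries A

namespace ZeroSumCover

variable [Fintype R] [Fintype R'] [Fintype C] [Fintype C'] [Fintype K] {S S₁ S₂ S₃ S₄ T : Set ℤ}

theorem mono (h : ZeroSumCover L R C S) (hTS : T ⊆ S) : ZeroSumCover L R C T := by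
  obtain ⟨A, hA, hS⟩ := h
  exact ⟨A, hA, hTS.trans hS⟩

theorem transpose (h : ZeroSumCover L R C S) : ZeroSumCover L C R S := by
  obtain ⟨A, hA, hS⟩ := h
  refine ⟨fun l => (A l)ᵀ, fun l => (hA l).transpose, fun x hx => ?_⟩
  obtain ⟨l, i, j, hx⟩ := hS hx
  exact ⟨l, j, i, hx⟩

theorem reindex (h : ZeroSumCover L R C S) (e : L' ≃ L) (f : R' ≃ R) (g : C' ≃ C) :
    ZeroSumCover L' R' C' S := by
  obtain ⟨A, hA, hS⟩ := h
  refine ⟨fun l => (A (e l)).submatrix f g, fun l => (hA _).submatrix_equiv f g, fun x hx => ?_⟩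
  obtain ⟨l, i, j, hx⟩ := hS hx
  exact ⟨e.symm l, f.symm i, g.symm j, by simpa using hx⟩

theorem of_card_eq [Fintype L] [Fintype L'] (h : ZeroSumCover L R C S)
    (hL : Fintype.card L' = Fintype.card L) (hR : Fintype.card R' = Fintype.card R)
    (hC : Fintype.card C' = Fintype.card C) : ZeroSumCover L' R' C' S :=
  h.reindex (Fintype.equivOfCardEq hL) (Fintype.equivOfCardEq hR) (Fintype.equivOfCardEq hC)

theorem stack (h : ZeroSumCover (L × K) R C S) : ZeroSumCover L (K × R) C S := by
  obtain ⟨A, hA, hS⟩ := h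
  refine ⟨fun l => stackRows fun k => A (l, k), fun l => .stackRows fun k => hA (l, k),
    fun x hx => ?_⟩
  obtain ⟨⟨l, k⟩, i, j, hx⟩ := hS hx
  exact ⟨l, (k, i), j, hx⟩

theorem exists_split (h : ZeroSumCover (L ⊕ L') R C S) :
    ∃ S₁ S₂, S ⊆ S₁ ∪ S₂ ∧ ZeroSumCover L R C S₁ ∧ ZeroSumCover L' R C S₂ := by
  obtain ⟨A, hA, hS⟩ := h
  refine ⟨absEntries fun l => A (.inl l), absEntries fun l => A (.inr l), fun x hx => ?_,
    ⟨_, fun l => hA (.inl l), subset_rfl⟩, ⟨_, fun l => hA (.inr l), subset_rfl⟩⟩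
  obtain ⟨l | l, i, j, hx⟩ := hS hx
  exacts [.inl ⟨l, i, j, hx⟩, .inr ⟨l, i, j, hx⟩]

theorem fromBlocks (h₁ : ZeroSumCover L R C S₁) (h₂ : ZeroSumCover L R C' S₂)
    (h₃ : ZeroSumCover L R' C S₃) (h₄ : ZeroSumCover L R' C' S₄) :
    ZeroSumCover L (R ⊕ R') (C ⊕ C') (S₁ ∪ S₂ ∪ S₃ ∪ S₄) := by
  obtain ⟨A₁, hA₁, hS₁⟩ := h₁
  obtain ⟨A₂, hA₂, hS₂⟩ := h₂
  obtain ⟨A₃, hA₃, hS₃⟩ := h₃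
  obtain ⟨A₄, hA₄, hS₄⟩ := h₄
  refine ⟨fun l => Matrix.fromBlocks (A₁ l) (A₂ l) (A₃ l) (A₄ l),
    fun l => (hA₁ l).fromBlocks (hA₂ l) (hA₃ l) (hA₄ l), ?_⟩
  rintro x (((hx | hx) | hx) | hx)
  · obtain ⟨l, i, j, hx⟩ := hS₁ hx
    exact ⟨l, .inl i, .inl j, hx⟩
  · obtain ⟨l, i, j, hx⟩ := hS₂ hx
    exact ⟨l, .inl i, .inr j, hx⟩
  · obtain ⟨l, i, j, hx⟩ := hS₃ hx
    exact ⟨l, .inr i, .inl j, hx⟩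
  · obtain ⟨l, i, j, hx⟩ := hS₄ hx
    exact ⟨l, .inr i, .inr j, hx⟩

theorem border {P Q A B : Type*} [Fintype P] [Fintype Q] [Fintype A] [Fintype B]
    (corners : ZeroSumCover L P P S₁) (strips : ZeroSumCover (L × A ⊕ L × B) Q P S₂)
    (squares : ZeroSumCover ((L × A) × B) Q Q S₃) :
    ZeroSumCover L (P ⊕ A × Q) (P ⊕ B × Q) (S₁ ∪ S₂ ∪ S₃) := by
  obtain ⟨X, Y, hXY, left, top⟩ := strips.exists_split
  refine (corners.fromBlocks top.stack.transpose left.stack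
    squares.transpose.stack.transpose.stack).mono ?_
  rw [union_assoc S₁ Y X, union_comm Y X]
  gcongr

end ZeroSumCover

end ZeroSumCover

theorem injective_and_image_eq_of_subset_of_card_le {α β : Type*} [Fintype α] [DecidableEq β]
    {f : α → β} {s : Finset β} (hs : s ⊆ Finset.univ.image f) (hcard : Fintype.card α ≤ s.card) :
    Function.Injective f ∧ Finset.univ.image f = s := by
  have himage : s = Finset.univ.image f :=
    Finset.eq_of_subset_of_card_le hs (Finset.card_image_le.trans hcard)
  refine ⟨?_, himage.symm⟩
  rw [← injOn_univ, ← Finset.coe_univ, ← Finset.card_image_iff]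
  exact Finset.card_image_le.antisymm (himage ▸ hcard)

theorem ZeroSumCover.exists_isIHS {m n c : ℕ}
    (h : ZeroSumCover (Fin c) (Fin m) (Fin n) (Ioc 0 (m * n * c))) :
    ∃ A : Fin c → Matrix (Fin m) (Fin n) ℤ, IsIHS m n c A := by
  obtain ⟨A, hA, hcover⟩ := h
  let entry : Fin c × Fin m × Fin n → ℤ := fun p => |A p.1 p.2.1 p.2.2|
  have hmem (x : ℤ) : x ∈ Finset.univ.image entry ↔ ∃ l i j, |A l i j| = x := by
    simp [entry]
  have hcard : Fintype.card (Fin c × Fin m × Fin n) ≤ (Finset.Ioc (0 : ℤ) (m * n * c)).card := by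
    rw [Int.card_Ioc]
    simp only [Fintype.card_prod, Fintype.card_fin]
    grind
  obtain ⟨hinj, himage⟩ := injective_and_image_eq_of_subset_of_card_le
    (fun x hx => (hmem x).2 (hcover (Finset.mem_Ioc.1 hx))) hcard
  refine ⟨A, hinj, fun x => ?_, fun l => (hA l).1, fun l => (hA l).2⟩
  rw [← hmem, himage, Finset.mem_Ioc, Int.lt_iff_add_one_le, zero_add]

section Squares

/-- Four consecutive numbers, signed so that the row and column sums do not depend on `b`. -/
def runBlock (b : ℤ) : Matrix (Fin 2) (Fin 2) ℤ :=
  !![b + 1, -(b + 2); -(b + 3), b + 4]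

theorem exists_abs_runBlock_eq {b x : ℤ} (hb : 0 ≤ b) (hx : x ∈ Ioc b (b + 4)) :
    ∃ i j, |runBlock b i j| = x := by
  obtain ⟨hbx, hxb⟩ := hx
  have abs_eq (y : ℤ) (hy : b < y) : |y| = y := abs_of_pos (by lia)
  obtain rfl | rfl | rfl | rfl : x = b + 1 ∨ x = b + 2 ∨ x = b + 3 ∨ x = b + 4 := by lia
  · exact ⟨0, 0, abs_eq (b + 1) (by lia)⟩
  · exact ⟨0, 1, (abs_neg _).trans (abs_eq _ (by lia))⟩
  · exact ⟨1, 0, (abs_neg _).trans (abs_eq _ (by lia))⟩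
  · exact ⟨1, 1, abs_eq (b + 4) (by lia)⟩

/-- Four runs of four consecutive numbers arranged as a `4 × 4` matrix. -/
def runSquare (b : Fin 4 → ℤ) : Matrix (Fin 2 ⊕ Fin 2) (Fin 2 ⊕ Fin 2) ℤ :=
  fromBlocks (runBlock (b 0)) (-runBlock (b 1)) (-runBlock (b 2)) (runBlock (b 3))

theorem isZeroSum_runSquare (b : Fin 4 → ℤ) : IsZeroSum (runSquare b) := by
  constructor
  · rintro (i | i) <;> fin_cases i <;> simp [runSquare, runBlock] <;> ring
  · rintro (j | j) <;> fin_cases j <;> simp [runSquare, runBlock] <;> ring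

theorem exists_abs_runSquare_eq {b : Fin 4 → ℤ} {r : Fin 4} {x : ℤ} (hb : 0 ≤ b r)
    (hx : x ∈ Ioc (b r) (b r + 4)) : ∃ i j, |runSquare b i j| = x := by
  obtain ⟨i, j, hij⟩ := exists_abs_runBlock_eq hb hx
  fin_cases r
  · exact ⟨.inl i, .inl j, hij⟩
  · exact ⟨.inl i, .inr j, (abs_neg _).trans hij⟩
  · exact ⟨.inr i, .inl j, (abs_neg _).trans hij⟩
  · exact ⟨.inr i, .inr j, hij⟩

theorem exists_mem_Ioc_run {u x : ℤ} {p : ℕ} (hx : x ∈ Ioc u (u + 4 * p)) :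
    ∃ i : Fin p, x ∈ Ioc (u + 4 * (i : ℕ)) (u + 4 * (i : ℕ) + 4) := by
  obtain ⟨hux, hxu⟩ := hx
  exact ⟨⟨((x - u - 1) / 4).toNat, by lia⟩, by constructor <;> simp only <;> lia⟩

theorem zeroSumCover_squares {L : Type*} [Fintype L] {p q : ℕ} (hpq : p + q = 4 * Fintype.card L)
    {u v : ℤ} (hu : 0 ≤ u) (hv : 0 ≤ v) :
    ZeroSumCover L (Fin 2 ⊕ Fin 2) (Fin 2 ⊕ Fin 2)
      (Ioc u (u + 4 * p) ∪ Ioc v (v + 4 * q)) := by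
  let start : Fin p ⊕ Fin q → ℤ :=
    Sum.elim (fun i => u + 4 * (i : ℕ)) (fun i => v + 4 * (i : ℕ))
  have hstart (s) : 0 ≤ start s := by
    rcases s with i | i <;> simp only [start, Sum.elim_inl, Sum.elim_inr] <;> positivity
  have e : Fin p ⊕ Fin q ≃ L × Fin 4 := Fintype.equivOfCardEq (by simp [hpq, mul_comm])
  refine ⟨fun l => runSquare fun r => start (e.symm (l, r)), fun l => isZeroSum_runSquare _, ?_⟩
  intro x hx
  obtain ⟨s, hs⟩ : ∃ s, x ∈ Ioc (start s) (start s + 4) := by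
    rcases hx with hx | hx
    · exact (exists_mem_Ioc_run hx).imp' Sum.inl fun _ => id
    · exact (exists_mem_Ioc_run hx).imp' Sum.inr fun _ => id
  obtain ⟨⟨l, r⟩, rfl⟩ := e.symm.surjective s
  exact ⟨l, exists_abs_runSquare_eq (r := r) (hstart _) hs⟩

end Squares

section AffineTables

/-- The quadruple `(α, β, γ, δ)` stands for the affine form `α t + β M + γ S + δ` in the
indeterminates `t`, `M` and `S`. -/
abbrev AffineForm := ℤ × ℤ × ℤ × ℤ

/-- The value of an affine form at integers `M`, `S` and `t`. -/
def AffineForm.eval (M S t : ℤ) : AffineForm →+ ℤ where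
  toFun e := e.1 * t + e.2.1 * M + e.2.2.1 * S + e.2.2.2
  map_zero' := by simp
  map_add' e e' := by simp only [Prod.fst_add, Prod.snd_add]; ring

/-- A family of matrices of affine forms. -/
abbrev AffineTable (Λ R C : Type*) := Λ → Matrix R C AffineForm

namespace AffineTable

variable {Λ R C : Type*}

/-- The integer matrices obtained from a table of affine forms by letting `t` range over
`0, …, M - 1`. -/
def specialize (T : AffineTable Λ R C) (M : ℕ) (S : ℤ) (p : Fin M × Λ) : Matrix R C ℤ :=
  (T p.2).map (AffineForm.eval M S (p.1 : ℕ))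

theorem isZeroSum_specialize [Fintype R] [Fintype C] {T : AffineTable Λ R C}
    (hT : ∀ l, IsZeroSum (T l)) (M : ℕ) (S : ℤ) (p : Fin M × Λ) : IsZeroSum (specialize T M S p) :=
  (hT p.2).map _

/-- The form `e` is an entry of the table `T` up to sign. -/
def Occurs (T : AffineTable Λ R C) (e : AffineForm) : Prop :=
  ∃ p : Λ × R × C, T p.1 p.2.1 p.2.2 = e ∨ T p.1 p.2.1 p.2.2 = -e

/-- The table `T` contains, up to sign, the progression `p M + h S + r + d t`, `0 ≤ t < M`, in
ascending or, with `M - 1 - t` in place of `t`, in descending order. -/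
def HasRun (T : AffineTable Λ R C) (h d p r : ℤ) : Prop :=
  Occurs T (d, p, h, r) ∨ Occurs T (-d, p + d, h, r - d)

/-- The block `q M + h S + 1, …, (q + 1) M + h S` is covered by the table `T`, as one of `d`
consecutive blocks filled by `d` interleaved progressions of difference `d`. The bound on `d` keeps
the search finite. -/
def CoversBlock (T : AffineTable Λ R C) (h q : ℤ) : Prop :=
  ∃ d : ℕ, d < 3 ∧ ∃ e < d, ∀ r < d, HasRun T h d (q - e) (r + 1)

section Decidable

variable [Fintype Λ] [Fintype R] [Fintype C] (T : AffineTable Λ R C)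

instance (e : AffineForm) : Decidable (Occurs T e) :=
  inferInstanceAs (Decidable (∃ _, _))

instance (h d p r : ℤ) : Decidable (HasRun T h d p r) :=
  inferInstanceAs (Decidable (_ ∨ _))

instance (h q : ℤ) : Decidable (CoversBlock T h q) :=
  inferInstanceAs (Decidable (∃ d : ℕ, d < 3 ∧ _))

end Decidable

variable {T : AffineTable Λ R C} {M : ℕ} {S h d p p' q r t x : ℤ}

theorem Occurs.abs_eval_mem {e : AffineForm} (he : Occurs T e) (ht : 0 ≤ t) (htM : t < M) :
    |e.eval M S t| ∈ absEntries (specialize T M S) := by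
  obtain ⟨⟨l, i, j⟩, he⟩ := he
  lift t to ℕ using ht
  refine ⟨(⟨t, by lia⟩, l), i, j, ?_⟩
  rcases he with he | he <;> simp [specialize, he]

theorem HasRun.abs_mem (hrun : HasRun T h d p r) (ht : 0 ≤ t) (htM : t < M) :
    |p * M + h * S + r + d * t| ∈ absEntries (specialize T M S) := by
  rcases hrun with hup | hdown
  · convert hup.abs_eval_mem ht htM using 2
    simp only [AffineForm.eval, AddMonoidHom.coe_mk, ZeroHom.coe_mk]
    ring
  · convert hdown.abs_eval_mem (M := M) (t := M - 1 - t) (by lia) (by lia) using 2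
    simp only [AffineForm.eval, AddMonoidHom.coe_mk, ZeroHom.coe_mk]
    ring

theorem CoversBlock.abs_mem (hq : CoversBlock T h q)
    (hx : x ∈ Ioc (q * M + h * S) ((q + 1) * M + h * S)) :
    |x| ∈ absEntries (specialize T M S) := by
  obtain ⟨d, -, e, hed, hrun⟩ := hq
  have hd : 0 < d := by lia
  obtain ⟨y, rfl⟩ : ∃ y : ℕ, (q - e) * M + h * S + 1 + y = x := Int.le.dest (by nlinarith [hx.1])
  have hyM : y / d < M := by
    rw [Nat.div_lt_iff_lt_mul hd]
    zify
    nlinarith [hx.2]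
  -- The remainder of `y` modulo `d` selects the progression, its quotient the place in it.
  convert (hrun (y % d) (Nat.mod_lt y hd)).abs_mem (S := S) (t := (y / d : ℕ)) (by positivity)
    (by exact_mod_cast hyM) using 2
  have hdiv : ((y % d : ℕ) : ℤ) + d * (y / d : ℕ) = y := by exact_mod_cast Nat.mod_add_div y d
  linarith

theorem Ioc_subset_absEntries_specialize (hblocks : ∀ q ∈ Finset.Ico p p', CoversBlock T h q)
    (hpos : 0 ≤ p * M + h * S) :
    Ioc (p * M + h * S) (p' * M + h * S) ⊆ absEntries (specialize T M S) := by
  have hmono : Monotone fun q : ℤ => q * M + h * S := fun q q' hqq' => by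
    dsimp only
    gcongr
  intro x hx
  rw [← abs_of_nonneg (hpos.trans hx.1.le)]
  rw [← hmono.biUnion_Ico_Ioc_map_succ] at hx
  obtain ⟨q, hq, hx⟩ := mem_iUnion₂.1 hx
  exact (hblocks q (Finset.mem_Ico.2 hq)).abs_mem hx

end AffineTable

/-- Affine forms for the `4 × 5` strips, two matrices for each `t`. They cover the blocks
`0, …, 15` shifted by `S` and the blocks `16, …, 39` shifted by `2 S`. -/
def stripTable : AffineTable (Fin 2) (Fin 4) (Fin 5) :=
  ![!![(-1, 5, 1, 0), (1, 38, 2, 1), (-1, 16, 1, 0), (-1, -23, -2, -1), (2, -36, -2, 0);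
     (-1, 8, 1, 0), (2, 31, 2, 1), (1, 2, 1, 1), (-1, -22, -2, -1), (-1, -19, -2, -1);
     (1, -11, -1, 0), (-1, -33, -2, -1), (1, -10, -1, 0), (1, 16, 2, 1), (-2, 38, 2, 0);
     (1, -2, -1, 0), (-2, -36, -2, -1), (-1, -8, -1, -1), (1, 29, 2, 1), (1, 17, 2, 1)],
    !![(1, 13, 1, 1), (1, 39, 2, 1), (1, 0, 1, 1), (-1, -21, -2, -1), (-2, -31, -2, -2);
     (-1, 6, 1, 0), (2, 25, 2, 1), (1, 14, 1, 1), (-1, -27, -2, -1), (-1, -18, -2, -1);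
     (-1, -12, -1, -1), (-1, -30, -2, -1), (-1, -11, -1, -1), (1, 28, 2, 1), (2, 25, 2, 2);
     (1, -7, -1, 0), (-2, -34, -2, -1), (-1, -3, -1, -1), (1, 20, 2, 1), (1, 24, 2, 1)]]

/-- Affine forms for the `5 × 5` corners, four matrices for each `t`. They cover the blocks
`0, …, 19` without a shift and the blocks `20, …, 99` shifted by `S`. -/
def cornerTable : AffineTable (Fin 4) (Fin 5) (Fin 5) :=
  ![!![(1, -7, 0, 0), (1, 22, 1, 1), (-2, -51, -1, -1), (1, -61, -1, 0), (-1, 97, 1, 0);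
     (-1, 47, 1, 0), (1, -15, 0, 0), (1, 48, 1, 1), (1, -24, -1, 0), (-2, -56, -1, -1);
     (-1, -29, -1, -1), (-2, -26, -1, -1), (1, -19, 0, 0), (1, 34, 1, 1), (1, 40, 1, 1);
     (2, -73, -1, 1), (-1, 65, 1, 0), (-1, 90, 1, 0), (-1, -2, 0, -1), (1, -80, -1, 0);
     (-1, 62, 1, 0), (1, -46, -1, 0), (1, -68, -1, 0), (-2, 53, 1, 0), (1, -1, 0, 0)],
    !![(1, -17, 0, 0), (-2, -76, -1, -1), (1, 58, 1, 1), (1, 63, 1, 1), (-1, -28, -1, -1);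
     (-2, 73, 1, 0), (1, -10, 0, 0), (1, -37, -1, 0), (-1, -50, -1, -1), (1, 24, 1, 1);
     (-1, -54, -1, -1), (1, 25, 1, 1), (1, -14, 0, 0), (1, -33, -1, 0), (-2, 76, 1, 0);
     (1, -70, -1, 0), (-1, 83, 1, 0), (-2, 58, 1, 0), (1, -8, 0, 0), (1, -63, -1, 0);
     (1, 68, 1, 1), (1, -22, -1, 0), (-1, -65, -1, -1), (-2, 28, 1, 0), (1, -9, 0, 0)],
    !![(-1, 18, 0, 0), (-1, 82, 1, 0), (1, -93, -1, 0), (-1, 79, 1, 0), (2, -86, -1, 0);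
     (1, 95, 1, 1), (-1, 2, 0, 0), (-1, -47, -1, -1), (2, -89, -1, 0), (-1, 39, 1, 0);
     (-1, 40, 1, 0), (2, -95, -1, 0), (-1, 6, 0, 0), (-1, -31, -1, -1), (1, 80, 1, 1);
     (2, -100, -1, 0), (1, 66, 1, 1), (-1, 60, 1, 0), (-1, 11, 0, 0), (-1, -37, -1, -1);
     (-1, -53, -1, -1), (-1, -55, -1, -1), (2, 74, 1, 1), (1, 30, 1, 1), (-1, 4, 0, 0)],
    !![(-1, 20, 0, 0), (2, 98, 1, 1), (1, -42, -1, 0), (-1, -97, -1, -1), (-1, 21, 1, 0);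
     (-1, -49, -1, -1), (-1, 5, 0, 0), (1, -92, -1, 0), (-1, 43, 1, 0), (2, 93, 1, 1);
     (1, 33, 1, 1), (-1, -90, -1, -1), (-1, 13, 0, 0), (2, 87, 1, 1), (-1, -43, -1, -1);
     (-1, 74, 1, 0), (1, -84, -1, 0), (-2, 86, 1, -1), (1, 11, 0, 1), (1, -87, -1, 0);
     (2, -78, -1, 0), (-1, 71, 1, 0), (1, 35, 1, 1), (-1, -44, -1, -1), (-1, 16, 0, 0)]]

theorem zeroSumCover_strips (M : ℕ) {S : ℤ} (hS : 0 ≤ S) :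
    ZeroSumCover (Fin M × Fin 2) (Fin 4) (Fin 5)
      (Ioc S (16 * M + S) ∪ Ioc (16 * M + 2 * S) (40 * M + 2 * S)) := by
  have low := AffineTable.Ioc_subset_absEntries_specialize (T := stripTable) (M := M) (S := S)
    (h := 1) (p := 0) (p' := 16) (by decide +kernel) (by positivity)
  have high := AffineTable.Ioc_subset_absEntries_specialize (T := stripTable) (M := M) (S := S)
    (h := 2) (p := 16) (p' := 40) (by decide +kernel) (by positivity)
  rw [zero_mul, zero_add, one_mul] at low
  exact ⟨_, AffineTable.isZeroSum_specialize (by decide +kernel) M S, union_subset low high⟩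

theorem zeroSumCover_corners (M : ℕ) {S : ℤ} (hS : 0 ≤ S) :
    ZeroSumCover (Fin M × Fin 4) (Fin 5) (Fin 5)
      (Ioc 0 (20 * M) ∪ Ioc (20 * M + S) (100 * M + S)) := by
  have low := AffineTable.Ioc_subset_absEntries_specialize (T := cornerTable) (M := M) (S := S)
    (h := 0) (p := 0) (p' := 20) (by decide +kernel) (by positivity)
  have high := AffineTable.Ioc_subset_absEntries_specialize (T := cornerTable) (M := M) (S := S)
    (h := 1) (p := 20) (p' := 100) (by decide +kernel) (by positivity)
  simp only [zero_mul, one_mul, add_zero] at low high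
  exact ⟨_, AffineTable.isZeroSum_specialize (by decide +kernel) M S, union_subset low high⟩

end AffineTables

theorem zeroSumCover_Ioc (k : ℕ) {a b : ℕ} (ha : 0 < a) (hb : 0 < b) :
    ZeroSumCover (Fin k × Fin 4) (Fin 5 ⊕ Fin a × Fin 4) (Fin 5 ⊕ Fin b × Fin 4)
      (Ioc 0 ((4 * a + 5) * (4 * b + 5) * (4 * k))) := by
  obtain ⟨M, hM⟩ : ∃ M, M = 2 * k * (a + b) := ⟨_, rfl⟩
  obtain ⟨q, hq⟩ : ∃ q, 5 * k + q = 16 * k * (a * b) := by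
    refine Nat.le.dest ?_
    nlinarith [Nat.mul_pos ha hb]
  have corners := zeroSumCover_corners k (S := 20 * k + 40 * M) (by positivity)
  have strips :
      ZeroSumCover ((Fin k × Fin 4) × Fin a ⊕ (Fin k × Fin 4) × Fin b) (Fin 4) (Fin 5) _ :=
    (zeroSumCover_strips M (S := 20 * k) (by positivity)).of_card_eq (by simp [hM]; ring) rfl rfl
  have squares : ZeroSumCover (((Fin k × Fin 4) × Fin a) × Fin b) (Fin 4) (Fin 4) _ :=
    (zeroSumCover_squares (p := 5 * k) (q := q) (u := 20 * k + 16 * M) (v := 120 * k + 40 * M)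
      (by simp [hq]; ring) (by positivity) (by positivity)).of_card_eq rfl rfl rfl
  have htotal : (4 * a + 5) * (4 * b + 5) * (4 * k) = 120 * k + 40 * M + 4 * q := by
    linarith [congrArg (40 * ·) hM]
  refine (corners.border strips squares).mono fun x hx => ?_
  simp only [mem_union, mem_Ioc] at hx ⊢
  zify at htotal
  lia

theorem exists_IHS_c0_m1_n1
    (m n c : ℕ) (hm : 0 < m) (hn : 0 < n) (hc : 0 < c)
    (hcmod : c % 4 = 0) (hmmod : m % 4 = 1) (hnmod : n % 4 = 1)
    (hm9 : 9 ≤ m) (hn9 : 9 ≤ n) :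
    ∃ A : Fin c → Matrix (Fin m) (Fin n) ℤ, IsIHS m n c A := by
  obtain ⟨k, rfl⟩ : ∃ k, c = 4 * k := ⟨c / 4, by lia⟩
  obtain ⟨a, rfl⟩ : ∃ a, m = 4 * a + 5 := ⟨(m - 5) / 4, by lia⟩
  obtain ⟨b, rfl⟩ : ∃ b, n = 4 * b + 5 := ⟨(n - 5) / 4, by lia⟩
  have hcover := zeroSumCover_Ioc k (a := a) (b := b) (by lia) (by lia)
  refine ZeroSumCover.exists_isIHS ?_
  push_cast
  exact hcover.of_card_eq (by simp; ring) (by simp; ring) (by simp; ring)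
end
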